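/- arXiv:2511.16173 — 6 statements merged into one kernel-verified Lean document; each statement's English description precedes it below -/
import Mathlib

section
/- Let N ≥ 2 be an integer and set k = (N−1)/2. For every real γ > 0, the function ℂ^N → [0,∞], (z₁,…,z_N) ↦ ∏_{1≤i<j≤N} |z_i − z_j|^{−2γ/k}, is locally integrable on ℂ^N if and only if γ < 1 − 1/N. (Equivalently, the microscopic stability threshold γ^(N)(ℙ¹) = lct((ℙ¹)^N; 𝒟^(N)) equals 1 − 1/N, so ℙ¹ is Gibbs semistable.) -/
open MeasureTheory Topology
open scoped ENNReal

namespace GibbsP1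

lemma lintegral_insertNth {n : ℕ} (i : Fin (n + 1)) (f : (Fin (n + 1) → ℂ) → ℝ≥0∞)
    (hf : Measurable f) :
    ∫⁻ z, f z = ∫⁻ x : ℂ, ∫⁻ w : Fin n → ℂ, f (i.insertNth x w) := by
  have h := (volume_preserving_piFinSuccAbove (fun _ : Fin (n + 1) => ℂ) i).symm
  rw [← h.lintegral_comp hf]
  exact lintegral_prod _ (hf.comp (MeasurableEquiv.measurable _)).aemeasurable

lemma lintegral_prod_pow (g : ℂ → ℝ≥0∞) (hg : Measurable g) (n : ℕ) :
    ∫⁻ w : Fin n → ℂ, ∏ j, g (w j) = (∫⁻ u, g u) ^ n := by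
  induction n with
  | zero => simp [volume_pi, Measure.pi_of_empty]
  | succ n ih =>
    rw [lintegral_insertNth 0 _ (by fun_prop)]
    simp only [Fin.prod_univ_succ, Fin.insertNth_zero', Fin.cons_zero, Fin.cons_succ]
    have : ∀ x : ℂ, ∫⁻ w : Fin n → ℂ, g x * ∏ j, g (w j) = g x * (∫⁻ u, g u) ^ n := by
      intro x
      rw [lintegral_const_mul _ (by fun_prop), ih]
    simp only [this]
    rw [lintegral_mul_const _ hg, pow_succ']

lemma prod_offDiag {n : ℕ} (h : Fin (n + 1) → Fin (n + 1) → ℝ≥0∞) (hs : ∀ i j, h i j = h j i) :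
    ∏ i, ∏ j : Fin n, h i (i.succAbove j) =
      (∏ a ∈ Finset.univ.filter (fun a : Fin (n + 1) × Fin (n + 1) => a.1 < a.2), h a.1 a.2) ^ 2 := by
  classical
  set u := Finset.univ.filter (fun a : Fin (n + 1) × Fin (n + 1) => a.1 < a.2) with hu
  set v := Finset.univ.filter (fun a : Fin (n + 1) × Fin (n + 1) => a.2 < a.1) with hv
  have h1 : ∏ a ∈ v, h a.1 a.2 = ∏ a ∈ u, h a.1 a.2 := by
    refine Finset.prod_bij' (fun a _ => a.swap) (fun a _ => a.swap) ?_ ?_ ?_ ?_ ?_ <;>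
      simp [hu, hv]
    intro a b _
    exact hs a b
  have disj : Disjoint u v := by
    rw [Finset.disjoint_left]; intro a; simp only [hu, hv, Finset.mem_filter]; intro h1 h2
    exact absurd h1.2 (not_lt.mpr h2.2.le)
  have h2 : u ∪ v = Finset.univ.filter (fun a : Fin (n + 1) × Fin (n + 1) => a.2 ≠ a.1) := by
    ext a; simp only [hu, hv, Finset.mem_union, Finset.mem_filter, Finset.mem_univ, true_and]
    rw [ne_comm]; exact lt_or_lt_iff_ne
  have h3 : ∏ a ∈ u ∪ v, h a.1 a.2 = ∏ i, ∏ j : Fin n, h i (i.succAbove j) := by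
    rw [h2, Finset.prod_filter, ← Finset.univ_product_univ, Finset.prod_product]
    refine Finset.prod_congr rfl fun i _ => ?_
    rw [Fin.prod_univ_succAbove _ i]
    simp
  rw [← h3, Finset.prod_union disj, h1, sq]

lemma card_lt (n : ℕ) :
    2 * ((Finset.univ.filter (fun a : Fin (n + 1) × Fin (n + 1) => a.1 < a.2)).card : ℝ)
      = (n + 1) * n := by
  have := Finset.card_product_filter_lt (s := (Finset.univ : Finset (Fin (n + 1))))
  rw [Finset.univ_product_univ] at this
  rw [this, Finset.card_univ, Fintype.card_fin, Nat.cast_choose_two]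
  push_cast; ring

lemma le_sum_star {n : ℕ} (h : Fin (n + 1) → Fin (n + 1) → ℝ≥0∞) (hs : ∀ i j, h i j = h j i)
    (t : ℝ) :
    ∏ a ∈ Finset.univ.filter (fun a : Fin (n + 1) × Fin (n + 1) => a.1 < a.2), h a.1 a.2 ^ (-t)
      ≤ ∑ i, ∏ j : Fin n, h i (i.succAbove j) ^ (-(t * (n + 1) / 2)) := by
  set S := ∑ i, ∏ j : Fin n, h i (i.succAbove j) ^ (-(t * (n + 1) / 2))
  have h1 := prod_offDiag (fun i j => h i j ^ (-(t * (n + 1) / 2))) (fun i j => by simp only [hs i j])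
  have h2 : (∏ a ∈ Finset.univ.filter (fun a : Fin (n + 1) × Fin (n + 1) => a.1 < a.2),
      h a.1 a.2 ^ (-t)) ^ (n + 1) ≤ S ^ (n + 1) := by
    calc _ = ∏ i, ∏ j : Fin n, h i (i.succAbove j) ^ (-(t * (n + 1) / 2)) := by
          rw [h1, ← Finset.prod_pow, ← Finset.prod_pow]
          refine Finset.prod_congr rfl fun a _ => ?_
          rw [← ENNReal.rpow_natCast, ← ENNReal.rpow_natCast, ← ENNReal.rpow_mul,
            ← ENNReal.rpow_mul]
          congr 1
          push_cast; ring
      _ ≤ ∏ i : Fin (n + 1), S := by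
          refine Finset.prod_le_prod' fun i _ => ?_
          exact Finset.single_le_sum (f := fun i : Fin (n + 1) =>
            ∏ j : Fin n, h i (i.succAbove j) ^ (-(t * (n + 1) / 2))) (fun _ _ => zero_le)
            (Finset.mem_univ i)
      _ = S ^ (n + 1) := by simp
  exact (ENNReal.pow_le_pow_left_iff (Nat.succ_ne_zero n)).1 h2

lemma lintegral_ball_ne_top (s R : ℝ) (hs : s < 2) :
    ∫⁻ u : ℂ, (Metric.ball (0 : ℂ) R).indicator (fun u => ENNReal.ofReal ‖u‖ ^ (-s)) u ≠ ∞ := by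
  have h : IntegrableOn (fun u : ℂ => ‖u‖ ^ (-s)) (Metric.ball 0 R) := by
    refine integrableOn_ball_of_norm_le_rpow (C := 1) (α := s) ?_ ?_ ?_ ?_
    · simp [Complex.finrank_real_complex]
    · simpa [Complex.finrank_real_complex] using hs
    · refine Filter.Eventually.of_forall fun x => ?_
      rw [one_mul, Real.norm_of_nonneg (by positivity)]
    · exact (by fun_prop : Measurable fun u : ℂ => ‖u‖ ^ (-s)).aestronglyMeasurable
  rw [lintegral_indicator measurableSet_ball]
  have h2 := h.2
  rw [hasFiniteIntegral_iff_enorm] at h2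
  refine ne_top_of_le_ne_top h2.ne (le_of_eq (lintegral_congr_ae (ae_restrict_of_ae ?_)))
  have h0 : ∀ᵐ u : ℂ, u ≠ 0 := by simp [ae_iff]
  filter_upwards [h0] with u hu
  rw [Real.enorm_of_nonneg (by positivity), ENNReal.ofReal_rpow_of_pos (norm_pos_iff.2 hu)]

lemma star_ne_top {n : ℕ} (i : Fin (n + 1)) (s R : ℝ) (hs : s < 2) :
    ∫⁻ z in Metric.ball (0 : Fin (n + 1) → ℂ) R,
      ∏ j : Fin n, ENNReal.ofReal ‖z i - z (i.succAbove j)‖ ^ (-s) ≠ ∞ := by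
  set g : ℂ → ℝ≥0∞ := (Metric.ball (0 : ℂ) (2 * R)).indicator (fun u => ENNReal.ofReal ‖u‖ ^ (-s))
    with hg
  have gm : Measurable g := by
    refine Measurable.indicator (by fun_prop) measurableSet_ball
  set φ : ℂ → ℝ≥0∞ := (Metric.ball (0 : ℂ) R).indicator (fun _ => 1) with hφ
  have φm : Measurable φ := measurable_const.indicator measurableSet_ball
  rw [← lintegral_indicator measurableSet_ball]
  have hle : ∫⁻ z, (Metric.ball (0 : Fin (n + 1) → ℂ) R).indicator (fun z =>
      ∏ j : Fin n, ENNReal.ofReal ‖z i - z (i.succAbove j)‖ ^ (-s)) z ≤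
      ∫⁻ z : Fin (n + 1) → ℂ, φ (z i) * ∏ j : Fin n, g (z i - z (i.succAbove j)) := by
    refine lintegral_mono fun z => ?_
    by_cases hz : z ∈ Metric.ball (0 : Fin (n + 1) → ℂ) R
    swap
    · rw [Set.indicator_of_notMem hz]; exact zero_le
    rw [Set.indicator_of_mem hz]
    rw [mem_ball_zero_iff] at hz
    have hz' : ∀ k, ‖z k‖ < R := fun k => (norm_le_pi_norm z k).trans_lt hz
    have e1 : φ (z i) = 1 := by
      rw [hφ, Set.indicator_of_mem]; rw [mem_ball_zero_iff]; exact hz' i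
    rw [e1, one_mul]
    refine Finset.prod_le_prod' fun j _ => ?_
    rw [hg, Set.indicator_of_mem]
    rw [mem_ball_zero_iff]
    have := norm_sub_le (z i) (z (i.succAbove j))
    linarith [hz' i, hz' (i.succAbove j)]
  refine ne_top_of_le_ne_top ?_ hle
  rw [lintegral_insertNth i _ (by fun_prop)]
  simp only [Fin.insertNth_apply_same, Fin.insertNth_apply_succAbove]
  have inner : ∀ x : ℂ, ∫⁻ w : Fin n → ℂ, φ x * ∏ j, g (x - w j) = φ x * (∫⁻ u, g u) ^ n := by
    intro x
    rw [lintegral_const_mul _ (by fun_prop), ← lintegral_prod_pow g gm n]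
    congr 1
    exact lintegral_sub_left_eq_self (fun w : Fin n → ℂ => ∏ j, g (w j)) (fun _ => x)
  simp only [inner]
  rw [lintegral_mul_const _ φm]
  refine ENNReal.mul_ne_top ?_ (ENNReal.pow_ne_top (lintegral_ball_ne_top s (2 * R) hs))
  rw [hφ, lintegral_indicator measurableSet_ball]
  simpa using (measure_ball_lt_top (μ := (volume : Measure ℂ)) (x := 0) (r := R)).ne

lemma lintegral_eq_top {n : ℕ} (hn : 1 ≤ n) (r : ℝ) (hr : 0 < r) :
    ∫⁻ w : Fin n → ℂ, (Metric.ball (0 : Fin n → ℂ) r).indicator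
      (fun w => ENNReal.ofReal (2 * ‖w‖) ^ (-(2 * n : ℝ))) w = ∞ := by
  by_contra hne
  have : Nonempty (Fin n) := ⟨⟨0, hn⟩⟩
  have hdim : Module.finrank ℝ (Fin n → ℂ) = 2 * n := by
    simp [Module.finrank_pi_fintype, Complex.finrank_real_complex, mul_comm]
  rw [lintegral_indicator measurableSet_ball] at hne
  have h : IntegrableOn (fun w : Fin n → ℂ => (fun y : ℝ => (2 * y) ^ (-(2 * n : ℝ))) ‖w‖)
      (Metric.ball 0 r) := by
    refine ⟨(by fun_prop : Measurable fun w : Fin n → ℂ =>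
      (2 * ‖w‖) ^ (-(2 * n : ℝ))).aestronglyMeasurable, ?_⟩
    rw [hasFiniteIntegral_iff_enorm]
    refine lt_of_le_of_lt (lintegral_mono fun w => ?_) (lt_top_iff_ne_top.2 hne)
    rw [Real.enorm_of_nonneg (by positivity)]
    rcases eq_or_ne w 0 with rfl | hw
    · have : (-(2 * n : ℝ)) < 0 := by
        have : (1 : ℝ) ≤ n := by exact_mod_cast hn
        linarith
      simp only [norm_zero, mul_zero, ENNReal.ofReal_zero]
      rw [ENNReal.zero_rpow_of_neg this]
      exact le_top
    · have : 0 < 2 * ‖w‖ := by have := norm_pos_iff.2 hw; positivity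
      rw [ENNReal.ofReal_rpow_of_pos this]
  replace h := (integrableOn_fun_norm_addHaar (volume : Measure (Fin n → ℂ))
    (f := fun y : ℝ => (2 * y) ^ (-(2 * n : ℝ)))).1 h
  rw [hdim] at h
  have h2 : IntegrableOn (fun y : ℝ => y ^ (-1 : ℝ)) (Set.Ioo 0 r) := by
    refine IntegrableOn.congr_fun (h.const_mul ((2 : ℝ) ^ (2 * n : ℝ))) ?_ measurableSet_Ioo
    intro y hy
    have hy0 : 0 < y := hy.1
    simp only [smul_eq_mul]
    rw [Real.mul_rpow (by norm_num) hy0.le, ← Real.rpow_natCast y,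
      show ∀ a b c d : ℝ, a * (b * (c * d)) = (a * c) * (b * d) by intros; ring,
      ← Real.rpow_add (by norm_num), ← Real.rpow_add hy0]
    rw [Nat.cast_sub (by omega)]
    push_cast
    rw [add_neg_cancel, Real.rpow_zero, one_mul]
    congr 1
    ring
  rw [intervalIntegral.integrableOn_Ioo_rpow_iff hr] at h2
  exact lt_irrefl _ h2

lemma lower {n : ℕ} (hn : 1 ≤ n) (t : ℝ) (ht0 : 0 < t) (ht : 4 ≤ t * (n + 1))
    (s : Set (Fin (n + 1) → ℂ)) (hs : s ∈ 𝓝 0) :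
    ∫⁻ z in s, ∏ a ∈ Finset.univ.filter (fun a : Fin (n + 1) × Fin (n + 1) => a.1 < a.2),
            (ENNReal.ofReal ‖z a.1 - z a.2‖) ^ (-t) = ∞ := by
  obtain ⟨ε, hε, hεs⟩ := Metric.mem_nhds_iff.1 hs
  set r := min (ε / 2) (1 / 2) with hr
  have hr0 : 0 < r := by positivity
  have hr1 : 2 * r ≤ ε := by linarith [min_le_left (ε / 2) (1 / 2 : ℝ)]
  have hr2 : 2 * r ≤ 1 := by linarith [min_le_right (ε / 2) (1 / 2 : ℝ)]
  set H : (Fin n → ℂ) → ℝ≥0∞ := (Metric.ball (0 : Fin n → ℂ) r).indicator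
      (fun w => ENNReal.ofReal (2 * ‖w‖) ^ (-(2 * n : ℝ))) with hH
  have Hm : Measurable H := Measurable.indicator (by fun_prop) measurableSet_ball
  set φ : ℂ → ℝ≥0∞ := (Metric.ball (0 : ℂ) r).indicator (fun _ => 1) with hφ
  have φm : Measurable φ := measurable_const.indicator measurableSet_ball
  have hsub : Metric.ball (0 : Fin (n + 1) → ℂ) (2 * r) ⊆ s :=
    (Metric.ball_subset_ball hr1).trans hεs
  rw [eq_top_iff]
  refine le_trans ?_ (lintegral_mono_set hsub)
  rw [← lintegral_indicator measurableSet_ball]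
  have key : ∫⁻ z : Fin (n + 1) → ℂ, φ (z 0) * H (fun j => z j.succ - z 0) = ∞ := by
    rw [lintegral_insertNth 0 _ (by fun_prop)]
    simp only [Fin.insertNth_zero', Fin.cons_zero, Fin.cons_succ]
    have inner : ∀ x : ℂ, ∫⁻ w : Fin n → ℂ, φ x * H (fun j => w j - x) = φ x * ∞ := by
      intro x
      rw [lintegral_const_mul _ (by fun_prop)]
      congr 1
      rw [← lintegral_eq_top hn r hr0]
      exact lintegral_sub_right_eq_self H (fun _ => x)
    simp only [inner]
    rw [lintegral_mul_const _ φm, hφ, lintegral_indicator measurableSet_ball]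
    refine ENNReal.mul_top ?_
    simpa using (Metric.measure_ball_pos (volume : Measure ℂ) 0 hr0).ne'
  rw [← key]
  refine lintegral_mono fun z => ?_
  by_cases h0 : z 0 ∈ Metric.ball (0 : ℂ) r
  swap
  · simp [hφ, Set.indicator_of_notMem h0]
  by_cases h1 : (fun j : Fin n => z j.succ - z 0) ∈ Metric.ball (0 : Fin n → ℂ) r
  swap
  · simp only [hH, Set.indicator_of_notMem h1, mul_zero]; exact zero_le
  rw [hφ, hH, Set.indicator_of_mem h0, Set.indicator_of_mem h1, one_mul]
  set w : Fin n → ℂ := fun j : Fin n => z j.succ - z 0 with hw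
  rw [mem_ball_zero_iff] at h0 h1
  have hz0 : ∀ k, ‖z k - z 0‖ ≤ ‖w‖ := by
    intro k
    refine Fin.cases ?_ (fun j => ?_) k
    · simp
    · exact norm_le_pi_norm w j
  have hz : z ∈ Metric.ball (0 : Fin (n + 1) → ℂ) (2 * r) := by
    rw [mem_ball_zero_iff, pi_norm_lt_iff (by positivity)]
    intro k
    have := norm_add_le (z k - z 0) (z 0)
    rw [sub_add_cancel] at this
    linarith [hz0 k]
  rw [Set.indicator_of_mem hz]
  set M := (Finset.univ.filter (fun a : Fin (n + 1) × Fin (n + 1) => a.1 < a.2)).card with hM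
  have hcard : 2 * (M : ℝ) = (n + 1) * n := card_lt n
  have hn' : (1 : ℝ) ≤ n := by exact_mod_cast hn
  calc ENNReal.ofReal (2 * ‖w‖) ^ (-(2 * n : ℝ))
      ≤ ENNReal.ofReal (2 * ‖w‖) ^ (-t * (M : ℝ)) := by
        refine ENNReal.rpow_le_rpow_of_exponent_ge ?_ ?_
        · rw [ENNReal.ofReal_le_one]; linarith
        · nlinarith
    _ = ∏ a ∈ Finset.univ.filter (fun a : Fin (n + 1) × Fin (n + 1) => a.1 < a.2),
          ENNReal.ofReal (2 * ‖w‖) ^ (-t) := by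
        rw [Finset.prod_const, ENNReal.rpow_mul, ENNReal.rpow_natCast]
    _ ≤ _ := by
        refine Finset.prod_le_prod' fun a _ => ?_
        rw [ENNReal.rpow_neg, ENNReal.rpow_neg, ENNReal.inv_le_inv]
        refine ENNReal.rpow_le_rpow (ENNReal.ofReal_le_ofReal ?_) ht0.le
        have := norm_sub_le (z a.1 - z 0) (z a.2 - z 0)
        rw [sub_sub_sub_cancel_right] at this
        linarith [hz0 a.1, hz0 a.2]

lemma upper {n : ℕ} (t : ℝ) (ht : t * (n + 1) < 4) (R : ℝ) :
    ∫⁻ z in Metric.ball (0 : Fin (n + 1) → ℂ) R,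
      ∏ a ∈ Finset.univ.filter (fun a : Fin (n + 1) × Fin (n + 1) => a.1 < a.2),
            (ENNReal.ofReal ‖z a.1 - z a.2‖) ^ (-t) ≠ ∞ := by
  have h : ∀ z : Fin (n + 1) → ℂ, _ := fun z =>
    le_sum_star (fun i j => ENNReal.ofReal ‖z i - z j‖) (fun i j => by simp only [norm_sub_rev]) t
  refine ne_top_of_le_ne_top ?_ (lintegral_mono h)
  rw [lintegral_finsetSum _ (fun i _ => by fun_prop)]
  refine ENNReal.sum_ne_top.2 fun i _ => ?_
  exact star_ne_top i _ R (by linarith)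

end GibbsP1

/-- **Gibbs semistability of ℙ¹.** For `N ≥ 2`, `k = (N-1)/2` and `γ > 0`, the function
`z ↦ ∏_{i<j} |z_i - z_j| ^ (-2γ/k)` (with value `∞` on diagonals) is locally integrable on
`ℂ^N` if and only if `γ < 1 - 1/N`; i.e. the microscopic stability threshold
`γ^(N)(ℙ¹) = lct((ℙ¹)^N; 𝒟^(N))` equals `1 - 1/N`. -/
theorem gibbs_semistable_threshold_P1 (N : ℕ) (hN : 2 ≤ N) (γ : ℝ) (hγ : 0 < γ) :
    (∀ p : Fin N → ℂ, ∃ s ∈ 𝓝 p,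
        (∫⁻ z in s,
          ∏ a ∈ Finset.univ.filter (fun a : Fin N × Fin N => a.1 < a.2),
            (ENNReal.ofReal ‖z a.1 - z a.2‖) ^ (-(2 * γ / (((N : ℝ) - 1) / 2))) ∂volume) ≠ ∞) ↔
      γ < 1 - 1 / (N : ℝ) := by
  obtain ⟨n, rfl⟩ : ∃ n, N = n + 1 := ⟨N - 1, by omega⟩
  have hn : 1 ≤ n := by omega
  have hn' : (0 : ℝ) < n := by exact_mod_cast hn
  have e : (((n + 1 : ℕ) : ℝ) - 1) / 2 = n / 2 := by push_cast; ring
  rw [e]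
  have e2 : 2 * γ / ((n : ℝ) / 2) = 4 * γ / n := by field_simp; ring
  rw [e2]
  have hiff : γ < 1 - 1 / ((n + 1 : ℕ) : ℝ) ↔ (4 * γ / n) * (n + 1) < 4 := by
    push_cast
    have h1 : 1 - 1 / ((n : ℝ) + 1) = n / (n + 1) := by field_simp; ring
    rw [h1, lt_div_iff₀ (by positivity), div_mul_eq_mul_div, div_lt_iff₀ hn']
    constructor <;> intro h <;> nlinarith
  rw [hiff]
  constructor
  · intro h
    by_contra hcon
    obtain ⟨s, hs, hfin⟩ := h 0
    exact hfin (GibbsP1.lower hn _ (by positivity) (not_lt.1 hcon) s hs)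
  · intro h p
    refine ⟨Metric.ball 0 (‖p‖ + 1), Metric.isOpen_ball.mem_nhds ?_, GibbsP1.upper _ h _⟩
    rw [mem_ball_zero_iff]; linarith
end

section
/- Let N ≥ 2, let p ∈ ℂ^N, and let m := max_{w ∈ ℂ} #{i : p_i = w} be the maximal multiplicity among the coordinates of p; assume m ≥ 2. For every real c > 0, the function z ↦ ∏_{1≤i<j≤N} |z_i − z_j|^{−2c} is Lebesgue integrable on some neighborhood of p in ℂ^N if and only if c < 2/m. -/
open MeasureTheory Topology
open scoped ENNReal Classical

lemma vd_lintegral_prod (n : ℕ) (h : Fin n → ℂ → ℝ≥0∞) (hh : ∀ i, Measurable (h i)) :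
    ∫⁻ z : Fin n → ℂ, ∏ i, h i (z i) = ∏ i, ∫⁻ w, h i w := by
  induction n with
  | zero => simp [volume_pi]
  | succ n ih =>
    rw [← (volume_preserving_piFinSuccAbove (fun _ : Fin (n+1) => ℂ) 0).symm.lintegral_comp_emb
      (MeasurableEquiv.measurableEmbedding _)]
    simp only [Fin.prod_univ_succ]
    rw [← ih (fun i => h i.succ) (fun i => hh _)]
    have hg : Measurable fun z : Fin n → ℂ => ∏ i, h i.succ (z i) :=
      Finset.measurable_prod _ fun i _ => (hh _).comp (measurable_pi_apply i)
    rw [← lintegral_prod_mul (hh 0).aemeasurable hg.aemeasurable]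
    rfl

lemma vd_ball (a R : ℝ) (ha : a < 2) :
    ∫⁻ w in Metric.ball (0 : ℂ) R, ENNReal.ofReal ‖w‖ ^ (-a) ≠ ∞ := by
  have h := integrableOn_ball_of_norm_le_rpow (μ := (volume : Measure ℂ)) (E := ℂ)
    (f := fun w : ℂ => ‖w‖ ^ (-a)) (C := 1) (α := a) (r := R) (by simp [Complex.finrank_real_complex])
    (by simpa [Complex.finrank_real_complex] using ha)
    (Filter.Eventually.of_forall fun x => by
      simp [abs_of_nonneg (Real.rpow_nonneg (norm_nonneg x) (-a))])
    (by
      apply Measurable.aestronglyMeasurable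
      fun_prop)
  have h2 := h.2
  rw [hasFiniteIntegral_iff_ofReal
    (Filter.Eventually.of_forall fun x => Real.rpow_nonneg (norm_nonneg x) (-a))] at h2
  refine ne_of_lt (lt_of_le_of_lt (le_of_eq ?_) h2)
  apply lintegral_congr_ae
  apply ae_restrict_of_ae
  have : ∀ᵐ x : ℂ, x ≠ 0 := by
    simp [ae_iff]
  filter_upwards [this] with x hx
  exact ENNReal.ofReal_rpow_of_pos (norm_pos_iff.2 hx)

/-- The shear map sending each non-root coordinate to its difference with its root. -/
noncomputable def vdL {n : ℕ} (ρ : Fin n → Fin n) : (Fin n → ℂ) →ₗ[ℝ] (Fin n → ℂ) where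
  toFun z j := if ρ j = j then z j else z j - z (ρ j)
  map_add' x y := by
    ext j
    by_cases h : ρ j = j
    · simp [h]
    · simp [h]; ring
  map_smul' c x := by
    ext j
    by_cases h : ρ j = j
    · simp [h]
    · simp [h]; ring

lemma vdL_apply {n : ℕ} (ρ : Fin n → Fin n) (z : Fin n → ℂ) (j : Fin n) :
    vdL ρ z j = if ρ j = j then z j else z j - z (ρ j) := rfl

lemma vdL_measurable {n : ℕ} (ρ : Fin n → Fin n) : Measurable (vdL ρ) :=
  (LinearMap.continuous_of_finiteDimensional (vdL ρ)).measurable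

lemma vdL_map {n : ℕ} (ρ : Fin n → Fin n) (hρ : ∀ j, ρ (ρ j) = ρ j) :
    ∃ K : ℝ≥0∞, K ≠ 0 ∧ K ≠ ∞ ∧
      Measure.map (vdL ρ) (volume : Measure (Fin n → ℂ)) = K • volume := by
  have hinj : Function.Injective (vdL ρ) := by
    rw [← LinearMap.ker_eq_bot, LinearMap.ker_eq_bot']
    intro z hz
    have h0 : ∀ j, ρ j = j → z j = 0 := by
      intro j hj
      have := congrFun hz j
      simpa [vdL_apply, hj] using this
    ext j
    by_cases h : ρ j = j
    · exact h0 j h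
    · have := congrFun hz j
      simpa [vdL_apply, h, h0 _ (hρ j)] using this
  have hdet : LinearMap.det (vdL ρ) ≠ 0 := by
    have := (LinearEquiv.ofInjectiveEndo (vdL ρ) hinj).isUnit_det'
    exact this.ne_zero
  refine ⟨_, ?_, ?_, Measure.map_linearMap_addHaar_eq_smul_addHaar _ hdet⟩
  · simpa using hdet
  · simp

lemma vd_double {n : ℕ} (g : Fin n → Fin n → ℝ≥0∞) (hg : ∀ i j, g i j = g j i) :
    ∏ a ∈ Finset.univ.filter (fun a : Fin n × Fin n => a.1 < a.2), (g a.1 a.2) ^ 2 =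
      ∏ a ∈ Finset.univ.filter (fun a : Fin n × Fin n => a.1 ≠ a.2), g a.1 a.2 := by
  have h1 : (Finset.univ.filter (fun a : Fin n × Fin n => a.1 ≠ a.2)) =
    (Finset.univ.filter (fun a : Fin n × Fin n => a.1 < a.2)) ∪
    (Finset.univ.filter (fun a : Fin n × Fin n => a.2 < a.1)) := by
    ext a; simp
  rw [h1, Finset.prod_union]
  · have : ∏ a ∈ Finset.univ.filter (fun a : Fin n × Fin n => a.2 < a.1), g a.1 a.2 =
      ∏ a ∈ Finset.univ.filter (fun a : Fin n × Fin n => a.1 < a.2), g a.1 a.2 := by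
      apply Finset.prod_nbij' Prod.swap Prod.swap <;> simp
      intro a b _; exact hg _ _
    rw [this, ← Finset.prod_mul_distrib]
    exact Finset.prod_congr rfl fun a _ => pow_two _
  · rw [Finset.disjoint_left]
    intro a; simp; intro h; exact h.le

lemma vd_rewrite {n : ℕ} (c : ℝ) (z : Fin n → ℂ) :
    ∏ a ∈ Finset.univ.filter (fun a : Fin n × Fin n => a.1 < a.2),
            (ENNReal.ofReal ‖z a.1 - z a.2‖) ^ (-(2 * c)) =
    ∏ a ∈ Finset.univ.filter (fun a : Fin n × Fin n => a.1 ≠ a.2),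
      (ENNReal.ofReal ‖z a.1 - z a.2‖) ^ (-c) := by
  rw [← vd_double (fun i j => (ENNReal.ofReal ‖z i - z j‖) ^ (-c))
    (fun i j => by rw [norm_sub_rev])]
  refine Finset.prod_congr rfl fun a _ => ?_
  rw [← ENNReal.rpow_natCast, ← ENNReal.rpow_mul]
  congr 1; push_cast; ring

/-- pointwise domination of the clustered part -/
lemma vd_pointwise {n : ℕ} (p : Fin n → ℂ) (g : Fin n → Fin n → ℝ≥0∞) :
    ∃ ρ : Fin n → Fin n, (∀ j, p (ρ j) = p j) ∧ (∀ j, ρ (ρ j) = ρ j) ∧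
    ∏ a ∈ Finset.univ.filter (fun a : Fin n × Fin n => p a.1 = p a.2 ∧ a.1 ≠ a.2), g a.1 a.2 ≤
      ∏ j, if ρ j = j then 1 else
        (g (ρ j) j) ^ (Finset.univ.filter (fun i => p i = p j)).card := by
  let T : Fin n → ℝ≥0∞ := fun k => ∏ j, if p k = p j ∧ k ≠ j then g k j else 1
  have hex : ∀ w : Set.range p, ∃ k, p k = w ∧ ∀ i, p i = w → T i ≤ T k := by
    rintro ⟨w, i0, hi0⟩
    obtain ⟨k, hk, hk2⟩ := Finset.exists_max_image (Finset.univ.filter fun i => p i = w) T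
      ⟨i0, by simpa using hi0⟩
    exact ⟨k, by simpa using hk, fun i hi => hk2 i (by simpa using hi)⟩
  choose r hr hr2 using hex
  let ρ : Fin n → Fin n := fun j => r ⟨p j, j, rfl⟩
  have hp : ∀ j, p (ρ j) = p j := fun j => hr _
  have hρ : ∀ i j, p i = p j → ρ i = ρ j := by
    intro i j h
    simp only [ρ, h]
  refine ⟨ρ, hp, fun j => hρ _ _ (hp j), ?_⟩
  calc _ = ∏ i, T i := by
        rw [Finset.prod_filter, Fintype.prod_prod_type]
    _ ≤ ∏ i, T (ρ i) := Finset.prod_le_prod' fun i _ => hr2 _ i rfl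
    _ = ∏ i, ∏ j, if p i = p j ∧ ρ j ≠ j then g (ρ j) j else 1 := by
        refine Finset.prod_congr rfl fun i _ => Finset.prod_congr rfl fun j _ => ?_
        rw [hp i]
        by_cases h : p i = p j
        · rw [hρ i j h]
        · simp [h]
    _ = ∏ j, ∏ i, if p i = p j ∧ ρ j ≠ j then g (ρ j) j else 1 := Finset.prod_comm
    _ = _ := by
        refine Finset.prod_congr rfl fun j _ => ?_
        by_cases h : ρ j = j
        · simp [h]
        · simp [h, Finset.prod_ite]

/-- one-variable factors -/
noncomputable def vdh {n : ℕ} (p : Fin n → ℂ) (c : ℝ) (ρ : Fin n → Fin n) (j : Fin n) :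
    ℂ → ℝ≥0∞ :=
  if ρ j = j then (Metric.ball (p j) 1).indicator 1 else
    (Metric.ball 0 2).indicator fun w =>
      ENNReal.ofReal ‖w‖ ^ (-(c * (Finset.univ.filter (fun i => p i = p j)).card))

lemma vdh_measurable {n : ℕ} (p : Fin n → ℂ) (c : ℝ) (ρ : Fin n → Fin n) (j : Fin n) :
    Measurable (vdh p c ρ j) := by
  unfold vdh
  split_ifs
  · exact measurable_one.indicator Metric.isOpen_ball.measurableSet
  · refine Measurable.indicator ?_ Metric.isOpen_ball.measurableSet
    fun_prop

lemma vdh_lintegral {n : ℕ} (p : Fin n → ℂ) (c : ℝ) (ρ : Fin n → Fin n) (j : Fin n)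
    (hc : c * (Finset.univ.filter (fun i => p i = p j)).card < 2) :
    ∫⁻ w, vdh p c ρ j w ≠ ∞ := by
  unfold vdh
  split_ifs
  · rw [lintegral_indicator_one Metric.isOpen_ball.measurableSet]
    exact measure_ball_lt_top.ne
  · rw [lintegral_indicator Metric.isOpen_ball.measurableSet]
    exact vd_ball _ _ hc

lemma vd_forest {n : ℕ} (p : Fin n → ℂ) (c : ℝ) (ρ : Fin n → Fin n) (hρ : ∀ j, ρ (ρ j) = ρ j)
    (hc : ∀ j, c * (Finset.univ.filter (fun i => p i = p j)).card < 2) :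
    ∫⁻ z, ∏ j, vdh p c ρ j (vdL ρ z j) ≠ ∞ := by
  obtain ⟨K, -, hK, hmap⟩ := vdL_map ρ hρ
  have := lintegral_map (μ := (volume : Measure (Fin n → ℂ)))
    (f := fun w : Fin n → ℂ => ∏ j, vdh p c ρ j (w j)) (g := vdL ρ)
    (Finset.measurable_prod _ fun j _ => (vdh_measurable p c ρ j).comp (measurable_pi_apply j))
    (vdL_measurable ρ)
  rw [← this, hmap, lintegral_smul_measure, vd_lintegral_prod _ _ (vdh_measurable p c ρ)]
  exact ENNReal.mul_ne_top hK (ENNReal.prod_ne_top fun j _ => vdh_lintegral p c ρ j (hc j))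

lemma vd_suff {n : ℕ} (p : Fin n → ℂ) (c : ℝ)
    (hc : ∀ j, c * (Finset.univ.filter (fun i => p i = p j)).card < 2) :
    ∃ s ∈ 𝓝 p, (∫⁻ z in s,
      ∏ a ∈ Finset.univ.filter (fun a : Fin n × Fin n => a.1 ≠ a.2),
        (ENNReal.ofReal ‖z a.1 - z a.2‖) ^ (-c) ∂volume) ≠ ∞ := by
  let φ : (Fin n → ℂ) → Fin n × Fin n → ℝ≥0∞ := fun z a => ENNReal.ofReal ‖z a.1 - z a.2‖ ^ (-c)
  have hcont : ∀ a, Continuous fun z => φ z a := by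
    intro a
    exact ENNReal.continuous_rpow_const.comp (ENNReal.continuous_ofReal.comp (by fun_prop))
  have hfin : ∀ a : Fin n × Fin n, p a.1 ≠ p a.2 → φ p a ≠ ∞ := by
    intro a ha
    have : 0 < ‖p a.1 - p a.2‖ := norm_pos_iff.2 (sub_ne_zero.2 ha)
    simp only [φ]
    rw [ENNReal.ofReal_rpow_of_pos this]
    exact ENNReal.ofReal_ne_top
  have hev : ∀ᶠ z in 𝓝 p, ∀ a : Fin n × Fin n, p a.1 ≠ p a.2 → φ z a ≤ φ p a + 1 := by
    rw [Filter.eventually_all]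
    intro a
    by_cases ha : p a.1 = p a.2
    · simp [ha]
    have h1 : φ p a < φ p a + 1 := ENNReal.lt_add_right (hfin a ha) one_ne_zero
    filter_upwards [(hcont a).continuousAt.eventually_lt continuousAt_const h1] with z hz _
    exact hz.le
  let C : ℝ≥0∞ := ∏ a ∈ Finset.univ.filter (fun a : Fin n × Fin n => p a.1 ≠ p a.2), (φ p a + 1)
  have hC : C ≠ ∞ := ENNReal.prod_ne_top fun a ha =>
    ENNReal.add_ne_top.2 ⟨hfin a (by simpa using ha), ENNReal.one_ne_top⟩
  let G : Finset (Fin n → Fin n) := Finset.univ.filter fun ρ => ∀ j, ρ (ρ j) = ρ j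
  let H : (Fin n → Fin n) → (Fin n → ℂ) → ℝ≥0∞ := fun ρ z => ∏ j, vdh p c ρ j (vdL ρ z j)
  have hH : ∀ ρ, Measurable (H ρ) := fun ρ => Finset.measurable_prod _ fun j _ =>
    (vdh_measurable p c ρ j).comp ((measurable_pi_apply j).comp (vdL_measurable ρ))
  have hsum : Measurable fun z => ∑ ρ ∈ G, H ρ z := Finset.measurable_sum _ fun ρ _ => hH ρ
  refine ⟨Metric.ball p 1 ∩ {z | ∀ a : Fin n × Fin n, p a.1 ≠ p a.2 → φ z a ≤ φ p a + 1},
    Filter.inter_mem (Metric.ball_mem_nhds p one_pos) hev, ?_⟩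
  refine ne_top_of_le_ne_top (b := C * ∑ ρ ∈ G, ∫⁻ z, H ρ z) ?_ ?_
  · refine ENNReal.mul_ne_top hC (ENNReal.sum_ne_top.2 fun ρ hρ => ?_)
    exact vd_forest p c ρ (by simpa [G] using hρ) hc
  rw [← lintegral_finsetSum _ (fun ρ _ => hH ρ), ← lintegral_const_mul _ hsum]
  refine le_trans (setLIntegral_mono (hsum.const_mul C) ?_) (setLIntegral_le_lintegral _ _)
  rintro z ⟨hz1, hz2⟩
  obtain ⟨ρ, hρp, hρρ, hle⟩ := vd_pointwise p (fun i j => φ z (i, j))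
  have hz1' : ∀ i, ‖z i - p i‖ < 1 := fun i => by
    rw [← dist_eq_norm]; exact lt_of_le_of_lt (dist_le_pi_dist z p i) hz1
  have hforest : (∏ j, if ρ j = j then 1 else
        (φ z (ρ j, j)) ^ (Finset.univ.filter (fun i => p i = p j)).card) = H ρ z := by
    refine Finset.prod_congr rfl fun j _ => ?_
    rw [vdL_apply, vdh]
    by_cases h : ρ j = j
    · simp only [h, if_true]
      rw [Set.indicator_of_mem]
      · rfl
      · rw [Metric.mem_ball, dist_eq_norm]; exact hz1' j
    · simp only [h, if_false]
      rw [Set.indicator_of_mem]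
      · simp only [φ]
        rw [← ENNReal.rpow_natCast, ← ENNReal.rpow_mul, norm_sub_rev, neg_mul]
      · rw [Metric.mem_ball, dist_zero_right]
        have e : z j - z (ρ j) = (z j - p j) - (z (ρ j) - p (ρ j)) := by rw [hρp]; ring
        rw [e]
        have := norm_sub_le (z j - p j) (z (ρ j) - p (ρ j))
        linarith [hz1' j, hz1' (ρ j)]
  have hsplit : ∏ a ∈ Finset.univ.filter (fun a : Fin n × Fin n => a.1 ≠ a.2), φ z a =
      (∏ a ∈ Finset.univ.filter (fun a : Fin n × Fin n => p a.1 ≠ p a.2), φ z a) *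
      ∏ a ∈ Finset.univ.filter (fun a : Fin n × Fin n => p a.1 = p a.2 ∧ a.1 ≠ a.2), φ z a := by
    rw [← Finset.prod_filter_mul_prod_filter_not _ (fun a : Fin n × Fin n => p a.1 ≠ p a.2)]
    congr 1
    · refine Finset.prod_congr ?_ fun _ _ => rfl
      ext a
      simp only [Finset.mem_filter, Finset.mem_univ, true_and, ne_eq]
      exact ⟨fun h => h.2, fun h => ⟨fun h' => h (by rw [h']), h⟩⟩
    · refine Finset.prod_congr ?_ fun _ _ => rfl
      ext a
      simp only [Finset.mem_filter, Finset.mem_univ, true_and, ne_eq]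
      tauto
  change ∏ a ∈ Finset.univ.filter (fun a : Fin n × Fin n => a.1 ≠ a.2), φ z a ≤ _
  rw [hsplit]
  refine mul_le_mul' (Finset.prod_le_prod' fun a ha => hz2 a (by simpa using ha)) ?_
  refine le_trans hle ?_
  rw [hforest]
  exact Finset.single_le_sum (f := fun ρ => H ρ z) (fun _ _ => zero_le) (by simpa [G] using hρρ)

lemma vd_nec {n : ℕ} (p : Fin n → ℂ) (c : ℝ) (m : ℕ) (hm2 : 2 ≤ m) (w : ℂ)
    (hw : (Finset.univ.filter fun i => p i = w).card = m) (hc0 : 0 < c) (hc : 2 ≤ c * m)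
    (s : Set (Fin n → ℂ)) (hs : s ∈ 𝓝 p)
    (hInt : (∫⁻ z in s,
      ∏ a ∈ Finset.univ.filter (fun a : Fin n × Fin n => a.1 ≠ a.2),
        (ENNReal.ofReal ‖z a.1 - z a.2‖) ^ (-c) ∂volume) ≠ ∞) : False := by
  set I := Finset.univ.filter fun i => p i = w with hI
  have hIne : I.Nonempty := by rw [← Finset.card_pos]; omega
  obtain ⟨i0, hi0⟩ := hIne
  have hpi0 : p i0 = w := by simpa [hI] using hi0
  let ρ : Fin n → Fin n := fun j => if j ∈ I then i0 else j
  have hρρ : ∀ j, ρ (ρ j) = ρ j := by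
    intro j
    by_cases h : j ∈ I <;> simp [ρ, h]
  have hroot : ∀ j, ρ j = j ↔ j ∉ I.erase i0 := by
    intro j
    by_cases h : j ∈ I
    · simp [ρ, h, eq_comm]
    · simp [ρ, h]
  have hρI : ∀ j ∈ I.erase i0, ρ j = i0 := by
    intro j hj; simp [ρ, Finset.mem_of_mem_erase hj]
  obtain ⟨K, hK0, hK, hmap⟩ := vdL_map ρ hρρ
  obtain ⟨ε', hε'0, hε's⟩ := Metric.mem_nhds_iff.1 hs
  let ε := min ε' 1
  have hε0 : 0 < ε := lt_min hε'0 one_pos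
  have hεs : Metric.ball p ε ⊆ s := (Metric.ball_subset_ball (min_le_left _ _)).trans hε's
  have hε1 : ε ≤ 1 := min_le_right _ _
  let D : ℝ → Fin n → Set ℂ := fun r j =>
    if ρ j = j then Metric.ball (p j) (ε / 2) else Metric.ball 0 r
  let B : ℝ → Set (Fin n → ℂ) := fun r => vdL ρ ⁻¹' (Set.univ.pi (D r))
  have hDm : ∀ r j, MeasurableSet (D r j) := by
    intro r j
    simp only [D]
    split_ifs <;> exact Metric.isOpen_ball.measurableSet
  have hBmeas : ∀ r, MeasurableSet (B r) := fun r =>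
    vdL_measurable ρ (MeasurableSet.univ_pi (hDm r))
  let V : ℝ≥0∞ := ∏ j ∈ Finset.univ.filter (fun j => ρ j = j), volume (Metric.ball (p j) (ε / 2))
  have hV0 : V ≠ 0 := Finset.prod_ne_zero_iff.2 fun j _ =>
    (Metric.measure_ball_pos volume (p j) (half_pos hε0)).ne'
  have hV : V ≠ ∞ := ENNReal.prod_ne_top fun j _ => measure_ball_lt_top.ne
  have hcardE : (I.erase i0).card = m - 1 := by rw [Finset.card_erase_of_mem hi0, hw]
  have hBvol : ∀ r, volume (B r) = K * (V * (ENNReal.ofReal r ^ 2 * NNReal.pi) ^ (m - 1)) := by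
    intro r
    rw [← Measure.map_apply (vdL_measurable ρ) (MeasurableSet.univ_pi (hDm r)), hmap,
      Measure.smul_apply, smul_eq_mul, volume_pi_pi,
      ← Finset.prod_filter_mul_prod_filter_not _ (fun j => ρ j = j)]
    congr 2
    · refine Finset.prod_congr rfl fun j hj => ?_
      have : ρ j = j := by simpa using hj
      simp [D, this]
    · rw [← hcardE]
      have : (Finset.univ.filter fun j => ¬ ρ j = j) = I.erase i0 := by
        ext j; simp only [Finset.mem_filter, Finset.mem_univ, true_and, hroot, not_not]
      rw [this]
      refine Finset.prod_eq_pow_card fun j hj => ?_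
      have : ¬ ρ j = j := by rw [hroot]; simpa using hj
      simp only [D, this, if_false]
      rw [Complex.volume_ball]
  let r : ℕ → ℝ := fun k => ε / 2 * (1 / 2) ^ k
  have hr0 : ∀ k, 0 < r k := fun k => by positivity
  have hrε : ∀ k, r k ≤ ε / 2 := fun k =>
    mul_le_of_le_one_right (half_pos hε0).le (pow_le_one₀ (by norm_num) (by norm_num))
  have hrt : Filter.Tendsto r Filter.atTop (𝓝 0) := by
    have := (tendsto_pow_atTop_nhds_zero_of_lt_one (r := (1/2 : ℝ)) (by norm_num)
      (by norm_num)).const_mul (ε / 2)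
    simpa [r] using this
  have hvolt : Filter.Tendsto (fun k => volume (B (r k))) Filter.atTop (𝓝 0) := by
    have hcont : Continuous fun t : ℝ =>
        K * (V * (ENNReal.ofReal t ^ 2 * NNReal.pi) ^ (m - 1)) := by
      refine (ENNReal.continuous_const_mul hK).comp ((ENNReal.continuous_const_mul hV).comp ?_)
      refine (ENNReal.continuous_pow _).comp ?_
      refine (ENNReal.continuous_mul_const ENNReal.coe_ne_top).comp ?_
      exact (ENNReal.continuous_pow _).comp ENNReal.continuous_ofReal
    have h := (hcont.tendsto 0).comp hrt
    have hm1 : m - 1 ≠ 0 := by omega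
    simp only [hBvol]
    simpa [hm1, Function.comp_def] using h
  -- geometry
  have hBz : ∀ k, ∀ z ∈ B (r k), (∀ j ∈ I, ‖z j - z i0‖ < r k) ∧ ∀ j, ‖z j - p j‖ < ε := by
    intro k z hz
    have hz' : ∀ j, vdL ρ z j ∈ D (r k) j := fun j => hz j (Set.mem_univ j)
    have hA : ∀ j, ρ j = j → ‖z j - p j‖ < ε / 2 := by
      intro j hj
      have := hz' j
      simp only [vdL_apply, D, hj, if_true] at this
      rwa [Metric.mem_ball, dist_eq_norm] at this
    have hA' : ∀ j ∈ I.erase i0, ‖z j - z i0‖ < r k := by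
      intro j hj
      have h2 := hz' j
      have h3 : ¬ ρ j = j := by rw [hroot]; simpa using hj
      simp only [vdL_apply, D, h3, if_false] at h2
      rw [hρI j hj] at h2
      rwa [Metric.mem_ball, dist_zero_right] at h2
    have hi0r : ρ i0 = i0 := by simp [hroot]
    refine ⟨?_, ?_⟩
    · intro j hj
      by_cases h : j = i0
      · rw [h]; simpa using hr0 k
      · exact hA' j (Finset.mem_erase.2 ⟨h, hj⟩)
    · intro j
      by_cases h : ρ j = j
      · linarith [hA j h]
      · have hj : j ∈ I.erase i0 := by
          rw [hroot] at h; simpa using h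
        have hpj : p j = p i0 := by
          rw [hpi0]; simpa [hI] using Finset.mem_of_mem_erase hj
        have e : z j - p j = (z j - z i0) + (z i0 - p i0) := by rw [hpj]; ring
        rw [e]
        have := norm_add_le (z j - z i0) (z i0 - p i0)
        linarith [hA' j hj, hA i0 hi0r, hrε k]
  have hBs : ∀ k, B (r k) ⊆ s := by
    intro k z hz
    apply hεs
    rw [Metric.mem_ball, dist_pi_lt_iff hε0]
    intro j
    rw [dist_eq_norm]
    exact (hBz k z hz).2 j
  let R : ℝ := 2 + 2 * ‖p‖
  have hR : 0 < R := by positivity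
  let κ : ℝ≥0∞ := ∏ a ∈ (Finset.univ.filter (fun a : Fin n × Fin n => a.1 ≠ a.2)).filter
    (fun a => ¬ (a.1 ∈ I ∧ a.2 ∈ I)), ENNReal.ofReal R ^ (-c)
  have hκ0 : κ ≠ 0 := by
    refine Finset.prod_ne_zero_iff.2 fun a _ => ?_
    rw [ENNReal.ofReal_rpow_of_pos hR]
    simpa using Real.rpow_pos_of_pos hR _
  have hlow : ∀ k, ∀ z ∈ B (r k), κ * (ENNReal.ofReal (2 * r k) ^ (-2 : ℝ)) ^ (m * (m - 1) / m) ≤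
      ∏ a ∈ Finset.univ.filter (fun a : Fin n × Fin n => a.1 ≠ a.2),
        (ENNReal.ofReal ‖z a.1 - z a.2‖) ^ (-c) := by
    intro k z hz
    obtain ⟨h1, h2⟩ := hBz k z hz
    rw [← Finset.prod_filter_mul_prod_filter_not
      (Finset.univ.filter (fun a : Fin n × Fin n => a.1 ≠ a.2)) (fun a => a.1 ∈ I ∧ a.2 ∈ I),
      mul_comm κ]
    refine mul_le_mul' ?_ (Finset.prod_le_prod' fun a _ => ?_)
    · have hset : ((Finset.univ.filter (fun a : Fin n × Fin n => a.1 ≠ a.2)).filter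
          (fun a => a.1 ∈ I ∧ a.2 ∈ I)) = I.offDiag := by
        ext a; simp only [Finset.mem_filter, Finset.mem_univ, true_and, Finset.mem_offDiag]; tauto
      rw [hset]
      have hcard : I.offDiag.card = m * (m - 1) := by
        rw [Finset.offDiag_card, hw, Nat.mul_sub, mul_one]
      have hstep : (ENNReal.ofReal (2 * r k) ^ (-c)) ^ (m * (m - 1)) ≤
          ∏ a ∈ I.offDiag, (ENNReal.ofReal ‖z a.1 - z a.2‖) ^ (-c) := by
        rw [← hcard, ← Finset.prod_const]
        refine Finset.prod_le_prod' fun a ha => ?_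
        rw [Finset.mem_offDiag] at ha
        rw [ENNReal.rpow_neg, ENNReal.rpow_neg, ENNReal.inv_le_inv]
        refine ENNReal.rpow_le_rpow (ENNReal.ofReal_le_ofReal ?_) hc0.le
        have e : z a.1 - z a.2 = (z a.1 - z i0) - (z a.2 - z i0) := by ring
        rw [e]
        have := norm_sub_le (z a.1 - z i0) (z a.2 - z i0)
        linarith [h1 _ ha.1, h1 _ ha.2.1]
      refine le_trans ?_ hstep
      rw [Nat.mul_div_cancel_left _ (by omega), pow_mul]
      refine pow_le_pow_left' ?_ _
      rw [← ENNReal.rpow_natCast, ← ENNReal.rpow_mul]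
      refine ENNReal.rpow_le_rpow_of_exponent_ge ?_ (by linarith)
      rw [ENNReal.ofReal_le_one]
      linarith [hrε k]
    · rw [ENNReal.rpow_neg, ENNReal.rpow_neg, ENNReal.inv_le_inv]
      refine ENNReal.rpow_le_rpow (ENNReal.ofReal_le_ofReal ?_) hc0.le
      have e : z a.1 - z a.2 = ((z a.1 - p a.1) + p a.1) - ((z a.2 - p a.2) + p a.2) := by ring
      rw [e]
      have t1 := norm_sub_le ((z a.1 - p a.1) + p a.1) ((z a.2 - p a.2) + p a.2)
      have t2 := norm_add_le (z a.1 - p a.1) (p a.1)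
      have t3 := norm_add_le (z a.2 - p a.2) (p a.2)
      have t4 := norm_le_pi_norm p a.1
      have t5 := norm_le_pi_norm p a.2
      simp only [R]
      linarith [h2 a.1, h2 a.2]
  let Q : ℝ≥0∞ := κ * K * V * (ENNReal.ofReal (1 / 4) * NNReal.pi) ^ (m - 1)
  have hQ : Q ≠ 0 := by
    refine mul_ne_zero (mul_ne_zero (mul_ne_zero hκ0 hK0) hV0) (pow_ne_zero _ (mul_ne_zero ?_ ?_))
    · simp
    · simpa using NNReal.pi_ne_zero
  have hbound : ∀ k, Q ≤ ∫⁻ z in B (r k),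
      ∏ a ∈ Finset.univ.filter (fun a : Fin n × Fin n => a.1 ≠ a.2),
        (ENNReal.ofReal ‖z a.1 - z a.2‖) ^ (-c) ∂(volume.restrict s) := by
    intro k
    rw [Measure.restrict_restrict (hBmeas _), Set.inter_eq_left.2 (hBs k)]
    refine le_trans ?_ (setLIntegral_mono' (hBmeas (r k)) (hlow k))
    rw [setLIntegral_const, hBvol, Nat.mul_div_cancel_left _ (by omega)]
    refine le_of_eq ?_
    have hx : ENNReal.ofReal (1 / 4) =
        ENNReal.ofReal (2 * r k) ^ (-2 : ℝ) * ENNReal.ofReal (r k) ^ 2 := by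
      have hk := hr0 k
      rw [ENNReal.ofReal_rpow_of_pos (by linarith), ← ENNReal.ofReal_pow hk.le,
        ← ENNReal.ofReal_mul (by positivity)]
      congr 1
      rw [Real.rpow_neg (by linarith)]
      norm_cast
      field_simp
      norm_num
    simp only [Q]
    rw [hx]
    simp only [mul_pow]
    ring
  have hlim := tendsto_setLIntegral_zero (μ := volume.restrict s) hInt (l := Filter.atTop)
    (s := fun k => B (r k)) (by
      refine tendsto_of_tendsto_of_tendsto_of_le_of_le tendsto_const_nhds hvolt
        (fun _ => zero_le) (fun k => ?_)
      exact Measure.restrict_apply_le _ _)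
  exact hQ (le_antisymm (ge_of_tendsto' hlim hbound) zero_le)

/-- **Local integrability threshold of the Vandermonde density.** Let `N ≥ 2`, `p ∈ ℂ^N`,
and let `m ≥ 2` be the maximal multiplicity among the coordinates of `p`. For `c > 0`, the
function `z ↦ ∏_{i<j} |z_i - z_j| ^ (-2c)` is Lebesgue integrable on some neighborhood of `p`
if and only if `c < 2/m`. -/
theorem vandermonde_local_integrability_threshold (N : ℕ) (hN : 2 ≤ N) (p : Fin N → ℂ)
    (m : ℕ) (hm2 : 2 ≤ m)
    (hm : IsGreatest {n : ℕ | ∃ w : ℂ, n = (Finset.univ.filter fun i => p i = w).card} m)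
    (c : ℝ) (hc : 0 < c) :
    (∃ s ∈ 𝓝 p,
        (∫⁻ z in s,
          ∏ a ∈ Finset.univ.filter (fun a : Fin N × Fin N => a.1 < a.2),
            (ENNReal.ofReal ‖z a.1 - z a.2‖) ^ (-(2 * c)) ∂volume) ≠ ∞) ↔
      c < 2 / (m : ℝ) := by
  have hm0 : (0 : ℝ) < m := by
    have : 0 < m := by omega
    exact_mod_cast this
  simp only [vd_rewrite]
  rw [lt_div_iff₀ hm0]
  constructor
  · rintro ⟨s, hs, hInt⟩
    by_contra hcon
    obtain ⟨w, hw⟩ := hm.1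
    exact vd_nec p c m hm2 w hw.symm hc (not_lt.1 hcon) s hs hInt
  · intro h
    refine vd_suff p c fun j => lt_of_le_of_lt ?_ h
    refine mul_le_mul_of_nonneg_left ?_ hc.le
    exact_mod_cast hm.2 ⟨p j, rfl⟩
end

section
/- Let N ≥ 4 be an integer, k = (N−1)/2, and γ > 0 real. The function z ↦ ∏_{1≤i<j≤N} |z_i − z_j|^{−2γ/k} is Lebesgue integrable on a neighborhood of every point p ∈ ℂ^N whose maximal coordinate multiplicity max_{w∈ℂ} #{i : p_i = w} is at most ⌊N/2⌋, if and only if γ < (N−1)/⌊N/2⌋. In particular this threshold equals 2 if N is odd and 2(1 − 1/N) if N is even, so ℙ¹ is uniformly Gibbs polystable. -/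
open MeasureTheory Topology
open scoped ENNReal Classical

theorem mt_split {ι : Type} [Fintype ι] (P : ι → Prop) (F : (ι → ℂ) → ℝ≥0∞) (hF : Measurable F) :
    ∫⁻ z, F z = ∫⁻ x : {i // P i} → ℂ, ∫⁻ y : {i // ¬ P i} → ℂ,
      F (fun i => if h : P i then x ⟨i, h⟩ else y ⟨i, h⟩) := by
  have h := (volume_preserving_piEquivPiSubtypeProd (fun _ : ι => ℂ) P).symm
  rw [← h.lintegral_comp hF, Measure.volume_eq_prod, lintegral_prod]
  · rfl
  · exact (hF.comp (MeasurableEquiv.measurable _)).aemeasurable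

theorem mt_shear {ι : Type} [Fintype ι] (P : ι → Prop) (ρ : ι → ι) (hρ : ∀ i, ¬ P i → P (ρ i))
    (F : (ι → ℂ) → ℝ≥0∞) (hF : Measurable F) :
    ∫⁻ z, F z = ∫⁻ z : ι → ℂ, F (fun i => if P i then z i else z i + z (ρ i)) := by
  rw [mt_split P F hF, mt_split P (fun z => F (fun i => if P i then z i else z i + z (ρ i)))]
  · refine lintegral_congr fun x => ?_
    rw [← lintegral_add_right_eq_self _ (fun i : {i // ¬ P i} => x ⟨ρ i, hρ i i.2⟩)]
    refine lintegral_congr fun y => ?_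
    congr 1
    funext i
    by_cases h : P i
    · simp [h]
    · simp [h, hρ i h]
  · refine hF.comp (measurable_pi_lambda _ fun i => ?_)
    by_cases h : P i
    · simp only [h, if_true]; fun_prop
    · simp only [h, if_false]; fun_prop

theorem mt_prod : ∀ (n : ℕ) (ψ : Fin n → ℂ → ℝ≥0∞) (_ : ∀ i, Measurable (ψ i)),
    ∫⁻ z : Fin n → ℂ, ∏ i, ψ i (z i) = ∏ i, ∫⁻ w, ψ i w
  | 0, ψ, h => by
      simp [volume_pi]
  | n + 1, ψ, h => by
      have e := (volume_preserving_piFinSuccAbove (fun _ : Fin (n+1) => ℂ) 0).symm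
      have hm : Measurable (fun z : Fin (n+1) → ℂ => ∏ i, ψ i (z i)) :=
        Finset.measurable_prod _ fun i _ => (h i).comp (measurable_pi_apply i)
      have hm' : Measurable (fun z : Fin n → ℂ => ∏ i : Fin n, ψ i.succ (z i)) :=
        Finset.measurable_prod _ fun i _ => (h _).comp (measurable_pi_apply i)
      rw [← e.lintegral_comp hm, Fin.prod_univ_succ, ← mt_prod n _ (fun i => h i.succ),
        Measure.volume_eq_prod, ← lintegral_prod_mul (h 0).aemeasurable hm'.aemeasurable]
      refine lintegral_congr fun x => ?_
      rw [Fin.prod_univ_succ]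
      rfl

theorem mt_core (n : ℕ) (ρ : Fin n → Fin n) (hρ : ∀ i, ρ (ρ i) = ρ i)
    (ψ : Fin n → ℂ → ℝ≥0∞) (hψ : ∀ i, Measurable (ψ i)) :
    ∫⁻ z : Fin n → ℂ, ∏ i, ψ i (if ρ i = i then z i else z i - z (ρ i)) = ∏ i, ∫⁻ w, ψ i w := by
  rw [mt_shear (fun i => ρ i = i) ρ (fun i _ => hρ i)]
  · rw [← mt_prod n ψ hψ]
    refine lintegral_congr fun z => Finset.prod_congr rfl fun i _ => ?_
    congr 1
    by_cases h : ρ i = i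
    · simp [h]
    · simp [h, hρ i]
  · refine Finset.measurable_prod _ fun i _ => (hψ i).comp ?_
    by_cases h : ρ i = i
    · simp only [h, if_true]; fun_prop
    · simp only [h, if_false]; fun_prop

theorem mt_norm {E : Type} [NormedAddCommGroup E] [NormedSpace ℝ E] [MeasurableSpace E]
    [BorelSpace E] [Nontrivial E] [FiniteDimensional ℝ E] (μ : Measure E) [μ.IsAddHaarMeasure]
    (a r : ℝ) (hr : 0 < r) :
    ∫⁻ y in Metric.ball (0:E) r, ENNReal.ofReal ‖y‖ ^ (-a) ∂μ ≠ ∞ ↔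
      a < Module.finrank ℝ E := by
  have h1 : ∫⁻ y in Metric.ball (0:E) r, ENNReal.ofReal ‖y‖ ^ (-a) ∂μ
      = ∫⁻ y in Metric.ball (0:E) r, ‖‖y‖ ^ (-a)‖ₑ ∂μ := by
    refine lintegral_congr_ae (ae_restrict_of_ae ?_)
    have : ∀ᵐ y ∂μ, y ≠ 0 := by simp [ae_iff, measure_singleton]
    filter_upwards [this] with y hy
    rw [ENNReal.ofReal_rpow_of_pos (norm_pos_iff.2 hy), Real.enorm_of_nonneg (by positivity)]
  have h2 : IntegrableOn (fun y : E => ‖y‖ ^ (-a)) (Metric.ball (0:E) r) μ ↔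
      a < Module.finrank ℝ E := by
    rw [integrableOn_fun_norm_addHaar μ (f := fun t => t ^ (-a))]
    have hd : 0 < Module.finrank ℝ E := Module.finrank_pos
    have : IntegrableOn (fun y : ℝ => y ^ (Module.finrank ℝ E - 1) • y ^ (-a)) (Set.Ioo 0 r) ↔
        IntegrableOn (fun y : ℝ => y ^ ((Module.finrank ℝ E : ℝ) - 1 - a)) (Set.Ioo 0 r) := by
      refine integrableOn_congr_fun (fun y hy => ?_) measurableSet_Ioo
      simp only [smul_eq_mul]
      rw [← Real.rpow_natCast, ← Real.rpow_add hy.1, Nat.cast_sub hd]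
      congr 1
      push_cast; ring
    rw [this, intervalIntegral.integrableOn_Ioo_rpow_iff hr]
    constructor <;> intro h <;> linarith
  rw [h1, ← h2, IntegrableOn, Integrable, hasFiniteIntegral_iff_enorm, lt_top_iff_ne_top]
  constructor
  · intro h; exact ⟨(by fun_prop : Measurable fun y : E => ‖y‖ ^ (-a)).aestronglyMeasurable, h⟩
  · exact fun h => h.2

theorem mt_pair {M : Type} [CommMonoid M] (N : ℕ) (h : Fin N → Fin N → M)
    (hs : ∀ i j, h i j = h j i) :
    ∏ a ∈ Finset.univ.filter (fun a : Fin N × Fin N => a.1 < a.2), h a.1 a.2 ^ 2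
      = ∏ i, ∏ j, if j ≠ i then h i j else 1 := by
  have e1 : ∏ a ∈ Finset.univ.filter (fun a : Fin N × Fin N => a.1 < a.2), h a.1 a.2
      = ∏ i, ∏ j, if i < j then h i j else 1 := by
    rw [Finset.prod_filter, Fintype.prod_prod_type]
  have e2 : ∏ i, ∏ j, (if i < j then h i j else 1) = ∏ i, ∏ j, if j < i then h i j else 1 := by
    rw [Finset.prod_comm]
    simp_rw [hs]
  rw [Finset.prod_pow, sq]
  nth_rw 1 [e1]
  rw [e1, e2, e2.symm]
  nth_rw 2 [e2]
  rw [← Finset.prod_mul_distrib]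
  refine Finset.prod_congr rfl fun i _ => ?_
  rw [← Finset.prod_mul_distrib]
  refine Finset.prod_congr rfl fun j _ => ?_
  rcases lt_trichotomy i j with h | h | h
  · simp [h, h.ne', h.not_gt]
  · simp [h]
  · simp [h, h.ne, h.not_gt]

theorem mt_anti {x y : ℝ≥0∞} {c : ℝ} (hc : 0 ≤ c) (h : x ≤ y) : y ^ (-c) ≤ x ^ (-c) := by
  rw [ENNReal.rpow_neg, ENNReal.rpow_neg]
  exact ENNReal.inv_le_inv.2 (ENNReal.rpow_le_rpow h hc)

theorem mt_comb (N : ℕ) (hN : 0 < N) (p : Fin N → ℂ) (h : Fin N → Fin N → ℝ≥0∞)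
    (hs : ∀ i j, h i j = h j i) :
    ∃ ρ : Fin N → Fin N, (∀ i, p (ρ i) = p i) ∧ (∀ i j, p i = p j → ρ i = ρ j) ∧
      ∏ a ∈ Finset.univ.filter (fun a : Fin N × Fin N => a.1 < a.2), h a.1 a.2 ^ 2 ≤
      (∏ i, ∏ j, if p j ≠ p i then h i j else 1) *
        ∏ j, if ρ j = j then 1 else
          h (ρ j) j ^ (Finset.univ.filter fun i => p i = p j).card := by
  set D : Fin N → ℝ≥0∞ := fun i => ∏ j, if j ≠ i ∧ p j = p i then h i j else 1 with hD
  have hr : ∀ w : ℂ, ∃ i, ∀ j, p j = w → p i = w ∧ D j ≤ D i := by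
    intro w
    by_cases hw : (Finset.univ.filter fun i => p i = w).Nonempty
    · obtain ⟨i, hi, hmax⟩ := Finset.exists_max_image _ D hw
      refine ⟨i, fun j hj => ⟨by simpa using hi, hmax j (by simpa using hj)⟩⟩
    · refine ⟨⟨0, hN⟩, fun j hj => (hw ⟨j, by simpa using hj⟩).elim⟩
  choose r hr using hr
  have hp : ∀ i, p (r (p i)) = p i := fun i => (hr (p i) i rfl).1
  refine ⟨fun i => r (p i), hp, fun i j hij => by simp [hij], ?_⟩
  rw [mt_pair N h hs]
  have e : ∏ i, ∏ j, (if j ≠ i then h i j else 1) =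
      (∏ i, ∏ j, if p j ≠ p i then h i j else 1) * ∏ i, D i := by
    rw [← Finset.prod_mul_distrib]
    refine Finset.prod_congr rfl fun i _ => ?_
    rw [← Finset.prod_mul_distrib]
    refine Finset.prod_congr rfl fun j _ => ?_
    by_cases h1 : j = i
    · simp [h1]
    · by_cases h2 : p j = p i <;> simp [h1, h2]
  rw [e]
  refine mul_le_mul_right ?_ _
  calc ∏ i, D i ≤ ∏ i, D (r (p i)) :=
        Finset.prod_le_prod' fun i _ => (hr (p i) i rfl).2
    _ = ∏ j, ∏ i, if j ≠ r (p i) ∧ p j = p (r (p i)) then h (r (p i)) j else 1 := by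
        rw [hD, Finset.prod_comm]
    _ = _ := by
        refine Finset.prod_congr rfl fun j _ => ?_
        by_cases hj : r (p j) = j
        · simp only [hj, if_true]
          refine Finset.prod_eq_one fun i _ => ?_
          rw [if_neg]
          rintro ⟨h1, h2⟩
          rw [hp] at h2
          rw [← h2] at h1
          exact h1 hj.symm
        · simp only [hj, if_false]
          rw [← Finset.prod_const, Finset.prod_filter]
          refine Finset.prod_congr rfl fun i _ => ?_
          rw [hp]
          by_cases h2 : p i = p j
          · simp [h2, Ne.symm hj]
          · simp [h2, Ne.symm h2]

theorem mt_suff (N : ℕ) (hN : 0 < N) (c : ℝ) (hc : 0 < c) (m : ℕ) (hcm : c * m < 4)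
    (p : Fin N → ℂ) (hp : ∀ w : ℂ, (Finset.univ.filter fun i => p i = w).card ≤ m) :
    ∃ s ∈ 𝓝 p, (∫⁻ z in s, ∏ a ∈ Finset.univ.filter (fun a : Fin N × Fin N => a.1 < a.2),
              (ENNReal.ofReal ‖z a.1 - z a.2‖) ^ (-c) ∂volume) ≠ ∞ := by
  set n : Fin N → ℕ := fun j => (Finset.univ.filter fun i => p i = p j).card with hn
  set ψ : (Fin N → Fin N) → Fin N → ℂ → ℝ≥0∞ := fun ρ j =>
    if ρ j = j then (Metric.ball (p j) 1).indicator (fun _ => 1)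
    else (Metric.ball 0 2).indicator (fun w => ENNReal.ofReal ‖w‖ ^ (-(c / 2 * n j))) with hψ
  have hψm : ∀ ρ j, Measurable (ψ ρ j) := by
    intro ρ j
    simp only [hψ]
    split_ifs
    · exact measurable_const.indicator measurableSet_ball
    · exact Measurable.indicator (by fun_prop) measurableSet_ball
  have hψf : ∀ ρ j, ∫⁻ w, ψ ρ j w ≠ ∞ := by
    intro ρ j
    simp only [hψ]
    split_ifs
    · rw [lintegral_indicator measurableSet_ball]
      simp
    · rw [lintegral_indicator measurableSet_ball, mt_norm _ _ _ (by norm_num)]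
      rw [Complex.finrank_real_complex]
      have : (n j : ℝ) ≤ m := by exact_mod_cast hp (p j)
      push_cast
      nlinarith
  set K : ℝ≥0∞ := ∏ i, ∏ j, if p j ≠ p i then
    ENNReal.ofReal (‖p i - p j‖ / 2) ^ (-(c/2)) else 1 with hK
  have hKf : K ≠ ∞ := by
    refine ENNReal.prod_ne_top fun i _ => ENNReal.prod_ne_top fun j _ => ?_
    split_ifs with h
    · have : 0 < ‖p i - p j‖ := norm_pos_iff.2 (sub_ne_zero.2 (Ne.symm h))
      rw [ENNReal.ofReal_rpow_of_pos (by positivity)]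
      exact ENNReal.ofReal_ne_top
    · simp
  set s : Set (Fin N → ℂ) := {z | (∀ i, ‖z i - p i‖ < 1) ∧
    ∀ i j, p j ≠ p i → ‖p i - p j‖ / 2 < ‖z i - z j‖} with hs
  have hsn : ∀ᶠ z in 𝓝 p, z ∈ s := by
    refine Filter.Eventually.and ?_ ?_
    · refine Filter.eventually_all.2 fun i => ?_
      have : Continuous (fun z : Fin N → ℂ => ‖z i - p i‖) := by fun_prop
      exact this.continuousAt.eventually_lt_const (by simp)
    · refine Filter.eventually_all.2 fun i => Filter.eventually_all.2 fun j => ?_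
      by_cases h : p j = p i
      · simp [h]
      · have : 0 < ‖p i - p j‖ := norm_pos_iff.2 (sub_ne_zero.2 (Ne.symm h))
        have h2 : ContinuousAt (fun z : Fin N → ℂ => ‖z i - z j‖) p := by fun_prop
        filter_upwards [h2.eventually_const_lt (by linarith : ‖p i - p j‖ / 2 < ‖p i - p j‖)]
          with z hz _ using hz
  refine ⟨s, hsn, ?_⟩
  have hsm : MeasurableSet s := by
    rw [hs]
    refine MeasurableSet.inter ?_ ?_
    · refine measurableSet_setOfPred.2 (Measurable.forall fun i => ?_)
      exact measurableSet_setOfPred.1 (measurableSet_lt (by fun_prop) (by fun_prop))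
    · refine measurableSet_setOfPred.2 (Measurable.forall fun i => Measurable.forall fun j => ?_)
      refine Measurable.imp measurable_const ?_
      exact measurableSet_setOfPred.1 (measurableSet_lt (by fun_prop) (by fun_prop))
  set R : Finset (Fin N → Fin N) := Finset.univ.filter fun ρ => ∀ i, ρ (ρ i) = ρ i with hR
  set G : (Fin N → Fin N) → (Fin N → ℂ) → ℝ≥0∞ := fun ρ z =>
    ∏ i, ψ ρ i (if ρ i = i then z i else z i - z (ρ i)) with hG
  have hGm : ∀ ρ, Measurable (G ρ) := by
    intro ρ
    refine Finset.measurable_prod _ fun i _ => (hψm ρ i).comp ?_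
    by_cases h : ρ i = i
    · simp only [h, if_true]; fun_prop
    · simp only [h, if_false]; fun_prop
  have hle : ∀ z ∈ s, ∏ a ∈ Finset.univ.filter (fun a : Fin N × Fin N => a.1 < a.2),
              (ENNReal.ofReal ‖z a.1 - z a.2‖) ^ (-c) ≤ K * ∑ ρ ∈ R, G ρ z := by
    intro z hz
    obtain ⟨ρ, h1, h2, h3⟩ := mt_comb N hN p
      (fun i j => ENNReal.ofReal ‖z i - z j‖ ^ (-(c/2))) (fun i j => by rw [norm_sub_rev])
    have hρR : ρ ∈ R := by
      simp only [hR, Finset.mem_filter, Finset.mem_univ, true_and]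
      exact fun i => h2 _ _ (h1 i)
    have e : ∀ x : ℝ≥0∞, x ^ (-c) = (x ^ (-(c/2))) ^ 2 := by
      intro x
      rw [← ENNReal.rpow_natCast, ← ENNReal.rpow_mul]
      congr 1; push_cast; ring
    simp_rw [e]
    refine h3.trans (mul_le_mul' ?_ ?_)
    · refine Finset.prod_le_prod' fun i _ => Finset.prod_le_prod' fun j _ => ?_
      split_ifs with h
      · refine mt_anti (by linarith) ?_
        exact ENNReal.ofReal_le_ofReal (hz.2 i j h).le
      · exact le_rfl
    · refine le_trans (le_of_eq ?_) (Finset.single_le_sum (f := fun ρ => G ρ z)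
        (fun _ _ => zero_le) hρR)
      refine Finset.prod_congr rfl fun j _ => ?_
      by_cases hj : ρ j = j
      · simp only [hψ, hj, if_true]
        rw [Set.indicator_of_mem]
        simpa [dist_eq_norm] using hz.1 j
      · simp only [hψ, hj, if_false]
        rw [Set.indicator_of_mem, norm_sub_rev, ← ENNReal.rpow_natCast, ← ENNReal.rpow_mul]
        · congr 1; ring
        · rw [mem_ball_zero_iff]
          have := norm_sub_le (z j - p j) (z (ρ j) - p j)
          have h5 := hz.1 j
          have h6 := hz.1 (ρ j)
          rw [h1] at h6
          have h7 : z j - z (ρ j) = (z j - p j) - (z (ρ j) - p j) := by ring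
          rw [h7]; linarith
  have hfin : ∫⁻ z in s, K * ∑ ρ ∈ R, G ρ z ≤ K * ∑ ρ ∈ R, ∏ i, ∫⁻ w, ψ ρ i w := by
    refine (setLIntegral_le_lintegral _ _).trans ?_
    rw [lintegral_const_mul _ (Finset.measurable_sum _ fun ρ _ => hGm ρ),
      lintegral_finsetSum _ fun ρ _ => hGm ρ]
    refine mul_le_mul_right (Finset.sum_le_sum fun ρ hρ => le_of_eq ?_) _
    exact mt_core N ρ (by simpa [hR] using hρ) (ψ ρ) (hψm ρ)
  refine ne_top_of_le_ne_top ?_ ((setLIntegral_mono' hsm hle).trans hfin)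
  refine ENNReal.mul_ne_top hKf (ENNReal.sum_ne_top.2 fun ρ _ => ?_)
  exact ENNReal.prod_ne_top fun i _ => hψf ρ i

theorem mt_count (N m : ℕ) (hmN : m ≤ N) :
    ((Finset.univ.filter (fun a : Fin N × Fin N => a.1 < a.2)).filter
      (fun a => (a.2 : ℕ) < m)).card * 2 = m * (m - 1) := by
  rw [Finset.filter_filter, Finset.card_filter, Fintype.sum_prod_type_right]
  trans (∑ j : Fin N, if (j : ℕ) < m then (j : ℕ) else 0) * 2
  · congr 1
    refine Finset.sum_congr rfl fun j _ => ?_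
    by_cases h : (j : ℕ) < m
    · simp only [h, and_true, if_true]
      rw [← Finset.card_filter, ← Fin.card_Iio j]
      congr 1
      ext x
      simp
    · simp [h]
  rw [← Finset.sum_range (fun j => if j < m then j else 0), ← Finset.sum_filter]
  have : (Finset.range N).filter (· < m) = Finset.range m := by
    ext x; simp; omega
  rw [this, Finset.sum_range_id_mul_two]

theorem mt_nec (N m : ℕ) (hm : 2 ≤ m) (hmN : m ≤ N) (c : ℝ) (hc : 0 < c) (hcm : 4 ≤ c * m)
    (p : Fin N → ℂ) (hp : p = fun i : Fin N => if (i : ℕ) < m then 0 else ((i : ℕ) : ℂ))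
    (s : Set (Fin N → ℂ)) (hs : s ∈ 𝓝 p) :
    (∫⁻ z in s, ∏ a ∈ Finset.univ.filter (fun a : Fin N × Fin N => a.1 < a.2),
              (ENNReal.ofReal ‖z a.1 - z a.2‖) ^ (-c) ∂volume) = ∞ := by
  set X : (Fin N → ℂ) → ℝ≥0∞ := fun z =>
    ∏ a ∈ Finset.univ.filter (fun a : Fin N × Fin N => a.1 < a.2),
              (ENNReal.ofReal ‖z a.1 - z a.2‖) ^ (-c) with hX
  obtain ⟨ε, hε, hε1, hball⟩ : ∃ ε : ℝ, 0 < ε ∧ ε ≤ 1 ∧ Metric.ball p ε ⊆ s := by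
    obtain ⟨ε, hε, h⟩ := Metric.mem_nhds_iff.1 hs
    exact ⟨min ε 1, by positivity, min_le_right _ _,
      (Metric.ball_subset_ball (min_le_left _ _)).trans h⟩
  set F := (Metric.ball p ε).indicator X with hF
  have hXm : Measurable X := by
    refine Finset.measurable_prod _ fun a _ => ?_
    fun_prop
  have hFm : Measurable F := hXm.indicator measurableSet_ball
  have h0 : ∫⁻ z, F z ≤ ∫⁻ z in s, X z := by
    rw [hF, lintegral_indicator measurableSet_ball]
    exact lintegral_mono_set hball
  suffices h : ∫⁻ z, F z = ∞ from top_le_iff.1 (h ▸ h0)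
  set o : Fin N := ⟨0, by omega⟩ with ho
  obtain ⟨P, hP⟩ : ∃ P : Fin N → Prop, P = fun i => i = o ∨ m ≤ (i : ℕ) := ⟨_, rfl⟩
  have hPo : P o := by rw [hP]; exact Or.inl rfl
  rw [mt_shear P (fun _ => o) (fun _ _ => hPo) F hFm, mt_split P]
  swap
  · refine hFm.comp (measurable_pi_lambda _ fun i => ?_)
    by_cases h : P i
    · simp only [h, if_true]; fun_prop
    · simp only [h, if_false]; fun_prop
  set q : {i // P i} → ℂ := fun i => p i with hq
  set d : ℝ := 2 * ((m : ℝ) - 1) with hd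
  set M := ((Finset.univ.filter (fun a : Fin N × Fin N => a.1 < a.2)).filter
      (fun a => (a.2 : ℕ) < m)).card with hM
  set M' := ((Finset.univ.filter (fun a : Fin N × Fin N => a.1 < a.2)).filter
      (fun a => ¬ (a.2 : ℕ) < m)).card with hM'
  set K : ℝ≥0∞ := (ENNReal.ofReal (2 * (N + 1)) ^ (-c)) ^ M' with hK
  have hK0 : K ≠ 0 := by
    refine pow_ne_zero _ ?_
    rw [ENNReal.ofReal_rpow_of_pos (by positivity)]
    simp only [ne_eq, ENNReal.ofReal_eq_zero, not_le]
    positivity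
  have hcM : d ≤ c * M := by
    have h1 : (M : ℝ) * 2 = m * ((m : ℝ) - 1) := by
      have := mt_count N m hmN
      rw [← hM] at this
      have h2 : ((M * 2 : ℕ) : ℝ) = ((m * (m - 1) : ℕ) : ℝ) := by rw [this]
      rw [Nat.cast_mul, Nat.cast_mul, Nat.cast_sub (by omega)] at h2
      simpa using h2
    have h3 : (2:ℝ) ≤ m := by exact_mod_cast hm
    have : 4 * ((m:ℝ) - 1) ≤ c * m * (m - 1) := by
      apply mul_le_mul_of_nonneg_right hcm; linarith
    have h4 : c * (M * 2) = c * m * (m - 1) := by rw [h1]; ring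
    rw [hd]; linarith
  have hcard : Fintype.card {i // ¬ P i} ≤ m - 1 := by
    have : Function.Injective (fun i : {i // ¬ P i} =>
        (⟨(i : Fin N) - 1, by
          have := i.2
          simp only [hP, not_or, not_le] at this
          omega⟩ : Fin (m - 1))) := by
      intro i j hij
      have hi := i.2
      have hj := j.2
      simp only [hP, ho, not_or, not_le, Fin.ext_iff] at hi hj
      simp only [Fin.mk.injEq] at hij
      ext
      omega
    simpa using Fintype.card_le_of_injective _ this
  have hne : Nonempty {i // ¬ P i} := by
    refine ⟨⟨⟨1, by omega⟩, ?_⟩⟩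
    simp [hP, ho]; omega
  have hlow : ∀ x ∈ Metric.ball q (ε / 2), ∀ y ∈ Metric.ball (0 : {i // ¬ P i} → ℂ) (ε / 2),
      ∀ z : Fin N → ℂ, (∀ i (h : P i), z i = x ⟨i, h⟩) →
        (∀ i (h : ¬ P i), z i = y ⟨i, h⟩ + x ⟨o, hPo⟩) →
      ENNReal.ofReal 2 ^ (-d) * K * ENNReal.ofReal ‖y‖ ^ (-d) ≤ F z := by
    intro x hx y hy z hz1 hz2
    rw [mem_ball_zero_iff] at hy
    rw [Metric.mem_ball, dist_pi_lt_iff (by positivity)] at hx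
    have hx0 : ‖x ⟨o, hPo⟩‖ < ε / 2 := by
      have := hx ⟨o, hPo⟩
      have h2 : p o = 0 := by
        rw [hp]; simp [ho]
      simpa [hq, h2, dist_eq_norm] using this
    have hzp : ∀ i, ‖z i - p i‖ < ε := by
      intro i
      by_cases h : P i
      · have := hx ⟨i, h⟩
        rw [hz1 i h]
        rw [dist_eq_norm] at this
        linarith
      · have h2 : p i = 0 := by
          simp only [hP, not_or, not_le] at h
          rw [hp]; simp [h.2]
        have h3 := norm_le_pi_norm y ⟨i, h⟩
        rw [hz2 i h, h2, sub_zero]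
        have := norm_add_le (y ⟨i, h⟩) (x ⟨o, hPo⟩)
        linarith
    have hzb : z ∈ Metric.ball p ε := by
      rw [Metric.mem_ball, dist_pi_lt_iff hε]
      simpa [dist_eq_norm] using hzp
    rw [hF, Set.indicator_of_mem hzb]
    have hzo : ∀ i : Fin N, (i : ℕ) < m → ‖z i - x ⟨o, hPo⟩‖ ≤ ‖y‖ := by
      intro i hi
      by_cases h : P i
      · have : i = o := by
          rw [hP] at h
          rcases h with h | h
          · exact h
          · omega
        subst this
        rw [hz1 _ hPo, sub_self, norm_zero]; exact norm_nonneg y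
      · rw [hz2 i h]
        simpa using norm_le_pi_norm y ⟨i, h⟩
    have hzn : ∀ i, ‖z i‖ ≤ N + 1 := by
      intro i
      have h1 : ‖p i‖ ≤ N := by
        rw [hp]
        dsimp only
        split_ifs
        · simp
        · simp only [Complex.norm_natCast]
          exact_mod_cast i.2.le
      have h2 := norm_add_le (z i - p i) (p i)
      rw [sub_add_cancel] at h2
      linarith [hzp i]
    have hsmall : ∀ i j : Fin N, (i : ℕ) < m → (j : ℕ) < m → ‖z i - z j‖ ≤ 2 * ‖y‖ := by
      intro i j hi hj
      have := norm_sub_le (z i - x ⟨o, hPo⟩) (z j - x ⟨o, hPo⟩)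
      rw [sub_sub_sub_cancel_right] at this
      linarith [hzo i hi, hzo j hj]
    have hbig : ∀ i j : Fin N, ‖z i - z j‖ ≤ 2 * (N + 1) := by
      intro i j
      have := norm_sub_le (z i) (z j)
      linarith [hzn i, hzn j]
    calc ENNReal.ofReal 2 ^ (-d) * K * ENNReal.ofReal ‖y‖ ^ (-d)
        = ENNReal.ofReal (2 * ‖y‖) ^ (-d) * K := by
          rw [ENNReal.ofReal_mul (by norm_num), ENNReal.mul_rpow_of_ne_top (by simp) (by simp)]
          ring
      _ ≤ (ENNReal.ofReal (2 * ‖y‖) ^ (-c)) ^ M * K := by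
          refine mul_le_mul_left ?_ _
          rw [← ENNReal.rpow_natCast, ← ENNReal.rpow_mul]
          refine ENNReal.rpow_le_rpow_of_exponent_ge ?_ (by linarith)
          rw [ENNReal.ofReal_le_one]
          linarith
      _ ≤ X z := by
          rw [hX]
          dsimp only
          rw [← Finset.prod_filter_mul_prod_filter_not _ (fun a : Fin N × Fin N => (a.2 : ℕ) < m)]
          refine mul_le_mul' ?_ ?_
          · rw [hM, ← Finset.prod_const]
            refine Finset.prod_le_prod' fun a ha => ?_
            simp only [Finset.mem_filter, Finset.mem_univ, true_and] at ha
            have h1 : (a.1 : ℕ) < a.2 := ha.1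
            exact mt_anti hc.le (ENNReal.ofReal_le_ofReal (hsmall _ _ (h1.trans ha.2) ha.2))
          · rw [hK, hM', ← Finset.prod_const]
            refine Finset.prod_le_prod' fun a ha => ?_
            exact mt_anti hc.le (ENNReal.ofReal_le_ofReal (hbig _ _))
  have hC : ENNReal.ofReal 2 ^ (-d) * K ≠ 0 := by
    refine mul_ne_zero ?_ hK0
    rw [ENNReal.ofReal_rpow_of_pos (by positivity)]
    simp only [ne_eq, ENNReal.ofReal_eq_zero, not_le]
    positivity
  have hinner : ∫⁻ y in Metric.ball (0 : {i // ¬ P i} → ℂ) (ε / 2),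
      ENNReal.ofReal 2 ^ (-d) * K * ENNReal.ofReal ‖y‖ ^ (-d) = ∞ := by
    rw [lintegral_const_mul _ (by fun_prop)]
    have : ∫⁻ y in Metric.ball (0 : {i // ¬ P i} → ℂ) (ε / 2), ENNReal.ofReal ‖y‖ ^ (-d) = ∞ := by
      by_contra h
      rw [← ne_eq, mt_norm _ _ _ (by positivity), Module.finrank_pi_fintype] at h
      simp only [Complex.finrank_real_complex, Finset.sum_const, smul_eq_mul, Finset.card_univ] at h
      have h2 : ((Fintype.card {i // ¬ P i} * 2 : ℕ) : ℝ) ≤ (((m - 1) * 2 : ℕ) : ℝ) := by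
        exact_mod_cast Nat.mul_le_mul_right 2 hcard
      have h3 := h.trans_le h2
      rw [Nat.cast_mul, Nat.cast_sub (by omega)] at h3
      rw [hd] at h3
      push_cast at h3
      linarith
    rw [this, ENNReal.mul_top hC]
  refine top_le_iff.1 ?_
  calc (∞ : ℝ≥0∞) = ∫⁻ x in Metric.ball q (ε / 2), ∞ := by
        rw [setLIntegral_const, ENNReal.top_mul]
        exact (Metric.measure_ball_pos volume q (by positivity)).ne'
    _ ≤ _ := by
        refine le_trans ?_ (setLIntegral_le_lintegral (Metric.ball q (ε / 2)) _)
        refine setLIntegral_mono' measurableSet_ball fun x hx => ?_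
        rw [← hinner]
        refine le_trans ?_ (setLIntegral_le_lintegral (Metric.ball 0 (ε / 2)) _)
        refine setLIntegral_mono' measurableSet_ball fun y hy => ?_
        refine hlow x hx y hy _ ?_ ?_
        · intro i h; simp [h]
        · intro i h; simp [h, hPo]

theorem mt_mult (N m : ℕ) (hm : 2 ≤ m) (w : ℂ) :
    (Finset.univ.filter fun i : Fin N =>
      (if (i : ℕ) < m then (0:ℂ) else ((i : ℕ) : ℂ)) = w).card ≤ m := by
  by_cases hw : w = 0
  · subst hw
    have := Finset.card_le_card_of_injOn (s := Finset.univ.filter fun i : Fin N =>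
      (if (i : ℕ) < m then (0:ℂ) else ((i : ℕ) : ℂ)) = 0) (t := Finset.range m)
      (fun i => (i : ℕ)) ?_ (fun a _ b _ h => Fin.ext h)
    · simpa using this
    · intro i hi
      simp only [Finset.coe_filter, Finset.mem_univ, true_and, Set.mem_ofPred_eq] at hi
      simp only [Finset.coe_range, Set.mem_Iio]
      by_contra h
      rw [if_neg h, Nat.cast_eq_zero] at hi
      omega
  · refine le_trans (Finset.card_le_one.2 ?_) (by omega : 1 ≤ m)
    intro a ha b hb
    simp only [Finset.mem_filter, Finset.mem_univ, true_and] at ha hb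
    split_ifs at ha with h1
    · exact (hw ha.symm).elim
    split_ifs at hb with h2
    · exact (hw hb.symm).elim
    exact Fin.ext (by exact_mod_cast ha.trans hb.symm)



/-- **Uniform Gibbs polystability of ℙ¹.** Let `N ≥ 4`, `k = (N-1)/2`, `γ > 0`. The function
`z ↦ ∏_{i<j} |z_i - z_j| ^ (-2γ/k)` is integrable near every GIT-semistable point of `ℂ^N`
(i.e. every `p` whose maximal coordinate multiplicity is at most `⌊N/2⌋`) if and only if
`γ < (N-1)/⌊N/2⌋`; this threshold equals `2` for odd `N` and `2(1-1/N)` for even `N`. -/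
theorem reduced_microscopic_threshold_P1 (N : ℕ) (hN : 4 ≤ N) (γ : ℝ) (hγ : 0 < γ) :
    ((∀ p : Fin N → ℂ,
        (∀ w : ℂ, (Finset.univ.filter fun i => p i = w).card ≤ N / 2) →
        ∃ s ∈ 𝓝 p,
          (∫⁻ z in s,
            ∏ a ∈ Finset.univ.filter (fun a : Fin N × Fin N => a.1 < a.2),
              (ENNReal.ofReal ‖z a.1 - z a.2‖) ^ (-(2 * γ / (((N : ℝ) - 1) / 2))) ∂volume) ≠ ∞) ↔
      γ < ((N : ℝ) - 1) / ((N / 2 : ℕ) : ℝ)) ∧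
    (Odd N → ((N : ℝ) - 1) / ((N / 2 : ℕ) : ℝ) = 2) ∧
    (Even N → ((N : ℝ) - 1) / ((N / 2 : ℕ) : ℝ) = 2 * (1 - 1 / (N : ℝ))) := by
  have hm : 2 ≤ N / 2 := by omega
  have hmr : (0:ℝ) < ((N / 2 : ℕ) : ℝ) := by exact_mod_cast (by omega : 0 < N / 2)
  have hNr : (4:ℝ) ≤ N := by exact_mod_cast hN
  refine ⟨?_, ?_, ?_⟩
  · set c : ℝ := 2 * γ / (((N : ℝ) - 1) / 2) with hcdef
    have hN1 : (0:ℝ) < (N : ℝ) - 1 := by linarith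
    have hc : 0 < c := by positivity
    have hiff : γ < ((N : ℝ) - 1) / ((N / 2 : ℕ) : ℝ) ↔ c * ((N / 2 : ℕ) : ℝ) < 4 := by
      have : c * ((N / 2 : ℕ) : ℝ) = 4 * (γ * ((N / 2 : ℕ) : ℝ)) / ((N : ℝ) - 1) := by
        rw [hcdef]; field_simp; ring
      rw [this, lt_div_iff₀ hmr, div_lt_iff₀ hN1]
      constructor <;> intro h <;> linarith
    rw [hiff]
    constructor
    · intro h
      by_contra hcm
      obtain ⟨s, hs, hfin⟩ := h (fun i : Fin N => if (i : ℕ) < N / 2 then 0 else ((i : ℕ) : ℂ))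
        (mt_mult N (N / 2) hm)
      exact hfin (mt_nec N (N / 2) hm (Nat.div_le_self _ _) c hc (not_lt.1 hcm) _ rfl s hs)
    · intro hcm p hp
      exact mt_suff N (by omega) c hc (N / 2) hcm p hp
  · rintro ⟨k, hk⟩
    have h2 : N / 2 = k := by omega
    rw [h2] at hmr ⊢
    rw [hk]; push_cast; field_simp; ring
  · rintro ⟨k, hk⟩
    have h2 : N / 2 = k := by omega
    rw [h2] at hmr ⊢
    rw [hk]; push_cast; field_simp; ring
end

section
/- Let m ≥ 1, let w₁,…,w_m ∈ (0,1) with V := 2 − Σ_{l=1}^m w_l > 0, let q₁,…,q_m ∈ ℂ be distinct points, let N ≥ 2 be an integer, set k := (N−1)/V, and let γ > 0. Then the function z ↦ ∏_{1≤i<j≤N} |z_i − z_j|^{−2γ/k} · ∏_{i=1}^N ∏_{l=1}^m |z_i − q_l|^{−2w_l} is locally integrable on ℂ^N if and only if γ < min{ 2(1 − 1/N)/V , min_{1≤l≤m} 2(1 − w_l)/V }. -/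
open MeasureTheory Topology
open scoped ENNReal Classical

/-- Integrability of a power of the norm on a ball. -/
lemma lintegral_norm_ball_iff {E : Type*} [NormedAddCommGroup E] [NormedSpace ℝ E]
    [FiniteDimensional ℝ E] [Nontrivial E] [MeasurableSpace E] [BorelSpace E]
    (μ : Measure E) [μ.IsAddHaarMeasure] (x : E) (r D : ℝ) (hr : 0 < r) :
    (∫⁻ z in Metric.ball x r, (ENNReal.ofReal ‖z - x‖) ^ (-D) ∂μ) < ∞ ↔
      D < Module.finrank ℝ E := by
  have h1 : (∫⁻ z in Metric.ball x r, (ENNReal.ofReal ‖z - x‖) ^ (-D) ∂μ) =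
      ∫⁻ z in Metric.ball (0 : E) r, (ENNReal.ofReal ‖z‖) ^ (-D) ∂μ := by
    have hp := measurePreserving_sub_right μ x
    have := hp.setLIntegral_comp_preimage_emb (measurableEmbedding_subRight x)
      (fun z => (ENNReal.ofReal ‖z‖) ^ (-D)) (Metric.ball (0 : E) r)
    rw [← this]
    congr 2
    ext z; simp [dist_eq_norm]
  have h2 : (∫⁻ z in Metric.ball (0 : E) r, (ENNReal.ofReal ‖z‖) ^ (-D) ∂μ) =
      ∫⁻ z in Metric.ball (0 : E) r, ‖(‖z‖ ^ (-D) : ℝ)‖ₑ ∂μ := by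
    refine lintegral_congr_ae (ae_restrict_of_ae ?_)
    have : ∀ᵐ z ∂μ, z ≠ 0 := by
      simp [ae_iff]
    filter_upwards [this] with z hz
    rw [ENNReal.ofReal_rpow_of_pos (by simpa using hz), Real.enorm_of_nonneg (by positivity)]
  have hdim : 0 < Module.finrank ℝ E := Module.finrank_pos
  have h3 := integrableOn_fun_norm_addHaar (E := E) μ (f := fun y : ℝ => y ^ (-D)) (r := r)
  have h4 : IntegrableOn (fun y : ℝ ↦ y ^ (Module.finrank ℝ E - 1) • y ^ (-D)) (Set.Ioo 0 r) ↔
      IntegrableOn (fun y : ℝ ↦ y ^ ((Module.finrank ℝ E : ℝ) - 1 - D)) (Set.Ioo 0 r) := by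
    refine integrableOn_congr_fun ?_ measurableSet_Ioo
    intro y hy
    simp only [smul_eq_mul]
    rw [← Real.rpow_natCast, ← Real.rpow_add hy.1, Nat.cast_sub hdim]
    simp [sub_eq_add_neg]
  rw [h4, intervalIntegral.integrableOn_Ioo_rpow_iff hr] at h3
  rw [h1, h2]
  have h5 : IntegrableOn (fun z : E => (‖z‖ ^ (-D) : ℝ)) (Metric.ball 0 r) μ ↔
      (∫⁻ z in Metric.ball (0 : E) r, ‖(‖z‖ ^ (-D) : ℝ)‖ₑ ∂μ) < ∞ := by
    unfold IntegrableOn Integrable HasFiniteIntegral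
    refine and_iff_right ?_
    exact (Measurable.pow_const measurable_norm _).aestronglyMeasurable
  rw [← h5, h3]
  constructor <;> intro h <;> linarith

/-- Tonelli, splitting off the coordinate `i`. -/
lemma lintegral_pi_insertNth {n : ℕ} (ν : Measure ℂ) [SigmaFinite ν] (i : Fin (n + 1))
    (F : (Fin (n + 1) → ℂ) → ℝ≥0∞) (hF : Measurable F) :
    ∫⁻ z, F z ∂(Measure.pi fun _ => ν) =
      ∫⁻ x, ∫⁻ y : Fin n → ℂ, F (i.insertNth x y) ∂(Measure.pi fun _ => ν) ∂ν := by
  have h := (measurePreserving_piFinSuccAbove (fun _ : Fin (n + 1) => ν) i).symm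
  rw [← h.lintegral_comp hF, lintegral_prod]
  · rfl
  · exact (hF.comp (MeasurableEquiv.measurable _)).aemeasurable

lemma lintegral_pi_prod (n : ℕ) (ν : Measure ℂ) [SigmaFinite ν]
    (f : ℂ → ℝ≥0∞) (hf : Measurable f) :
    ∫⁻ z : Fin n → ℂ, ∏ i, f (z i) ∂(Measure.pi fun _ => ν) = (∫⁻ x, f x ∂ν) ^ n := by
  induction n with
  | zero => simp
  | succ n ih =>
    rw [lintegral_pi_insertNth ν 0]
    · have : ∀ x : ℂ, ∫⁻ y : Fin n → ℂ, ∏ i, f ((0 : Fin (n + 1)).insertNth (α := fun _ => ℂ) x y i)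
            ∂(Measure.pi fun _ => ν) = f x * (∫⁻ x, f x ∂ν) ^ n := by
        intro x
        simp only [Fin.prod_univ_succ, Fin.insertNth_zero, Fin.cons_zero, Fin.cons_succ, cast_eq]
        rw [lintegral_const_mul, ih]
        fun_prop
      simp_rw [this]
      rw [lintegral_mul_const _ hf, pow_succ, mul_comm]
    · fun_prop

lemma rpow_anti {x y : ℝ≥0∞} (h : x ≤ y) {c : ℝ} (hc : 0 ≤ c) : y ^ (-c) ≤ x ^ (-c) := by
  rw [ENNReal.rpow_neg, ENNReal.rpow_neg, ENNReal.inv_le_inv]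
  exact ENNReal.rpow_le_rpow h hc

/-- Local integrability of a product of powers with distinct poles. -/
lemma rho_integrable (m : ℕ) (hm : 0 < m) (q : Fin m → ℂ) (hq : Function.Injective q) (a : Fin m → ℝ)
    (ha : ∀ l, 0 < a l ∧ a l < 2) (R : ℝ) :
    ∫⁻ x in Metric.ball (0 : ℂ) R, ∏ l, (ENNReal.ofReal ‖x - q l‖) ^ (-(a l)) < ∞ := by
  set C : Fin m → ℝ≥0∞ := fun l => ∏ l' ∈ Finset.univ.erase l,
    (ENNReal.ofReal (‖q l - q l'‖ / 2)) ^ (-(a l')) with hC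
  have hCtop : ∀ l, C l < ∞ := by
    intro l
    refine ENNReal.prod_lt_top fun l' hl' => ?_
    have : 0 < ‖q l - q l'‖ := by
      rw [norm_pos_iff, sub_ne_zero]
      exact fun h => (Finset.ne_of_mem_erase hl') (hq h).symm
    rw [ENNReal.ofReal_rpow_of_pos (by positivity)]
    exact ENNReal.ofReal_lt_top
  have hle : ∀ x : ℂ, ∏ l, (ENNReal.ofReal ‖x - q l‖) ^ (-(a l)) ≤
      ∑ l, C l * (ENNReal.ofReal ‖x - q l‖) ^ (-(a l)) := by
    intro x
    have : Nonempty (Fin m) := Fin.pos_iff_nonempty.mp hm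
    obtain ⟨l, hl⟩ := Finite.exists_min (fun l => ‖x - q l‖)
    refine le_trans ?_ (Finset.single_le_sum (f := fun l => C l * (ENNReal.ofReal ‖x - q l‖) ^ (-(a l)))
      (fun _ _ => zero_le) (Finset.mem_univ l))
    rw [← Finset.prod_erase_mul _ _ (Finset.mem_univ l)]
    refine mul_le_mul' (Finset.prod_le_prod' fun l' hl' => ?_) le_rfl
    apply rpow_anti _ (ha l').1.le
    apply ENNReal.ofReal_le_ofReal
    have h1 := hl l'
    have h2 := norm_sub_le (x - q l') (x - q l)
    have h3 : x - q l' - (x - q l) = q l - q l' := by ring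
    rw [h3] at h2
    linarith
  refine (lintegral_mono hle).trans_lt ?_
  rw [lintegral_finsetSum]
  · refine ENNReal.sum_lt_top.2 fun l _ => ?_
    rw [lintegral_const_mul _ (by fun_prop)]
    refine ENNReal.mul_lt_top (hCtop l) ?_
    have hsub : Metric.ball (0 : ℂ) R ⊆ Metric.ball (q l) (|R| + ‖q l‖ + 1) := by
      intro y hy
      simp only [Metric.mem_ball, dist_eq_norm, sub_zero] at hy ⊢
      have := norm_sub_le y (q l)
      have := le_abs_self R
      linarith
    refine (lintegral_mono_set hsub).trans_lt ?_
    rw [lintegral_norm_ball_iff _ _ _ _ (by positivity)]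
    simpa using (ha l).2
  · intro l _
    fun_prop

lemma prod_sym {N : ℕ} (f : Fin N → Fin N → ℝ≥0∞) (hf : ∀ i j, f i j = f j i) :
    ∏ i, ∏ j ∈ Finset.univ.erase i, f i j =
      ∏ a ∈ Finset.univ.filter (fun a : Fin N × Fin N => a.1 < a.2), (f a.1 a.2) ^ 2 := by
  have h1 : ∏ i, ∏ j ∈ Finset.univ.erase i, f i j =
      ∏ a ∈ Finset.univ.filter (fun a : Fin N × Fin N => a.1 ≠ a.2), f a.1 a.2 := by
    rw [Finset.prod_filter, Fintype.prod_prod_type]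
    refine Finset.prod_congr rfl fun i _ => ?_
    rw [← Finset.prod_filter]
    refine Finset.prod_congr ?_ fun _ _ => rfl
    ext j; simp [eq_comm]
  have h2 : Finset.univ.filter (fun a : Fin N × Fin N => a.1 ≠ a.2) =
      Finset.univ.filter (fun a : Fin N × Fin N => a.1 < a.2) ∪
      Finset.univ.filter (fun a : Fin N × Fin N => a.2 < a.1) := by
    ext a; simp [lt_or_lt_iff_ne]
  rw [h1, h2, Finset.prod_union]
  · have : ∏ a ∈ Finset.univ.filter (fun a : Fin N × Fin N => a.2 < a.1), f a.1 a.2 =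
        ∏ a ∈ Finset.univ.filter (fun a : Fin N × Fin N => a.1 < a.2), f a.1 a.2 := by
      refine Finset.prod_bij' (fun a _ => a.swap) (fun a _ => a.swap) ?_ ?_ ?_ ?_ ?_ <;>
        simp
      intro a b _; exact hf a b
    rw [this, ← Finset.prod_mul_distrib]
    simp only [sq]
  · rw [Finset.disjoint_filter]
    intro a _ h; exact not_lt.2 h.le

lemma star_integrable {n : ℕ} (i : Fin (n + 1)) (R s : ℝ) (hs : s < 1)
    (f : ℂ → ℝ≥0∞) (hf : Measurable f) (hfi : ∫⁻ x in Metric.ball (0 : ℂ) R, f x < ∞) :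
    ∫⁻ z : Fin (n + 1) → ℂ, f (z i) * ∏ j ∈ Finset.univ.erase i,
      (ENNReal.ofReal ‖z i - z j‖) ^ (-(2 * s))
      ∂(Measure.pi fun _ => volume.restrict (Metric.ball (0 : ℂ) R)) < ∞ := by
  rw [lintegral_pi_insertNth _ i _ (by fun_prop)]
  set K : ℝ≥0∞ := ∫⁻ z in Metric.ball (0 : ℂ) (|R| + |R| + 1), (ENNReal.ofReal ‖z - 0‖) ^ (-(2 * s))
    with hK
  have hKtop : K < ∞ := by
    rw [hK, lintegral_norm_ball_iff _ _ _ _ (by positivity)]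
    simp; linarith
  have hinner : ∀ x ∈ Metric.ball (0 : ℂ) R, ∫⁻ y : Fin n → ℂ,
      f ((i.insertNth (α := fun _ => ℂ) x y) i) * ∏ j ∈ Finset.univ.erase i,
      (ENNReal.ofReal ‖(i.insertNth (α := fun _ => ℂ) x y) i -
        (i.insertNth (α := fun _ => ℂ) x y) j‖) ^ (-(2 * s))
      ∂(Measure.pi fun _ => volume.restrict (Metric.ball (0 : ℂ) R)) ≤ f x * K ^ n := by
    intro x hx
    have h1 : ∀ y : Fin n → ℂ, f ((i.insertNth (α := fun _ => ℂ) x y) i) *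
        ∏ j ∈ Finset.univ.erase i,
        (ENNReal.ofReal ‖(i.insertNth (α := fun _ => ℂ) x y) i -
          (i.insertNth (α := fun _ => ℂ) x y) j‖) ^ (-(2 * s)) =
        f x * ∏ j, (ENNReal.ofReal ‖y j - x‖) ^ (-(2 * s)) := by
      intro y
      have : Finset.univ.erase i = Finset.univ.map (Fin.succAboveEmb i) := by
        ext j
        simp only [Finset.mem_erase, Finset.mem_univ, and_true, Finset.mem_map, true_and,
          Fin.succAboveEmb_apply]
        exact Fin.exists_succAbove_eq_iff.symm
      rw [this, Finset.prod_map]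
      simp [norm_sub_rev x]
    simp_rw [h1]
    rw [lintegral_const_mul _ (by fun_prop),
      lintegral_pi_prod n _ (fun u => (ENNReal.ofReal ‖u - x‖) ^ (-(2 * s))) (by fun_prop)]
    gcongr
    have hsub : Metric.ball (0 : ℂ) R ⊆ Metric.ball x (|R| + |R| + 1) := by
      intro y hy
      simp only [Metric.mem_ball, dist_eq_norm, sub_zero] at hx hy ⊢
      have := norm_sub_le y x
      have := le_abs_self R
      linarith
    refine (lintegral_mono_set hsub).trans (le_of_eq ?_)
    have := (measurePreserving_sub_right volume x).setLIntegral_comp_preimage_emb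
      (measurableEmbedding_subRight x)
      (fun z : ℂ => (ENNReal.ofReal ‖z - 0‖) ^ (-(2 * s))) (Metric.ball (0 : ℂ) (|R| + |R| + 1))
    rw [hK, ← this]
    simp only [sub_zero]
    congr 2
    ext z; simp [dist_eq_norm]
  refine (setLIntegral_mono' measurableSet_ball hinner).trans_lt ?_
  rw [lintegral_mul_const _ hf]
  exact ENNReal.mul_lt_top hfi (ENNReal.pow_lt_top hKtop)

lemma sufficiency (m : ℕ) (hm : 0 < m) (w : Fin m → ℝ) (hw : ∀ l, w l ∈ Set.Ioo (0 : ℝ) 1)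
    (q : Fin m → ℂ) (hq : Function.Injective q) (n : ℕ) (c : ℝ) (hc : 0 < c)
    (h1 : c * (n + 1) < 4) (h2 : ∀ l, c * n < 4 * (1 - w l)) (R : ℝ) :
    ∫⁻ z in Metric.ball (0 : Fin (n + 1) → ℂ) R,
          (∏ a ∈ Finset.univ.filter (fun a : Fin (n + 1) × Fin (n + 1) => a.1 < a.2),
            (ENNReal.ofReal ‖z a.1 - z a.2‖) ^ (-c)) *
          ∏ i, ∏ l, (ENNReal.ofReal ‖z i - q l‖) ^ (-(2 * w l)) < ∞ := by
  obtain ⟨s, hs1, hs0, hsN, hsw⟩ : ∃ s : ℝ, s < 1 ∧ 0 < s ∧ c * (n + 1) < 4 * s ∧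
      ∀ l, c * n < 4 * (s * (1 - w l)) := by
    have e0 : ∀ᶠ s : ℝ in 𝓝[<] 1, s < 1 := self_mem_nhdsWithin
    have e1 : ∀ᶠ s : ℝ in 𝓝[<] 1, 0 < s := nhdsWithin_le_nhds (lt_mem_nhds one_pos)
    have e2 : ∀ᶠ s : ℝ in 𝓝[<] 1, c * (n + 1) < 4 * s := by
      refine nhdsWithin_le_nhds (ContinuousAt.eventually_lt (by fun_prop) (by fun_prop) ?_)
      simpa using h1
    have e3 : ∀ᶠ s : ℝ in 𝓝[<] 1, ∀ l, c * n < 4 * (s * (1 - w l)) := by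
      rw [Filter.eventually_all]
      intro l
      refine nhdsWithin_le_nhds (ContinuousAt.eventually_lt (by fun_prop) (by fun_prop) ?_)
      simpa using h2 l
    exact (e0.and (e1.and (e2.and e3))).exists
  obtain ⟨b, hb⟩ : ∃ b, b = c / (4 * s) := ⟨_, rfl⟩
  obtain ⟨t, ht⟩ : ∃ t, t = 1 - b * (n + 1) := ⟨_, rfl⟩
  have hb0 : 0 < b := by rw [hb]; positivity
  have hbs : b * (4 * s) = c := by rw [hb]; field_simp
  have ht0 : 0 < t := by
    have : b * (n + 1) < 1 := by
      rw [hb, div_mul_eq_mul_div, div_lt_one (by positivity)]; exact hsN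
    linarith
  have hBw : ∀ l, w l < t + b := by
    intro l
    have : b * n < 1 - w l := by
      rw [hb, div_mul_eq_mul_div, div_lt_iff₀ (by positivity)]
      have := hsw l
      linarith
    rw [ht]; linarith
  obtain ⟨A, hA⟩ : ∃ A, A = 1 / (t + b) := ⟨_, rfl⟩
  have hA0 : 0 < A := by rw [hA]; positivity
  have hAB : A * t + A * b = 1 := by rw [hA]; field_simp
  set ρ : ℂ → ℝ≥0∞ := fun x => ∏ l, (ENNReal.ofReal ‖x - q l‖) ^ (-(2 * w l)) with hρ
  set f : ℂ → ℝ≥0∞ := fun x => (ρ x) ^ A with hf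
  have hfm : Measurable f := by rw [hf, hρ]; fun_prop
  have hfi : ∫⁻ x in Metric.ball (0 : ℂ) R, f x < ∞ := by
    have := rho_integrable m hm q hq (fun l => 2 * w l * A) (fun l => ⟨?_, ?_⟩) R
    · convert this using 3 with x
      simp only [hf, hρ]
      rw [← ENNReal.prod_rpow_of_nonneg hA0.le]
      refine Finset.prod_congr rfl fun l _ => ?_
      rw [← ENNReal.rpow_mul]; congr 1; ring
    · have := (hw l).1; positivity
    · have : w l * A < 1 := by
        rw [hA, mul_one_div, div_lt_one (by positivity)]; exact hBw l
      linarith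
  set G0 : (Fin (n + 1) → ℂ) → ℝ≥0∞ := fun z => ∏ i, f (z i) with hG0
  set G : Fin (n + 1) → (Fin (n + 1) → ℂ) → ℝ≥0∞ := fun i z => f (z i) *
    ∏ j ∈ Finset.univ.erase i, (ENNReal.ofReal ‖z i - z j‖) ^ (-(2 * s)) with hG
  have hball : (volume : Measure (Fin (n + 1) → ℂ)).restrict (Metric.ball 0 R) =
      Measure.pi fun _ => volume.restrict (Metric.ball (0 : ℂ) R) := by
    rcases le_or_gt R 0 with h | h
    · simp only [Metric.ball_eq_empty.2 h, Measure.restrict_empty]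
      symm
      rw [← Measure.measure_univ_eq_zero, Measure.pi_univ]
      simp
    · rw [ball_pi _ h, volume_pi, Measure.restrict_pi_pi]; rfl
  have hle : ∀ z : Fin (n + 1) → ℂ,
      (∏ a ∈ Finset.univ.filter (fun a : Fin (n + 1) × Fin (n + 1) => a.1 < a.2),
            (ENNReal.ofReal ‖z a.1 - z a.2‖) ^ (-c)) *
          ∏ i, ρ (z i) ≤ G0 z + ∑ i, G i z := by
    intro z
    have e1 : ∏ i, ρ (z i) = (∏ i, f (z i)) ^ t * ∏ i, (f (z i)) ^ b := by
      rw [← ENNReal.prod_rpow_of_nonneg ht0.le, ← Finset.prod_mul_distrib]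
      refine Finset.prod_congr rfl fun i _ => ?_
      simp only [hf]
      rw [← ENNReal.rpow_mul, ← ENNReal.rpow_mul, ← ENNReal.rpow_add_of_nonneg _ _ (by positivity)
        (by positivity), hAB, ENNReal.rpow_one]
    have e2 : (∏ a ∈ Finset.univ.filter (fun a : Fin (n + 1) × Fin (n + 1) => a.1 < a.2),
            (ENNReal.ofReal ‖z a.1 - z a.2‖) ^ (-c)) =
        ∏ i, (∏ j ∈ Finset.univ.erase i, (ENNReal.ofReal ‖z i - z j‖) ^ (-(2 * s))) ^ b := by
      have := prod_sym (fun i j => ((ENNReal.ofReal ‖z i - z j‖) ^ (-(2 * s))) ^ b)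
        (fun i j => by simp only [norm_sub_rev])
      simp_rw [← ENNReal.prod_rpow_of_nonneg hb0.le]
      rw [this]
      refine Finset.prod_congr rfl fun a _ => ?_
      rw [← ENNReal.rpow_natCast, ← ENNReal.rpow_mul, ← ENNReal.rpow_mul]
      congr 1
      rw [← hbs]; push_cast; ring
    set M := G0 z + ∑ i, G i z with hM
    calc _ = (G0 z) ^ t * ∏ i, (G i z) ^ b := by
          rw [e1, e2]
          simp only [hG0, hG, ENNReal.mul_rpow_of_nonneg _ _ hb0.le, Finset.prod_mul_distrib]
          ring
      _ ≤ M ^ t * ∏ i : Fin (n + 1), M ^ b := by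
          refine mul_le_mul' (ENNReal.rpow_le_rpow le_self_add ht0.le)
            (Finset.prod_le_prod' fun i _ => ENNReal.rpow_le_rpow ?_ hb0.le)
          exact (Finset.single_le_sum (f := fun i => G i z) (fun _ _ => zero_le)
            (Finset.mem_univ i)).trans le_add_self
      _ = M := by
          rw [Finset.prod_const, ← ENNReal.rpow_natCast, ← ENNReal.rpow_mul,
            ← ENNReal.rpow_add_of_nonneg _ _ ht0.le (by positivity)]
          have : t + b * ((Finset.univ : Finset (Fin (n + 1))).card : ℝ) = 1 := by
            simp [ht]
          rw [this, ENNReal.rpow_one]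
  refine (lintegral_mono hle).trans_lt ?_
  have hGm : ∀ i, Measurable (G i) := by
    intro i; simp only [hG]; fun_prop
  rw [hball, lintegral_add_right _ (by fun_prop), lintegral_finsetSum _ (fun i _ => hGm i)]
  refine ENNReal.add_lt_top.2 ⟨?_, ENNReal.sum_lt_top.2 fun i _ => ?_⟩
  · rw [lintegral_pi_prod _ _ f hfm]
    exact ENNReal.pow_lt_top hfi
  · exact star_integrable i R s hs1 f hfm hfi

lemma pi_ball_restrict (n : ℕ) (R : ℝ) :
    (volume : Measure (Fin n → ℂ)).restrict (Metric.ball 0 R) ≤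
      Measure.pi fun _ => volume.restrict (Metric.ball (0 : ℂ) R) := by
  rcases le_or_gt R 0 with h | h
  · simp only [Metric.ball_eq_empty.2 h, Measure.restrict_empty]
    exact Measure.zero_le _
  · rw [ball_pi _ h, volume_pi, Measure.restrict_pi_pi]; rfl

lemma card_pairs (n : ℕ) :
    2 * (Finset.univ.filter (fun a : Fin (n + 1) × Fin (n + 1) => a.1 < a.2)).card
      = n * (n + 1) := by
  have := prod_sym (N := n + 1) (fun _ _ => 2) (fun _ _ => rfl)
  simp only [Finset.prod_const, Finset.card_erase_of_mem (Finset.mem_univ _), Finset.card_univ,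
    Fintype.card_fin, Nat.add_sub_cancel, ← pow_mul] at this
  have h : (2 : ℕ) ^ (n * (n + 1)) = 2 ^ (2 * (Finset.univ.filter
    (fun a : Fin (n + 1) × Fin (n + 1) => a.1 < a.2)).card) := by exact_mod_cast this
  exact (Nat.pow_right_injective le_rfl h).symm

lemma rpow_neg_mul {x : ℝ≥0∞} {u v : ℝ} (hu : 0 ≤ u) (hv : 0 ≤ v) :
    x ^ (-u) * x ^ (-v) = x ^ (-(u + v)) := by
  simp only [ENNReal.rpow_neg, ← ENNReal.inv_rpow]
  rw [ENNReal.rpow_add_of_nonneg _ _ hu hv]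

lemma pairs_lower (n : ℕ) (c : ℝ) (hc : 0 < c) : ∃ K : ℝ≥0∞, K ≠ 0 ∧
    ∀ (z : Fin (n + 1) → ℂ) (a : ℂ) (δ : ℝ), (∀ i, ‖z i - a‖ ≤ δ) →
      K * (ENNReal.ofReal δ) ^ (-(c * (n * (n + 1) / 2))) ≤
      ∏ a ∈ Finset.univ.filter (fun a : Fin (n + 1) × Fin (n + 1) => a.1 < a.2),
            (ENNReal.ofReal ‖z a.1 - z a.2‖) ^ (-c) := by
  obtain ⟨P, hP⟩ : ∃ P, P = (Finset.univ.filter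
    (fun a : Fin (n + 1) × Fin (n + 1) => a.1 < a.2)).card := ⟨_, rfl⟩
  have hPc : (P : ℝ) = n * (n + 1) / 2 := by
    have := card_pairs n
    rw [← hP] at this
    have : (2 : ℝ) * P = n * (n + 1) := by exact_mod_cast this
    linarith
  refine ⟨((2 : ℝ≥0∞) ^ (-c)) ^ P, ?_, ?_⟩
  · refine pow_ne_zero _ ?_
    simp [ENNReal.rpow_eq_zero_iff]
  · intro z a δ h
    have h1 : ∀ p ∈ Finset.univ.filter (fun a : Fin (n + 1) × Fin (n + 1) => a.1 < a.2),
        (2 * ENNReal.ofReal δ) ^ (-c) ≤ (ENNReal.ofReal ‖z p.1 - z p.2‖) ^ (-c) := by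
      intro p _
      refine rpow_anti ?_ hc.le
      have : (2 : ℝ≥0∞) = ENNReal.ofReal 2 := by simp
      rw [this, ← ENNReal.ofReal_mul (by norm_num)]
      apply ENNReal.ofReal_le_ofReal
      have e1 := h p.1
      have e2 := h p.2
      have e3 := norm_sub_le (z p.1 - a) (z p.2 - a)
      rw [sub_sub_sub_cancel_right] at e3
      linarith
    refine le_trans (le_of_eq ?_) (Finset.prod_le_prod' h1)
    rw [Finset.prod_const, ← hP, ENNReal.mul_rpow_of_ne_top (by simp) (by simp), mul_pow]
    congr 1
    rw [← ENNReal.rpow_natCast (_ ^ (-c)) P, ← ENNReal.rpow_mul, hPc]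
    congr 1; ring

lemma const_lower {x : ℂ} {p b : ℂ} {u : ℝ} (hu : 0 ≤ u) (hx : ‖x - p‖ ≤ 1) :
    (ENNReal.ofReal (1 + ‖p - b‖)) ^ (-u) ≤ (ENNReal.ofReal ‖x - b‖) ^ (-u) := by
  refine rpow_anti (ENNReal.ofReal_le_ofReal ?_) hu
  have := norm_add_le (x - p) (p - b)
  rw [sub_add_sub_cancel] at this
  linarith

lemma const_ne {b : ℝ} {u : ℝ} : (ENNReal.ofReal (1 + |b|)) ^ (-u) ≠ 0 := by
  have : 0 < 1 + |b| := by positivity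
  rw [ENNReal.ofReal_rpow_of_pos this]
  simp only [ne_eq, ENNReal.ofReal_eq_zero, not_le]
  positivity

lemma necessity_w (m : ℕ) (w : Fin m → ℝ) (hw : ∀ l, w l ∈ Set.Ioo (0 : ℝ) 1)
    (q : Fin m → ℂ) (n : ℕ) (c : ℝ) (hc : 0 < c) (l : Fin m)
    (s : Set (Fin (n + 1) → ℂ)) (hs : s ∈ 𝓝 (fun _ => q l))
    (h : ∫⁻ z in s,
          (∏ a ∈ Finset.univ.filter (fun a : Fin (n + 1) × Fin (n + 1) => a.1 < a.2),
            (ENNReal.ofReal ‖z a.1 - z a.2‖) ^ (-c)) *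
          ∏ i, ∏ l, (ENNReal.ofReal ‖z i - q l‖) ^ (-(2 * w l)) ≠ ∞) :
    c * n < 4 * (1 - w l) := by
  obtain ⟨r', hr', hsub'⟩ := Metric.mem_nhds_iff.1 hs
  obtain ⟨r, hr, hr1, hsub⟩ : ∃ r : ℝ, 0 < r ∧ r ≤ 1 ∧ Metric.ball (fun _ => q l) r ⊆ s :=
    ⟨min r' 1, by positivity, min_le_right _ _,
      (Metric.ball_subset_ball (min_le_left _ _)).trans hsub'⟩
  obtain ⟨K, hK, hpl⟩ := pairs_lower n c hc
  obtain ⟨p, hp⟩ : ∃ p : Fin (n + 1) → ℂ, p = fun _ => q l := ⟨_, rfl⟩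
  rw [← hp] at hsub
  set C : ℝ≥0∞ := ∏ l' ∈ Finset.univ.erase l,
    (ENNReal.ofReal (1 + |‖q l - q l'‖|)) ^ (-(2 * w l')) with hC
  have hC0 : C ≠ 0 := Finset.prod_ne_zero_iff.2 fun l' _ => const_ne
  have hwl := (hw l).1
  set D : ℝ := c * (n * (n + 1) / 2) + 2 * w l * (n + 1 : ℕ) with hD
  have hle : ∀ z ∈ Metric.ball p r, (K * C ^ (n + 1)) * (ENNReal.ofReal ‖z - p‖) ^ (-D) ≤
      (∏ a ∈ Finset.univ.filter (fun a : Fin (n + 1) × Fin (n + 1) => a.1 < a.2),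
            (ENNReal.ofReal ‖z a.1 - z a.2‖) ^ (-c)) *
          ∏ i, ∏ l, (ENNReal.ofReal ‖z i - q l‖) ^ (-(2 * w l)) := by
    intro z hz
    rw [Metric.mem_ball, dist_eq_norm] at hz
    have hzi : ∀ i, ‖z i - q l‖ ≤ ‖z - p‖ := by
      intro i
      have := norm_le_pi_norm (z - p) i
      simpa [hp] using this
    have e1 := hpl z (q l) ‖z - p‖ hzi
    have e2 : ∀ i, C * (ENNReal.ofReal ‖z - p‖) ^ (-(2 * w l)) ≤
        ∏ l, (ENNReal.ofReal ‖z i - q l‖) ^ (-(2 * w l)) := by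
      intro i
      rw [← Finset.prod_erase_mul _ _ (Finset.mem_univ l)]
      refine mul_le_mul' (Finset.prod_le_prod' fun l' _ => ?_)
        (rpow_anti (ENNReal.ofReal_le_ofReal (hzi i)) (by positivity))
      rw [abs_norm]
      have := (hw l').1
      exact const_lower (by positivity) ((hzi i).trans (hz.le.trans hr1))
    refine le_trans (le_of_eq ?_) (mul_le_mul' e1 (Finset.prod_le_prod' fun i _ => e2 i))
    rw [Finset.prod_const, Finset.card_univ, Fintype.card_fin, mul_pow, ← ENNReal.rpow_mul_natCast,
      hD, ← rpow_neg_mul (by positivity) (by positivity)]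
    ring_nf
  by_contra hcon
  push Not at hcon
  have hinf : ∫⁻ z in Metric.ball p r, (ENNReal.ofReal ‖z - p‖) ^ (-D) = ∞ := by
    by_contra hne
    have := (lintegral_norm_ball_iff volume p r D hr).1 (lt_top_iff_ne_top.2 hne)
    simp [Module.finrank_pi_fintype] at this
    have h5 : (n + 1 : ℝ) * (4 * (1 - w l)) ≤ (n + 1 : ℝ) * (c * n) := by gcongr
    simp only [hD] at this
    push_cast at this
    nlinarith
  apply h
  rw [eq_top_iff]
  refine le_trans ?_ (lintegral_mono_set hsub)
  refine le_trans ?_ (setLIntegral_mono' measurableSet_ball hle)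
  rw [lintegral_const_mul _ (by fun_prop), hinf, ENNReal.mul_top (by simp [hK, hC0])]

lemma necessity_diag (m : ℕ) (w : Fin m → ℝ) (hw : ∀ l, w l ∈ Set.Ioo (0 : ℝ) 1)
    (q : Fin m → ℂ) (n : ℕ) (hn : 0 < n) (c : ℝ) (hc : 0 < c)
    (s : Set (Fin (n + 1) → ℂ)) (hs : s ∈ 𝓝 0)
    (h : ∫⁻ z in s,
          (∏ a ∈ Finset.univ.filter (fun a : Fin (n + 1) × Fin (n + 1) => a.1 < a.2),
            (ENNReal.ofReal ‖z a.1 - z a.2‖) ^ (-c)) *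
          ∏ i, ∏ l, (ENNReal.ofReal ‖z i - q l‖) ^ (-(2 * w l)) ≠ ∞) :
    c * (n + 1) < 4 := by
  obtain ⟨r', hr', hsub'⟩ := Metric.mem_nhds_iff.1 hs
  obtain ⟨r, hr, hr1, hsub⟩ : ∃ r : ℝ, 0 < r ∧ r ≤ 1 ∧
      Metric.ball (0 : Fin (n + 1) → ℂ) r ⊆ s :=
    ⟨min r' 1, by positivity, min_le_right _ _,
      (Metric.ball_subset_ball (min_le_left _ _)).trans hsub'⟩
  obtain ⟨K, hK, hpl⟩ := pairs_lower n c hc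
  set C : ℝ≥0∞ := ∏ l', (ENNReal.ofReal (1 + |‖0 - q l'‖|)) ^ (-(2 * w l')) with hC
  have hC0 : C ≠ 0 := Finset.prod_ne_zero_iff.2 fun l' _ => const_ne
  set Q : (Fin (n + 1) → ℂ) → ℝ≥0∞ := fun z =>
    ∏ a ∈ Finset.univ.filter (fun a : Fin (n + 1) × Fin (n + 1) => a.1 < a.2),
            (ENNReal.ofReal ‖z a.1 - z a.2‖) ^ (-c) with hQ
  have hQm : Measurable Q := by rw [hQ]; fun_prop
  have hle : ∀ z ∈ Metric.ball (0 : Fin (n + 1) → ℂ) r, Q z * C ^ (n + 1) ≤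
      Q z * ∏ i, ∏ l, (ENNReal.ofReal ‖z i - q l‖) ^ (-(2 * w l)) := by
    intro z hz
    rw [Metric.mem_ball, dist_eq_norm, sub_zero] at hz
    refine mul_le_mul' le_rfl ?_
    have e2 : ∀ i, C ≤ ∏ l, (ENNReal.ofReal ‖z i - q l‖) ^ (-(2 * w l)) := by
      intro i
      refine Finset.prod_le_prod' fun l' _ => ?_
      rw [abs_norm]
      have := (hw l').1
      refine const_lower (by positivity) ?_
      rw [sub_zero]
      exact (norm_le_pi_norm z i).trans (hz.le.trans hr1)
    refine le_trans (le_of_eq ?_) (Finset.prod_le_prod' fun i _ => e2 i)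
    simp
  by_contra hcon
  push Not at hcon
  set D : ℝ := c * (n * (n + 1) / 2) with hD
  have : Nonempty (Fin n) := Fin.pos_iff_nonempty.mp hn
  have hinf : ∀ p : Fin n → ℂ, ∫⁻ z in Metric.ball p (r / 2),
      (ENNReal.ofReal ‖z - p‖) ^ (-D) = ∞ := by
    intro p
    by_contra hne
    have := (lintegral_norm_ball_iff volume p (r / 2) D (by positivity)).1 (lt_top_iff_ne_top.2 hne)
    simp [Module.finrank_pi_fintype] at this
    have h5 : (n : ℝ) * 4 ≤ (n : ℝ) * (c * (n + 1)) := by gcongr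
    simp only [hD] at this
    nlinarith
  have hinner : ∀ x ∈ Metric.ball (0 : ℂ) (r / 2), ∞ ≤ ∫⁻ y : Fin n → ℂ,
      Q ((0 : Fin (n + 1)).insertNth (α := fun _ => ℂ) x y)
        ∂(Measure.pi fun _ => volume.restrict (Metric.ball (0 : ℂ) r)) := by
    intro x hx
    refine le_trans ?_ (lintegral_mono' (pi_ball_restrict n r) le_rfl)
    have hsub2 : Metric.ball (fun _ : Fin n => x) (r / 2) ⊆ Metric.ball 0 r := by
      refine Metric.ball_subset_ball' ?_
      rw [Metric.mem_ball] at hx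
      have : dist (fun _ : Fin n => x) 0 ≤ r / 2 :=
        (dist_pi_le_iff (by positivity)).2 fun _ => hx.le
      linarith
    refine le_trans ?_ (lintegral_mono_set hsub2)
    have hb : ∀ y : Fin n → ℂ, K * (ENNReal.ofReal ‖y - fun _ => x‖) ^ (-D) ≤
        Q ((0 : Fin (n + 1)).insertNth (α := fun _ => ℂ) x y) := by
      intro y
      refine hpl _ x _ ?_
      intro i
      refine Fin.cases ?_ (fun j => ?_) i
      · simp
      · have hj := norm_le_pi_norm (y - fun _ => x) j
        rw [Pi.sub_apply] at hj
        simpa using hj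
    refine le_trans ?_ (lintegral_mono hb)
    rw [lintegral_const_mul _ (by fun_prop), hinf, ENNReal.mul_top hK]
  apply h
  rw [eq_top_iff]
  refine le_trans ?_ (lintegral_mono_set hsub)
  refine le_trans ?_ (setLIntegral_mono' measurableSet_ball hle)
  rw [lintegral_mul_const _ hQm]
  have hQinf : ∫⁻ z in Metric.ball (0 : Fin (n + 1) → ℂ) r, Q z = ∞ := by
    rw [ball_pi _ hr, volume_pi, Measure.restrict_pi_pi]
    have := lintegral_pi_insertNth (volume.restrict (Metric.ball (0 : ℂ) r)) 0 Q hQm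
    refine this.trans ?_
    rw [eq_top_iff]
    refine le_trans ?_ (lintegral_mono_set (Metric.ball_subset_ball (by linarith : r / 2 ≤ r)))
    refine le_trans ?_ (setLIntegral_mono' measurableSet_ball hinner)
    rw [setLIntegral_const, ENNReal.top_mul]
    exact (Metric.measure_ball_pos volume _ (by positivity)).ne'
  rw [hQinf, ENNReal.top_mul (pow_ne_zero _ hC0)]



/-- **Microscopic stability threshold of a log Fano curve.** Let `Δ = Σ w_l q_l` with distinct
points `q_l ∈ ℂ`, weights `w_l ∈ (0,1)`, and `V = 2 - Σ w_l > 0`; let `N ≥ 2`, `k = (N-1)/V`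
and `γ > 0`. The function
`z ↦ ∏_{i<j} |z_i - z_j| ^ (-2γ/k) · ∏_i ∏_l |z_i - q_l| ^ (-2 w_l)` is locally integrable on
`ℂ^N` if and only if `γ < min( 2(1-1/N)/V , min_l 2(1-w_l)/V )`. -/
theorem microscopic_threshold_log_fano_curve (m : ℕ) (hm : 0 < m)
    (w : Fin m → ℝ) (hw : ∀ l, w l ∈ Set.Ioo (0 : ℝ) 1)
    (hV : 0 < 2 - ∑ j, w j)
    (q : Fin m → ℂ) (hq : Function.Injective q)
    (N : ℕ) (hN : 2 ≤ N) (γ : ℝ) (hγ : 0 < γ) :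
    (∀ p : Fin N → ℂ, ∃ s ∈ 𝓝 p,
        (∫⁻ z in s,
          (∏ a ∈ Finset.univ.filter (fun a : Fin N × Fin N => a.1 < a.2),
            (ENNReal.ofReal ‖z a.1 - z a.2‖) ^
              (-(2 * γ / (((N : ℝ) - 1) / (2 - ∑ j, w j))))) *
          ∏ i, ∏ l, (ENNReal.ofReal ‖z i - q l‖) ^ (-(2 * w l)) ∂volume) ≠ ∞) ↔
      γ < min (2 * (1 - 1 / (N : ℝ)) / (2 - ∑ j, w j))
          (Finset.univ.inf' (Finset.univ_nonempty_iff.mpr (Fin.pos_iff_nonempty.mp hm))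
            fun l => 2 * (1 - w l) / (2 - ∑ j, w j)) := by
  obtain ⟨n, rfl⟩ : ∃ n, N = n + 1 := ⟨N - 1, by omega⟩
  have hn : 0 < n := by omega
  have hnR : (0 : ℝ) < n := by exact_mod_cast hn
  obtain ⟨V, hVd⟩ : ∃ V, V = 2 - ∑ j, w j := ⟨_, rfl⟩
  rw [← hVd] at hV ⊢
  obtain ⟨c, hcd⟩ : ∃ c, c = 2 * γ / ((((n + 1 : ℕ) : ℝ) - 1) / V) := ⟨_, rfl⟩
  rw [← hcd]
  have hcV : c * n = 2 * γ * V := by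
    rw [hcd]; push_cast; rw [add_sub_cancel_right]; field_simp
  have hc : 0 < c := by
    have : 0 < c * n := by rw [hcV]; positivity
    exact pos_of_mul_pos_left this hnR.le
  have hiff : γ < min (2 * (1 - 1 / ((n + 1 : ℕ) : ℝ)) / V)
          (Finset.univ.inf' (Finset.univ_nonempty_iff.mpr (Fin.pos_iff_nonempty.mp hm))
            fun l => 2 * (1 - w l) / V) ↔
      c * (n + 1) < 4 ∧ ∀ l, c * n < 4 * (1 - w l) := by
    rw [lt_min_iff, Finset.lt_inf'_iff]
    refine and_congr ?_ ?_
    · rw [lt_div_iff₀ hV]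
      have e : (1 - 1 / ((n + 1 : ℕ) : ℝ)) = n / (n + 1) := by
        push_cast; field_simp; ring
      rw [e, ← mul_div_assoc, lt_div_iff₀ (by positivity)]
      have e2 : γ * V = c * n / 2 := by linarith
      rw [e2]
      constructor
      · intro h
        refine lt_of_mul_lt_mul_right ?_ hnR.le
        linarith
      · intro h
        have := mul_lt_mul_of_pos_right h hnR
        linarith
    · simp only [Finset.mem_univ, true_implies]
      refine forall_congr' fun l => ?_
      rw [lt_div_iff₀ hV, hcV]
      constructor <;> intro h <;> linarith
  rw [hiff]
  constructor
  · intro h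
    refine ⟨?_, fun l => ?_⟩
    · obtain ⟨s, hs, hfin⟩ := h 0
      exact necessity_diag m w hw q n hn c hc s hs hfin
    · obtain ⟨s, hs, hfin⟩ := h (fun _ => q l)
      exact necessity_w m w hw q n c hc l s hs hfin
  · rintro ⟨h1, h2⟩ p
    refine ⟨Metric.ball 0 (‖p‖ + 1), Metric.isOpen_ball.mem_nhds (by simp), ?_⟩
    exact (sufficiency m hm w hw q hq n c hc h1 h2 _).ne
end

section
/- Let w ∈ (0,1), V := 2 − 2w, let N ≥ 4 be an integer, set k := (N−1)/V, let q₀ ≠ q₁ be points of ℂ, and let γ > 0. Then the function z ↦ ∏_{1≤i<j≤N} |z_i − z_j|^{−2γ/k} · ∏_{i=1}^N (|z_i − q₀| |z_i − q₁|)^{−2w} is Lebesgue integrable on a neighborhood of every point p ∈ ℂ^N such that at most ⌊N/2⌋ of the coordinates of p equal q₀ and at most ⌊N/2⌋ equal q₁, if and only if γ < min{ 2(1 − 1/N)/V , (N−1)/(⌊N/2⌋ − 1) }. -/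
open MeasureTheory Topology
open scoped ENNReal Classical

theorem aux_sing_int (t : ℝ) (ht : t < 2) (R : ℝ) :
    ∫⁻ u in Metric.ball (0 : ℂ) R, (ENNReal.ofReal ‖u‖) ^ (-t) ≠ ∞ := by
  rcases le_or_gt R 0 with hR | hR
  · rw [Metric.ball_eq_empty.2 hR]; simp
  have h : IntegrableOn (fun u : ℂ => ‖u‖ ^ (-t)) (Metric.ball (0 : ℂ) R) volume := by
    have := (integrableOn_fun_norm_addHaar (E := ℂ) volume (f := fun y : ℝ => y ^ (-t)) (r := R)).2
    apply this
    have h2 : IntegrableOn (fun y : ℝ => y ^ (1 - t)) (Set.Ioo 0 R) := by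
      rw [intervalIntegral.integrableOn_Ioo_rpow_iff hR]; linarith
    refine h2.congr_fun ?_ measurableSet_Ioo
    intro y hy
    simp only [Complex.finrank_real_complex, smul_eq_mul]
    rw [sub_eq_add_neg, Real.rpow_add hy.1]; simp
  have h3 := h.2
  rw [hasFiniteIntegral_iff_ofReal (ae_of_all _ fun u => by positivity)] at h3
  refine (lt_of_eq_of_lt ?_ h3).ne
  apply lintegral_congr_ae
  apply ae_restrict_of_ae
  have : ∀ᵐ u : ℂ, u ≠ 0 := by simp [ae_iff]
  filter_upwards [this] with u hu
  rw [ENNReal.ofReal_rpow_of_pos (norm_pos_iff.2 hu)]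

theorem aux_pi_int {N : ℕ} (g : ℂ → ℝ≥0∞) (hg : Measurable g) (hi : ∫⁻ u, g u ≠ ∞) :
    ∫⁻ z : Fin N → ℂ, ∏ i, g (z i) ≠ ∞ := by
  have h1 : Integrable (fun u => (g u).toReal) volume :=
    integrable_toReal_of_lintegral_ne_top hg.aemeasurable hi
  have h2 : Integrable (fun z : Fin N → ℂ => ∏ i, (g (z i)).toReal) volume :=
    Integrable.fintype_prod (f := fun _ u => (g u).toReal) (fun _ => h1)
  have h3 := h2.2
  rw [hasFiniteIntegral_iff_ofReal
    (ae_of_all _ fun u => Finset.prod_nonneg fun _ _ => ENNReal.toReal_nonneg)] at h3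
  refine (lt_of_eq_of_lt ?_ h3).ne
  apply lintegral_congr_ae
  have h4 : ∀ᵐ u : ℂ, g u < ∞ := ae_lt_top hg hi
  have h5 : ∀ i : Fin N, ∀ᵐ z : Fin N → ℂ, g (z i) < ∞ := fun i =>
    (Measure.quasiMeasurePreserving_eval (fun _ : Fin N => (volume : Measure ℂ)) i).ae h4
  filter_upwards [ae_all_iff.2 h5] with z hz
  rw [ENNReal.ofReal_prod_of_nonneg (fun _ _ => ENNReal.toReal_nonneg)]
  exact Finset.prod_congr rfl fun i _ => (ENNReal.ofReal_toReal (hz i).ne).symm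

/-- The shear attached to an idempotent parent map. -/
noncomputable def auxShear {N : ℕ} (σ : Fin N → Fin N) (hσ : ∀ i, σ (σ i) = σ i) :
    (Fin N → ℂ) ≃ₗ[ℝ] (Fin N → ℂ) where
  toFun z i := if σ i = i then z i else z i - z (σ i)
  invFun z i := if σ i = i then z i else z i + z (σ i)
  map_add' x y := by
    ext i; simp only [Pi.add_apply]; split_ifs
    · rfl
    · ring
  map_smul' c x := by
    ext i; simp only [Pi.smul_apply, RingHom.id_apply]; split_ifs
    · rfl
    · rw [smul_sub]
  left_inv z := by
    ext i; simp only [hσ, if_true]; split_ifs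
    · rfl
    · ring
  right_inv z := by
    ext i; simp only [hσ, if_true]; split_ifs
    · rfl
    · ring

theorem auxShear_apply {N : ℕ} (σ : Fin N → Fin N) (hσ : ∀ i, σ (σ i) = σ i) (z : Fin N → ℂ)
    (i : Fin N) : auxShear σ hσ z i = if σ i = i then z i else z i - z (σ i) := rfl

theorem aux_forest_int {N : ℕ} (σ : Fin N → Fin N) (hσ : ∀ i, σ (σ i) = σ i) (t : ℝ) (ht : t < 2)
    (p : Fin N → ℂ) (r : ℝ) :
    ∫⁻ z in {z : Fin N → ℂ | ∀ i, ‖z i - p i‖ < r},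
      ∏ i, (ENNReal.ofReal ‖auxShear σ hσ (z - p) i‖) ^ (-t) ≠ ∞ := by
  set g : ℂ → ℝ≥0∞ := (Metric.ball (0 : ℂ) (2 * r)).indicator
    (fun u => (ENNReal.ofReal ‖u‖) ^ (-t)) with hg
  have hgm : Measurable g := by
    apply Measurable.indicator _ measurableSet_ball
    fun_prop
  have hgi : ∫⁻ u, g u ≠ ∞ := by
    rw [hg, lintegral_indicator measurableSet_ball]
    exact aux_sing_int t ht _
  have hHm : Measurable (fun z : Fin N → ℂ => ∏ i, g (z i)) := by fun_prop
  have hSm : Measurable (auxShear σ hσ) :=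
    (LinearMap.continuous_of_finiteDimensional (auxShear σ hσ).toLinearMap).measurable
  have hdet : LinearMap.det ((auxShear σ hσ) : (Fin N → ℂ) →ₗ[ℝ] (Fin N → ℂ)) ≠ 0 :=
    (LinearEquiv.isUnit_det' (auxShear σ hσ)).ne_zero
  have key : ∫⁻ z : Fin N → ℂ, ∏ i, g (auxShear σ hσ (z - p) i) ≠ ∞ := by
    rw [lintegral_sub_right_eq_self (fun z : Fin N → ℂ => ∏ i, g (auxShear σ hσ z i)) p]
    have e : ∫⁻ z : Fin N → ℂ, ∏ i, g (auxShear σ hσ z i) =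
        ∫⁻ z, ∏ i, g (z i) ∂(Measure.map (auxShear σ hσ) volume) := by
      rw [lintegral_map hHm hSm]
    rw [e]
    have m := Measure.map_linearMap_addHaar_eq_smul_addHaar
      (volume : Measure (Fin N → ℂ)) hdet
    have m' : Measure.map (auxShear σ hσ) (volume : Measure (Fin N → ℂ)) = _ := m
    rw [m', lintegral_smul_measure]
    exact ENNReal.mul_ne_top ENNReal.ofReal_ne_top (aux_pi_int g hgm hgi)
  refine ne_top_of_le_ne_top key ?_
  refine le_trans ?_ (setLIntegral_le_lintegral {z : Fin N → ℂ | ∀ i, ‖z i - p i‖ < r} _)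
  apply setLIntegral_mono' (by measurability)
  intro z hz
  apply Finset.prod_le_prod' 
  intro i _
  rw [hg, Set.indicator_of_mem]
  rw [mem_ball_zero_iff, auxShear_apply]
  have h1 := hz i
  have h2 := hz (σ i)
  have h0 := norm_nonneg (z i - p i)
  split_ifs
  · simp only [Pi.sub_apply]; linarith
  · calc _ ≤ ‖z i - p i‖ + ‖z (σ i) - p (σ i)‖ := norm_sub_le _ _
      _ < _ := by linarith

theorem aux_block {ι : Type*} [DecidableEq ι] (I : Finset ι) (x : ι → ℝ≥0∞) (y : ι → ι → ℝ≥0∞)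
    (hx : ∀ i ∈ I, 1 ≤ x i) (a b t : ℝ) (ha : 0 ≤ a) (ht : 0 < t)
    (h1 : a * I.card ≤ 2 * t) (h2 : b + a * ((I.card : ℝ) - 1) / 2 ≤ t) (M : ℝ≥0∞)
    (hM0 : ∏ i ∈ I, x i ^ t ≤ M) (hM1 : ∀ k ∈ I, x k ^ t * ∏ j ∈ I.erase k, y k j ^ t ≤ M) :
    ∏ i ∈ I, (x i ^ b * ∏ j ∈ I.erase i, y i j ^ (a / 2)) ≤ M := by
  set μ : ℝ := a / (2 * t) with hμ
  have hμ0 : 0 ≤ μ := by positivity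
  have htμ : t * μ = a / 2 := by rw [hμ]; field_simp
  set l : ℝ := 1 - μ * I.card with hl
  have hl0 : 0 ≤ l := by
    have : μ * I.card ≤ 1 := by
      rw [hμ, div_mul_eq_mul_div, div_le_one (by positivity)]; exact h1
    linarith
  have hexp : b ≤ t * l + t * μ := by
    have : t * l = t - (a / 2) * I.card := by rw [hl, mul_sub, mul_one, ← mul_assoc, htμ]
    rw [this, htμ]; linarith
  calc ∏ i ∈ I, (x i ^ b * ∏ j ∈ I.erase i, y i j ^ (a / 2))
      ≤ ∏ i ∈ I, ((x i ^ t) ^ l * (x i ^ t * ∏ j ∈ I.erase i, y i j ^ t) ^ μ) := by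
        apply Finset.prod_le_prod'
        intro i hi
        have e1 : ∏ j ∈ I.erase i, y i j ^ (a / 2) = (∏ j ∈ I.erase i, y i j ^ t) ^ μ := by
          rw [← ENNReal.prod_rpow_of_nonneg hμ0]
          refine Finset.prod_congr rfl fun j _ => ?_
          rw [← ENNReal.rpow_mul, htμ]
        rw [e1, ENNReal.mul_rpow_of_nonneg _ _ hμ0, ← mul_assoc]
        gcongr
        rw [← ENNReal.rpow_mul, ← ENNReal.rpow_mul,
          ← ENNReal.rpow_add_of_nonneg _ _ (by positivity) (by positivity)]
        exact ENNReal.rpow_le_rpow_of_exponent_le (hx i hi) hexp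
    _ = (∏ i ∈ I, x i ^ t) ^ l * ∏ i ∈ I, (x i ^ t * ∏ j ∈ I.erase i, y i j ^ t) ^ μ := by
        rw [Finset.prod_mul_distrib, ENNReal.prod_rpow_of_nonneg hl0]
    _ ≤ M ^ l * ∏ i ∈ I, M ^ μ := by
        gcongr with i hi
        exact hM1 i hi
    _ = M := by
        rw [Finset.prod_const, ← ENNReal.rpow_natCast, ← ENNReal.rpow_mul,
          ← ENNReal.rpow_add_of_nonneg _ _ hl0 (by positivity)]
        rw [hl]; simp

theorem aux_block_choice {ι : Type*} [DecidableEq ι] (I : Finset ι) (x : ι → ℝ≥0∞) (y : ι → ι → ℝ≥0∞)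
    (hx : ∀ i ∈ I, 1 ≤ x i) (a b t : ℝ) (ha : 0 ≤ a) (ht : 0 < t)
    (h1 : a * I.card ≤ 2 * t) (h2 : b + a * ((I.card : ℝ) - 1) / 2 ≤ t) :
    ∃ σ : ι → ι, (∀ i ∈ I, σ i ∈ I) ∧ (∀ i ∈ I, σ (σ i) = σ i) ∧
    ∏ i ∈ I, (x i ^ b * ∏ j ∈ I.erase i, y i j ^ (a / 2)) ≤
      ∏ i ∈ I, (if σ i = i then x i else y (σ i) i) ^ t := by
  set L := ∏ i ∈ I, (x i ^ b * ∏ j ∈ I.erase i, y i j ^ (a / 2)) with hL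
  by_cases c0 : L ≤ ∏ i ∈ I, x i ^ t
  · exact ⟨id, by simp, by simp, by simpa using c0⟩
  by_cases c1 : ∃ k ∈ I, L ≤ x k ^ t * ∏ j ∈ I.erase k, y k j ^ t
  · obtain ⟨k, hk, hkL⟩ := c1
    refine ⟨fun _ => k, fun _ _ => hk, fun _ _ => rfl, hkL.trans (le_of_eq ?_)⟩
    rw [← Finset.mul_prod_erase I _ hk]
    congr 1
    · simp
    · refine Finset.prod_congr rfl fun j hj => ?_
      rw [if_neg (Finset.ne_of_mem_erase hj).symm]
  · exfalso
    push Not at c0 c1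
    have hlt : max (∏ i ∈ I, x i ^ t) (I.sup fun k => x k ^ t * ∏ j ∈ I.erase k, y k j ^ t) < L := by
      refine max_lt c0 ?_
      rw [Finset.sup_lt_iff (lt_of_le_of_lt bot_le c0)]
      exact c1
    refine absurd (aux_block I x y hx a b t ha ht h1 h2 _ (le_max_left _ _) ?_) (not_le.2 hlt)
    intro k hk
    exact (Finset.le_sup (f := fun k => x k ^ t * ∏ j ∈ I.erase k, y k j ^ t) hk).trans
      (le_max_right _ _)

theorem aux_global {N : ℕ} (p : Fin N → ℂ) (x : Fin N → ℝ≥0∞) (y : Fin N → Fin N → ℝ≥0∞)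
    (hx : ∀ i, 1 ≤ x i) (a t : ℝ) (b : ℂ → ℝ) (ha : 0 ≤ a) (ht : 0 < t)
    (h1 : ∀ v, a * (Finset.univ.filter fun i => p i = v).card ≤ 2 * t)
    (h2 : ∀ v, b v + a * (((Finset.univ.filter fun i => p i = v).card : ℝ) - 1) / 2 ≤ t) :
    ∃ σ : Fin N → Fin N, (∀ i, p (σ i) = p i) ∧ (∀ i, σ (σ i) = σ i) ∧
    ∏ i, (x i ^ (b (p i)) *
      ∏ j ∈ (Finset.univ.filter fun j => p j = p i).erase i, y i j ^ (a / 2)) ≤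
      ∏ i, (if σ i = i then x i else y (σ i) i) ^ t := by
  have H := fun v : ℂ => aux_block_choice (Finset.univ.filter fun i => p i = v) x y
    (fun i _ => hx i) a (b v) t ha ht (h1 v) (h2 v)
  choose s hs1 hs2 hs3 using H
  have hp : ∀ i, p (s (p i) i) = p i := fun i => by
    have := hs1 (p i) i (by simp)
    simpa using this
  refine ⟨fun i => s (p i) i, hp, ?_, ?_⟩
  · intro i
    simp only [hp]
    exact hs2 (p i) i (by simp)
  · have F : ∀ f : Fin N → ℝ≥0∞, ∏ i, f i =
        ∏ v ∈ Finset.univ.image p, ∏ i ∈ Finset.univ.filter (fun i => p i = v), f i := fun f =>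
      (Finset.prod_fiberwise_of_maps_to (fun i _ => Finset.mem_image_of_mem p (Finset.mem_univ i))
        f).symm
    rw [F, F]
    apply Finset.prod_le_prod'
    intro v _
    refine le_trans (le_of_eq ?_) ((hs3 v).trans (le_of_eq ?_))
    · refine Finset.prod_congr rfl fun i hi => ?_
      have : p i = v := by simpa using hi
      rw [this]
    · refine Finset.prod_congr rfl fun i hi => ?_
      have : p i = v := by simpa using hi
      simp only [this]

theorem aux_pairs {M : Type*} [CommMonoid M] {N : ℕ} (g : Fin N → Fin N → M)
    (hg : ∀ i j, g i j = g j i) :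
    (∏ a ∈ Finset.univ.filter (fun a : Fin N × Fin N => a.1 < a.2), g a.1 a.2) *
    (∏ a ∈ Finset.univ.filter (fun a : Fin N × Fin N => a.1 < a.2), g a.1 a.2) =
    ∏ i, ∏ j ∈ Finset.univ.erase i, g i j := by
  have h1 : ∏ i, ∏ j ∈ Finset.univ.erase i, g i j =
      ∏ a ∈ Finset.univ.filter (fun a : Fin N × Fin N => a.1 ≠ a.2), g a.1 a.2 := by
    rw [Finset.prod_filter, Fintype.prod_prod_type]
    refine Finset.prod_congr rfl fun i _ => ?_
    rw [← Finset.prod_filter]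
    refine Finset.prod_congr ?_ fun _ _ => rfl
    ext j; simp [eq_comm]
  have h2 : ∏ a ∈ Finset.univ.filter (fun a : Fin N × Fin N => a.1 < a.2), g a.1 a.2 =
      ∏ a ∈ Finset.univ.filter (fun a : Fin N × Fin N => a.2 < a.1), g a.1 a.2 := by
    refine Finset.prod_bij' (fun a _ => a.swap) (fun a _ => a.swap) ?_ ?_ ?_ ?_ ?_
    · simp
    · simp
    · simp
    · simp
    · intro a _; exact hg _ _
  rw [h1]
  nth_rewrite 2 [h2]
  rw [← Finset.prod_union]
  · refine Finset.prod_congr ?_ fun _ _ => rfl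
    ext a; simp [lt_or_lt_iff_ne]
  · rw [Finset.disjoint_left]
    intro a h hb
    simp only [Finset.mem_filter, Finset.mem_univ, true_and] at h hb
    exact lt_asymm h hb

/-- The integrand. -/
noncomputable def auxF {N : ℕ} (w a : ℝ) (q₀ q₁ : ℂ) (z : Fin N → ℂ) : ℝ≥0∞ :=
  (∏ a' ∈ Finset.univ.filter (fun a : Fin N × Fin N => a.1 < a.2),
              (ENNReal.ofReal ‖z a'.1 - z a'.2‖) ^ (-a)) *
            ∏ i, (ENNReal.ofReal (‖z i - q₀‖ * ‖z i - q₁‖)) ^ (-(2 * w))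

theorem aux_inv_rpow (X : ℝ≥0∞) (s : ℝ) : X⁻¹ ^ s = X ^ (-s) := by
  rw [ENNReal.inv_rpow, ENNReal.rpow_neg]

theorem aux_delta {N : ℕ} (p : Fin N → ℂ) (q₀ q₁ : ℂ) :
    ∃ δ : ℝ, 0 < δ ∧ δ ≤ 1 / 2 ∧ (∀ i j, p i ≠ p j → 3 * δ ≤ ‖p i - p j‖) ∧
      (∀ i, p i ≠ q₀ → 2 * δ ≤ ‖p i - q₀‖) ∧ (∀ i, p i ≠ q₁ → 2 * δ ≤ ‖p i - q₁‖) := by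
  have small : ∀ (c D : ℝ), 0 < D → ∀ᶠ δ : ℝ in 𝓝[>] 0, c * δ ≤ D := by
    intro c D hD
    have : Filter.Tendsto (fun δ : ℝ => c * δ) (𝓝[>] 0) (𝓝 0) := by
      have h : Filter.Tendsto (fun δ : ℝ => c * δ) (𝓝 0) (𝓝 (c * 0)) :=
        (continuous_const.mul continuous_id).tendsto 0
      rw [mul_zero] at h
      exact h.mono_left nhdsWithin_le_nhds
    filter_upwards [this.eventually (gt_mem_nhds hD)] with δ h using h.le
  have e0 : ∀ᶠ δ : ℝ in 𝓝[>] 0, 0 < δ := self_mem_nhdsWithin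
  have e1 := small 1 (1 / 2) (by norm_num)
  have e2 : ∀ᶠ δ : ℝ in 𝓝[>] 0, ∀ i j, p i ≠ p j → 3 * δ ≤ ‖p i - p j‖ := by
    rw [Filter.eventually_all]; intro i
    rw [Filter.eventually_all]; intro j
    by_cases h : p i = p j
    · simp [h]
    · filter_upwards [small 3 _ (norm_pos_iff.2 (sub_ne_zero.2 h))] with δ hδ _ using hδ
  have e3 : ∀ q : ℂ, ∀ᶠ δ : ℝ in 𝓝[>] 0, ∀ i, p i ≠ q → 2 * δ ≤ ‖p i - q‖ := by
    intro q
    rw [Filter.eventually_all]; intro i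
    by_cases h : p i = q
    · simp [h]
    · filter_upwards [small 2 _ (norm_pos_iff.2 (sub_ne_zero.2 h))] with δ hδ _ using hδ
  obtain ⟨δ, h0, h1, h2, h3, h4⟩ := (e0.and (e1.and (e2.and ((e3 q₀).and (e3 q₁))))).exists
  exact ⟨δ, h0, by linarith, h2, h3, h4⟩

theorem aux_pointwise {N : ℕ} (w a : ℝ) (q₀ q₁ : ℂ) (hw : 0 < w) (ha : 0 < a) (hq : q₀ ≠ q₁)
    (p : Fin N → ℂ) (δ : ℝ) (hδ : 0 < δ) (hδ1 : δ ≤ 1 / 2)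
    (d1 : ∀ i j, p i ≠ p j → 3 * δ ≤ ‖p i - p j‖)
    (d2 : ∀ i, p i ≠ q₀ → 2 * δ ≤ ‖p i - q₀‖) (d3 : ∀ i, p i ≠ q₁ → 2 * δ ≤ ‖p i - q₁‖)
    (z : Fin N → ℂ) (hz : ∀ i, ‖z i - p i‖ < δ) :
    auxF w a q₀ q₁ z ≤
      ((∏ _a ∈ Finset.univ.filter (fun a : Fin N × Fin N => a.1 < a.2),
        (ENNReal.ofReal δ) ^ (-a)) * ∏ _i : Fin N, (ENNReal.ofReal (δ * δ)) ^ (-(2 * w))) *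
      ∏ i, ((ENNReal.ofReal ‖z i - p i‖)⁻¹ ^ ((fun v => if v = q₀ ∨ v = q₁ then 2 * w else 0) (p i)) *
      ∏ j ∈ (Finset.univ.filter fun j => p j = p i).erase i,
        (ENNReal.ofReal ‖z i - z j‖)⁻¹ ^ (a / 2)) := by
  set g : Fin N → Fin N → ℝ≥0∞ := fun i j =>
    if p j = p i then (ENNReal.ofReal ‖z i - z j‖)⁻¹ ^ (a / 2) else 1 with hg
  have hgs : ∀ i j, g i j = g j i := by
    intro i j
    simp only [hg, norm_sub_rev (z i) (z j), eq_comm (a := p j)]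
  have one_le : 1 ≤ (ENNReal.ofReal δ) ^ (-a) := by
    rw [← aux_inv_rpow]
    apply ENNReal.one_le_rpow _ ha
    rw [ENNReal.one_le_inv]
    exact ENNReal.ofReal_le_one.2 (by linarith)
  have hP : ∏ i, ∏ j ∈ Finset.univ.erase i, g i j =
      ∏ i, ∏ j ∈ (Finset.univ.filter fun j => p j = p i).erase i,
        (ENNReal.ofReal ‖z i - z j‖)⁻¹ ^ (a / 2) := by
    refine Finset.prod_congr rfl fun i _ => ?_
    rw [hg, ← Finset.prod_filter, Finset.filter_erase]
  rw [Finset.prod_mul_distrib, ← hP, ← aux_pairs g hgs, ← Finset.prod_mul_distrib]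
  unfold auxF
  have A : ∏ a' ∈ Finset.univ.filter (fun a : Fin N × Fin N => a.1 < a.2),
              (ENNReal.ofReal ‖z a'.1 - z a'.2‖) ^ (-a) ≤
      (∏ _a ∈ Finset.univ.filter (fun a : Fin N × Fin N => a.1 < a.2),
        (ENNReal.ofReal δ) ^ (-a)) *
      ∏ a ∈ Finset.univ.filter (fun a : Fin N × Fin N => a.1 < a.2), g a.1 a.2 * g a.1 a.2 := by
    rw [← Finset.prod_mul_distrib]
    apply Finset.prod_le_prod'
    rintro ⟨i, j⟩ _
    simp only [hg]
    split_ifs with h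
    · rw [← ENNReal.rpow_add_of_nonneg _ _ (by positivity) (by positivity), add_halves,
        aux_inv_rpow]
      exact le_mul_of_one_le_left' one_le
    · rw [mul_one, mul_one, ← aux_inv_rpow, ← aux_inv_rpow]
      gcongr
      have h3 := d1 i j (fun e => h e.symm)
      have h4 : ‖p i - p j‖ ≤ ‖z i - p i‖ + ‖z i - z j‖ + ‖z j - p j‖ := by
        have : p i - p j = -(z i - p i) + (z i - z j) + (z j - p j) := by ring
        rw [this]
        refine (norm_add₃_le).trans ?_
        rw [norm_neg]
      linarith [hz i, hz j]
  have B : ∏ i, (ENNReal.ofReal (‖z i - q₀‖ * ‖z i - q₁‖)) ^ (-(2 * w)) ≤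
      (∏ _i : Fin N, (ENNReal.ofReal (δ * δ)) ^ (-(2 * w))) *
      ∏ i, (ENNReal.ofReal ‖z i - p i‖)⁻¹ ^
        ((fun v => if v = q₀ ∨ v = q₁ then 2 * w else 0) (p i)) := by
    rw [← Finset.prod_mul_distrib]
    apply Finset.prod_le_prod'
    intro i _
    have low : ∀ q, 2 * δ ≤ ‖p i - q‖ → δ ≤ ‖z i - q‖ := by
      intro q h
      have : p i - q = -(z i - p i) + (z i - q) := by ring
      have h4 : ‖p i - q‖ ≤ ‖z i - p i‖ + ‖z i - q‖ := by
        rw [this]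
        refine (norm_add_le _ _).trans ?_
        rw [norm_neg]
      linarith [hz i]
    have hdd : δ * δ ≤ δ := by nlinarith
    have hn := norm_nonneg (z i - p i)
    simp only
    split_ifs with h
    · rw [aux_inv_rpow, ← ENNReal.mul_rpow_of_ne_top ENNReal.ofReal_ne_top ENNReal.ofReal_ne_top,
        ← ENNReal.ofReal_mul (by positivity), ← aux_inv_rpow, ← aux_inv_rpow]
      have hle : δ * δ * ‖z i - p i‖ ≤ ‖z i - q₀‖ * ‖z i - q₁‖ := by
        rcases h with h | h
        · have := low q₁ (d3 i (by rw [h]; exact hq))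
          rw [← h, mul_comm]
          exact mul_le_mul_of_nonneg_left (by linarith) hn
        · have := low q₀ (d2 i (by rw [h]; exact hq.symm))
          rw [← h]
          exact mul_le_mul_of_nonneg_right (by linarith) hn
      exact ENNReal.rpow_le_rpow (ENNReal.inv_le_inv.2 (ENNReal.ofReal_le_ofReal hle))
        (by positivity)
    · rw [ENNReal.rpow_zero, mul_one, ← aux_inv_rpow, ← aux_inv_rpow]
      push Not at h
      have := low q₁ (d3 i h.2)
      have := low q₀ (d2 i h.1)
      gcongr
  calc _ ≤ _ := mul_le_mul' A B
    _ = _ := by ring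

theorem aux_suff {N : ℕ} (w a : ℝ) (q₀ q₁ : ℂ) (hw : 0 < w) (ha : 0 < a) (hq : q₀ ≠ q₁)
    (hN : 4 ≤ N) (hA : a * N < 4) (hB : 2 * w + a * (((N / 2 : ℕ) : ℝ) - 1) / 2 < 2)
    (p : Fin N → ℂ) (hp0 : (Finset.univ.filter fun i => p i = q₀).card ≤ N / 2)
    (hp1 : (Finset.univ.filter fun i => p i = q₁).card ≤ N / 2) :
    ∃ s ∈ 𝓝 p, ∫⁻ z in s, auxF w a q₀ q₁ z ≠ ∞ := by
  obtain ⟨δ, hδ, hδ1, d1, d2, d3⟩ := aux_delta p q₀ q₁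
  set s : Set (Fin N → ℂ) := {z | ∀ i, ‖z i - p i‖ < δ} with hs
  have hso : IsOpen s := by
    have : s = ⋂ i, {z : Fin N → ℂ | ‖z i - p i‖ < δ} := by ext; simp [hs]
    rw [this]
    exact isOpen_iInter_of_finite fun i => isOpen_lt (by fun_prop) (by fun_prop)
  refine ⟨s, hso.mem_nhds (by simp [hs, hδ]), ?_⟩
  set t : ℝ := max (a * N / 2) (2 * w + a * (((N / 2 : ℕ) : ℝ) - 1) / 2) with ht
  have ht2 : t < 2 := max_lt (by linarith) hB
  have hN0 : (0 : ℝ) < N := by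
    have : 0 < N := by omega
    exact_mod_cast this
  have ht1 : a * N / 2 ≤ t := le_max_left _ _
  have ht3 : 2 * w + a * (((N / 2 : ℕ) : ℝ) - 1) / 2 ≤ t := le_max_right _ _
  have ht0 : 0 < t := lt_of_lt_of_le (by positivity) ht1
  set K : ℝ≥0∞ := ((∏ _a ∈ Finset.univ.filter (fun a : Fin N × Fin N => a.1 < a.2),
        (ENNReal.ofReal δ) ^ (-a)) * ∏ _i : Fin N, (ENNReal.ofReal (δ * δ)) ^ (-(2 * w))) with hK
  have hKt : K ≠ ∞ := by
    apply ENNReal.mul_ne_top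
    · refine ENNReal.prod_ne_top fun _ _ => ?_
      rw [ENNReal.ofReal_rpow_of_pos hδ]
      exact ENNReal.ofReal_ne_top
    · refine ENNReal.prod_ne_top fun _ _ => ?_
      rw [ENNReal.ofReal_rpow_of_pos (by positivity)]
      exact ENNReal.ofReal_ne_top
  have hcard : ∀ v, ((Finset.univ.filter fun i => p i = v).card : ℝ) ≤ N := by
    intro v
    have := Finset.card_filter_le (Finset.univ : Finset (Fin N)) (fun i => p i = v)
    rw [Finset.card_univ, Fintype.card_fin] at this
    exact_mod_cast this
  have bound : ∀ z ∈ s, auxF w a q₀ q₁ z ≤ K * ∑ σ : {σ : Fin N → Fin N // ∀ i, σ (σ i) = σ i},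
      ∏ i, (ENNReal.ofReal ‖auxShear σ.1 σ.2 (z - p) i‖) ^ (-t) := by
    intro z hz
    refine (aux_pointwise w a q₀ q₁ hw ha hq p δ hδ hδ1 d1 d2 d3 z hz).trans ?_
    gcongr
    obtain ⟨σ, hσp, hσi, hσ⟩ := aux_global p (fun i => (ENNReal.ofReal ‖z i - p i‖)⁻¹)
      (fun i j => (ENNReal.ofReal ‖z i - z j‖)⁻¹)
      (by
        intro i
        rw [ENNReal.one_le_inv]
        exact ENNReal.ofReal_le_one.2 (by linarith [hz i]))
      a t (fun v => if v = q₀ ∨ v = q₁ then 2 * w else 0) ha.le ht0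
      (by
        intro v
        have := mul_le_mul_of_nonneg_left (hcard v) ha.le
        linarith)
      (by
        intro v
        split_ifs with h
        · refine le_trans ?_ ht3
          have : (Finset.univ.filter fun i => p i = v).card ≤ N / 2 := by
            rcases h with h | h
            · rw [h]; exact hp0
            · rw [h]; exact hp1
          have : ((Finset.univ.filter fun i => p i = v).card : ℝ) ≤ ((N / 2 : ℕ) : ℝ) := by
            exact_mod_cast this
          gcongr
        · have := mul_le_mul_of_nonneg_left (hcard v) ha.le
          linarith)
    refine hσ.trans ?_
    refine le_trans (le_of_eq ?_) (Finset.single_le_sum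
      (f := fun σ : {σ : Fin N → Fin N // ∀ i, σ (σ i) = σ i} =>
        ∏ i, (ENNReal.ofReal ‖auxShear σ.1 σ.2 (z - p) i‖) ^ (-t))
      (fun _ _ => zero_le) (Finset.mem_univ ⟨σ, hσi⟩))
    refine Finset.prod_congr rfl fun i _ => ?_
    rw [auxShear_apply]
    simp only [Pi.sub_apply, hσp]
    split_ifs
    · rw [aux_inv_rpow]
    · rw [aux_inv_rpow, sub_sub_sub_cancel_right, norm_sub_rev]
  have hm : ∀ σ : {σ : Fin N → Fin N // ∀ i, σ (σ i) = σ i}, Measurable (fun z : Fin N → ℂ =>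
      ∏ i, (ENNReal.ofReal ‖auxShear σ.1 σ.2 (z - p) i‖) ^ (-t)) := by
    intro σ
    have hSm : Measurable (auxShear σ.1 σ.2) :=
      (LinearMap.continuous_of_finiteDimensional (auxShear σ.1 σ.2).toLinearMap).measurable
    fun_prop
  refine ne_top_of_le_ne_top ?_ (setLIntegral_mono' hso.measurableSet bound)
  rw [lintegral_const_mul _ (Finset.measurable_sum _ fun σ _ => hm σ),
    lintegral_finsetSum _ (fun σ _ => hm σ)]
  refine ENNReal.mul_ne_top hKt (ENNReal.sum_ne_top.2 fun σ _ => ?_)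
  exact aux_forest_int σ.1 σ.2 t ht2 p δ

theorem aux_div {N : ℕ} (f : (Fin N → ℂ) → ℝ≥0∞) (σ : Fin N → Fin N) (hσ : ∀ i, σ (σ i) = σ i)
    (p : Fin N → ℂ) (S : Finset (Fin N)) (hS : S.Nonempty) (s : Set (Fin N → ℂ)) (hs : s ∈ 𝓝 p)
    (α : ℝ) (hα : 2 * (S.card : ℝ) ≤ α)
    (hf : ∃ C : ℝ≥0∞, C ≠ 0 ∧ ∀ r, 0 < r → r < 1 → ∀ ε, 0 < ε → ε < r →
      ∀ z : Fin N → ℂ, (∀ i, ‖auxShear σ hσ (z - p) i‖ < if i ∈ S then ε else r) →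
        C * (ENNReal.ofReal ε) ^ (-α) ≤ f z) :
    ∫⁻ z in s, f z = ∞ := by
  obtain ⟨C, hC, hf⟩ := hf
  by_contra hfin
  obtain ⟨ρ, hρ, hρs⟩ := Metric.mem_nhds_iff.1 hs
  set r : ℝ := min (ρ / 2) (1 / 2) with hr
  have hr0 : 0 < r := lt_min (by linarith) (by norm_num)
  have hr1 : r < 1 := lt_of_le_of_lt (min_le_right _ _) (by norm_num)
  have hrρ : 2 * r ≤ ρ := by
    have := min_le_left (ρ / 2) (1 / 2 : ℝ)
    linarith
  set A : ℝ → Set (Fin N → ℂ) := fun ε =>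
    {z | ∀ i, ‖auxShear σ hσ (z - p) i‖ < if i ∈ S then ε else r} with hA
  have hSm : Continuous (auxShear σ hσ) :=
    (LinearMap.continuous_of_finiteDimensional (auxShear σ hσ).toLinearMap)
  have hAo : ∀ ε, IsOpen (A ε) := by
    intro ε
    have : A ε = ⋂ i, {z : Fin N → ℂ | ‖auxShear σ hσ (z - p) i‖ < if i ∈ S then ε else r} := by
      ext; simp [hA]
    rw [this]
    exact isOpen_iInter_of_finite fun i => isOpen_lt (by fun_prop) (by fun_prop)
  have hAs : ∀ ε, ε < r → A ε ⊆ s := by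
    intro ε hε z hz
    apply hρs
    have hz' : ∀ i, ‖auxShear σ hσ (z - p) i‖ < r := fun i => by
      have := hz i
      split_ifs at this
      · exact this.trans hε
      · exact this
    rw [Metric.mem_ball, dist_pi_lt_iff hρ]
    intro i
    rw [dist_eq_norm]
    have h1 := hz' i
    have h2 := hz' (σ i)
    rw [auxShear_apply] at h1 h2
    rw [hσ, if_pos rfl] at h2
    simp only [Pi.sub_apply] at h1 h2
    split_ifs at h1
    · linarith
    · have : z i - p i = (z i - p i - (z (σ i) - p (σ i))) + (z (σ i) - p (σ i)) := by ring
      rw [this]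
      refine lt_of_le_of_lt (norm_add_le _ _) ?_
      linarith
  obtain ⟨c, hc0, hct, hvol⟩ : ∃ c : ℝ≥0∞, c ≠ 0 ∧ c ≠ ∞ ∧ ∀ ε, 0 < ε →
      volume (A ε) = c * (ENNReal.ofReal ε) ^ (2 * S.card) := by
    set c1 : ℝ≥0∞ := ENNReal.ofReal
      |LinearMap.det ((auxShear σ hσ).symm : (Fin N → ℂ) →ₗ[ℝ] (Fin N → ℂ))| with hc1
    set c2 : ℝ≥0∞ := (∏ _i ∈ Finset.univ.filter (fun i => i ∉ S), (ENNReal.ofReal r) ^ 2) *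
      ∏ _i : Fin N, (NNReal.pi : ℝ≥0∞) with hc2
    have hpi : (NNReal.pi : ℝ≥0∞) ≠ 0 := by
      simpa using NNReal.pi_ne_zero
    refine ⟨c1 * c2, ?_, ?_, ?_⟩
    · apply mul_ne_zero
      · rw [hc1, Ne, ENNReal.ofReal_eq_zero, not_le, abs_pos]
        exact (LinearEquiv.isUnit_det' (auxShear σ hσ).symm).ne_zero
      · apply mul_ne_zero
        · refine Finset.prod_ne_zero_iff.2 fun _ _ => ?_
          simp [hr0]
        · exact Finset.prod_ne_zero_iff.2 fun _ _ => hpi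
    · apply ENNReal.mul_ne_top ENNReal.ofReal_ne_top
      apply ENNReal.mul_ne_top
      · exact ENNReal.prod_ne_top fun _ _ => ENNReal.pow_ne_top ENNReal.ofReal_ne_top
      · exact ENNReal.prod_ne_top fun _ _ => ENNReal.coe_ne_top
    · intro ε hε
      have : A ε = (fun z => z - p) ⁻¹' ((auxShear σ hσ) ⁻¹'
          (Set.pi Set.univ fun i => Metric.ball (0 : ℂ) (if i ∈ S then ε else r))) := by
        ext z; simp [hA]
      rw [this]
      have tr := measure_preimage_add_right (volume : Measure (Fin N → ℂ)) (-p)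
        ((auxShear σ hσ) ⁻¹'
          (Set.pi Set.univ fun i => Metric.ball (0 : ℂ) (if i ∈ S then ε else r)))
      simp only [← sub_eq_add_neg] at tr
      rw [tr, Measure.addHaar_preimage_linearEquiv, volume_pi_pi, ← hc1]
      simp only [Complex.volume_ball]
      rw [Finset.prod_mul_distrib, mul_assoc, hc2]
      have : ∏ i, (ENNReal.ofReal (if i ∈ S then ε else r)) ^ 2 =
          (ENNReal.ofReal ε) ^ (2 * S.card) *
          ∏ _i ∈ Finset.univ.filter (fun i => i ∉ S), (ENNReal.ofReal r) ^ 2 := by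
        rw [← Finset.prod_filter_mul_prod_filter_not Finset.univ (fun i => i ∈ S)]
        congr 1
        · rw [Finset.prod_congr rfl (g := fun _ => (ENNReal.ofReal ε) ^ 2)]
          · rw [Finset.prod_const, pow_mul]
            congr 2
            ext i; simp
          · intro i hi
            have : i ∈ S := by simpa using hi
            rw [if_pos this]
        · refine Finset.prod_congr rfl fun i hi => ?_
          have : i ∉ S := by simpa using hi
          rw [if_neg this]
      rw [this]; ring
  have hofReal : Filter.Tendsto (fun ε : ℝ => ENNReal.ofReal ε) (𝓝[>] 0) (𝓝 0) := by
    have := (ENNReal.continuous_ofReal.tendsto 0)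
    rw [ENNReal.ofReal_zero] at this
    exact this.mono_left nhdsWithin_le_nhds
  have hcard : S.card ≠ 0 := Finset.card_ne_zero.2 hS
  have e0 : ∀ᶠ ε : ℝ in 𝓝[>] 0, 0 < ε := self_mem_nhdsWithin
  have e1 : ∀ᶠ ε : ℝ in 𝓝[>] 0, ε < r := nhdsWithin_le_nhds (gt_mem_nhds hr0)
  have hv0 : Filter.Tendsto (fun ε => volume (A ε)) (𝓝[>] 0) (𝓝 0) := by
    have h1 : Filter.Tendsto (fun ε : ℝ => c * (ENNReal.ofReal ε) ^ (2 * S.card))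
        (𝓝[>] 0) (𝓝 (c * 0 ^ (2 * S.card))) :=
      ENNReal.Tendsto.const_mul (ENNReal.Tendsto.pow hofReal) (Or.inr hct)
    rw [zero_pow (by omega), mul_zero] at h1
    refine h1.congr' ?_
    filter_upwards [e0] with ε hε using (hvol ε hε).symm
  have hv1 : Filter.Tendsto ((volume.restrict s) ∘ A) (𝓝[>] 0) (𝓝 0) :=
    tendsto_of_tendsto_of_tendsto_of_le_of_le tendsto_const_nhds hv0 (fun _ => zero_le)
      (fun ε => Measure.restrict_apply_le _ _)
  have hlim := tendsto_setLIntegral_zero hfin hv1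
  have hge : ∀ᶠ ε : ℝ in 𝓝[>] 0, C * c ≤ ∫⁻ z in A ε, f z ∂(volume.restrict s) := by
    filter_upwards [e0, e1] with ε h0 h1
    rw [Measure.restrict_restrict (hAo ε).measurableSet, Set.inter_eq_left.2 (hAs ε h1)]
    calc C * c ≤ C * c * ((ENNReal.ofReal ε) ^ (-α) * (ENNReal.ofReal ε) ^ (2 * S.card)) := by
          apply le_mul_of_one_le_right'
          rw [ENNReal.ofReal_rpow_of_pos h0, ← ENNReal.ofReal_pow h0.le,
            ← ENNReal.ofReal_mul (by positivity), ← Real.rpow_natCast, ← Real.rpow_add h0,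
            ENNReal.one_le_ofReal]
          apply Real.one_le_rpow_of_pos_of_le_one_of_nonpos h0 (by linarith)
          push_cast; linarith
      _ = (C * (ENNReal.ofReal ε) ^ (-α)) * volume (A ε) := by rw [hvol ε h0]; ring
      _ = ∫⁻ z in A ε, C * (ENNReal.ofReal ε) ^ (-α) := by rw [setLIntegral_const]
      _ ≤ _ := setLIntegral_mono' (hAo ε).measurableSet fun z hz => hf r hr0 hr1 ε h0 h1 z hz
  have := ge_of_tendsto hlim hge
  exact (mul_ne_zero hC hc0) (le_antisymm this zero_le)

theorem aux_lower {N : ℕ} (w a : ℝ) (q₀ q₁ : ℂ) (hw : 0 < w) (ha : 0 < a) (D ε : ℝ) (hD : 0 < D)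
    (hε : 0 < ε) (e : Fin N → Fin N → ℕ) (d : Fin N → ℕ) (z : Fin N → ℂ)
    (h1 : ∀ i j, ‖z i - z j‖ ≤ D * ε ^ (e i j))
    (h2 : ∀ i, ‖z i - q₀‖ * ‖z i - q₁‖ ≤ D * ε ^ (d i)) :
    ENNReal.ofReal ((∏ _a ∈ Finset.univ.filter (fun a : Fin N × Fin N => a.1 < a.2), D ^ (-a)) *
      ∏ _i : Fin N, D ^ (-(2 * w))) * (ENNReal.ofReal ε) ^
      (-(a * (∑ a ∈ Finset.univ.filter (fun a : Fin N × Fin N => a.1 < a.2), (e a.1 a.2 : ℝ)) +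
        2 * w * ∑ i, (d i : ℝ))) ≤ auxF w a q₀ q₁ z := by
  have gen : ∀ (c : ℝ) (n : ℕ), (D * ε ^ n) ^ (-c) = D ^ (-c) * ε ^ (-c * n) := by
    intro c n
    rw [Real.mul_rpow hD.le (by positivity), ← Real.rpow_natCast, ← Real.rpow_mul hε.le]
    congr 2; ring
  have mono : ∀ (c X : ℝ) (n : ℕ), 0 < c → X ≤ D * ε ^ n →
      ENNReal.ofReal (D ^ (-c) * ε ^ (-c * n)) ≤ ENNReal.ofReal X ^ (-c) := by
    intro c X n hc hX
    rw [← gen, ← ENNReal.ofReal_rpow_of_pos (by positivity), ← aux_inv_rpow, ← aux_inv_rpow]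
    gcongr
  unfold auxF
  refine le_trans (le_of_eq ?_) (mul_le_mul'
    (Finset.prod_le_prod' fun a' _ => mono a _ _ ha (h1 a'.1 a'.2))
    (Finset.prod_le_prod' fun i _ => mono (2 * w) _ _ (by positivity) (h2 i)))
  rw [← ENNReal.ofReal_prod_of_nonneg (fun _ _ => by positivity),
    ← ENNReal.ofReal_prod_of_nonneg (fun _ _ => by positivity),
    ENNReal.ofReal_rpow_of_pos hε, ← ENNReal.ofReal_mul, ← ENNReal.ofReal_mul]
  rotate_left
  · exact Finset.prod_nonneg fun _ _ => by positivity
  · positivity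
  congr 1
  rw [Finset.prod_mul_distrib, Finset.prod_mul_distrib, ← Real.rpow_sum_of_pos hε,
    ← Real.rpow_sum_of_pos hε, neg_add, Real.rpow_add hε, ← Finset.mul_sum, ← Finset.mul_sum,
    neg_mul, neg_mul]
  ring

theorem aux_pairs_sum {N : ℕ} (g : Fin N → Fin N → ℝ) (hg : ∀ i j, g i j = g j i) :
    (∑ a ∈ Finset.univ.filter (fun a : Fin N × Fin N => a.1 < a.2), g a.1 a.2) +
    (∑ a ∈ Finset.univ.filter (fun a : Fin N × Fin N => a.1 < a.2), g a.1 a.2) =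
    ∑ i, ∑ j ∈ Finset.univ.erase i, g i j :=
  aux_pairs (M := Multiplicative ℝ) g hg

theorem aux_count {N : ℕ} (S : Finset (Fin N)) :
    2 * ∑ a ∈ Finset.univ.filter (fun a : Fin N × Fin N => a.1 < a.2),
      (((if a.1 ∈ S ∧ a.2 ∈ S then 1 else 0 : ℕ)) : ℝ) = S.card * ((S.card : ℝ) - 1) := by
  rw [two_mul, aux_pairs_sum (fun i j : Fin N => (((if i ∈ S ∧ j ∈ S then 1 else 0 : ℕ)) : ℝ))]
  · have : ∀ i : Fin N, ∑ j ∈ Finset.univ.erase i, (((if i ∈ S ∧ j ∈ S then 1 else 0 : ℕ)) : ℝ) =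
        if i ∈ S then ((S.card : ℝ) - 1) else 0 := by
      intro i
      by_cases h : i ∈ S
      · simp only [h, true_and, if_true]
        push_cast
        rw [← Finset.sum_filter, Finset.sum_const, nsmul_eq_mul, mul_one]
        have : (Finset.univ.erase i).filter (fun j => j ∈ S) = S.erase i := by
          ext j; simp
        rw [this, Finset.card_erase_of_mem h, Nat.cast_sub (Finset.card_pos.2 ⟨i, h⟩)]
        simp
      · simp [h]
    rw [Finset.sum_congr rfl fun i _ => this i, ← Finset.sum_filter, Finset.sum_const,
      nsmul_eq_mul]
    congr 2
    congr 1
    ext; simp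
  · intro i j; simp only [and_comm]

theorem aux_generic (q₀ q₁ : ℂ) : ∃ c : ℂ, c ≠ q₀ ∧ c ≠ q₁ := by
  obtain ⟨c, hc⟩ := Infinite.exists_notMem_finset ({q₀, q₁} : Finset ℂ)
  simp only [Finset.mem_insert, Finset.mem_singleton, not_or] at hc
  exact ⟨c, hc⟩

theorem aux_nec1 {N : ℕ} (w a : ℝ) (q₀ q₁ : ℂ) (hw : 0 < w) (ha : 0 < a)
    (hN : 4 ≤ N) (hA : 4 ≤ a * N) (c : ℂ) (s : Set (Fin N → ℂ)) (hs : s ∈ 𝓝 (fun _ => c)) :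
    ∫⁻ z in s, auxF w a q₀ q₁ z = ∞ := by
  let o : Fin N := ⟨0, by omega⟩
  have hcardS : ((Finset.univ.erase o).card : ℝ) = N - 1 := by
    rw [Finset.card_erase_of_mem (Finset.mem_univ _), Finset.card_univ, Fintype.card_fin,
      Nat.cast_sub (by omega)]
    simp
  have hN4 : (4 : ℝ) ≤ N := by exact_mod_cast hN
  have cnt := aux_count (Finset.univ : Finset (Fin N))
  rw [Finset.card_univ, Fintype.card_fin] at cnt
  simp only [Finset.mem_univ, and_self, if_true] at cnt
  set D : ℝ := 2 + (2 + ‖c - q₀‖) * (2 + ‖c - q₁‖) with hD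
  have hD0 : 0 < D := by positivity
  refine aux_div _ (fun _ => o) (fun _ => rfl) (fun _ => c) (Finset.univ.erase o) ?_ s hs
    (a * (∑ a ∈ Finset.univ.filter (fun a : Fin N × Fin N => a.1 < a.2), ((1 : ℕ) : ℝ)) +
        2 * w * ∑ i : Fin N, ((0 : ℕ) : ℝ)) ?_
    ⟨ENNReal.ofReal ((∏ _a ∈ Finset.univ.filter (fun a : Fin N × Fin N => a.1 < a.2), D ^ (-a)) *
      ∏ _i : Fin N, D ^ (-(2 * w))), ?_, ?_⟩
  · rw [← Finset.card_pos]
    have : (0 : ℝ) < ((Finset.univ.erase o).card : ℝ) := by rw [hcardS]; linarith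
    exact_mod_cast this
  · rw [hcardS]
    simp only [Nat.cast_zero, Finset.sum_const_zero, mul_zero, add_zero]
    nlinarith
  · rw [Ne, ENNReal.ofReal_eq_zero, not_le]
    exact mul_pos (Finset.prod_pos fun _ _ => by positivity)
      (Finset.prod_pos fun _ _ => by positivity)
  · intro r hr0 hr1 ε hε hεr z hz
    have ho : ‖z o - c‖ < 1 := by
      have := hz o
      rw [auxShear_apply, if_pos rfl, if_neg (by simp)] at this
      exact lt_trans this hr1
    have hi : ∀ i, ‖z i - z o‖ ≤ ε := by
      intro i
      by_cases h : i = o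
      · rw [h, sub_self, norm_zero]; exact hε.le
      · have := hz i
        rw [auxShear_apply, if_neg (fun e => h e.symm), if_pos (by simp [h])] at this
        simp only [Pi.sub_apply, sub_sub_sub_cancel_right] at this
        exact this.le
    have hq : ∀ i q, ‖z i - q‖ ≤ 2 + ‖c - q‖ := by
      intro i q
      have : z i - q = (z i - z o) + (z o - c) + (c - q) := by ring
      rw [this]
      refine norm_add₃_le.trans ?_
      linarith [hi i]
    refine aux_lower w a q₀ q₁ hw ha D ε hD0 hε (fun _ _ => 1) (fun _ => 0) z ?_ ?_
    · intro i j
      have : z i - z j = (z i - z o) - (z j - z o) := by ring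
      rw [this, pow_one]
      refine (norm_sub_le _ _).trans ?_
      have : 2 * ε ≤ D * ε := by
        gcongr
        rw [hD]
        have : 0 ≤ (2 + ‖c - q₀‖) * (2 + ‖c - q₁‖) := by positivity
        linarith
      linarith [hi i, hi j]
    · intro i
      rw [pow_zero, mul_one]
      have := mul_le_mul (hq i q₀) (hq i q₁) (norm_nonneg _) (by positivity)
      linarith

theorem aux_nec2 {N : ℕ} (w a : ℝ) (q₀ q₁ : ℂ) (hw : 0 < w) (ha : 0 < a)
    (S : Finset (Fin N)) (hS : S.Nonempty) (hA : 2 ≤ 2 * w + a * ((S.card : ℝ) - 1) / 2) (c : ℂ)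
    (s : Set (Fin N → ℂ)) (hs : s ∈ 𝓝 (fun i => if i ∈ S then q₀ else c)) :
    ∫⁻ z in s, auxF w a q₀ q₁ z = ∞ := by
  have cnt := aux_count S
  set D : ℝ := 2 + ‖q₀ - c‖ + (1 + ‖q₀ - q₁‖) + (1 + ‖c - q₀‖) * (1 + ‖c - q₁‖) with hD
  have hD0 : 0 < D := by positivity
  refine aux_div _ id (fun _ => rfl) _ S hS s hs
    (a * (∑ a ∈ Finset.univ.filter (fun a : Fin N × Fin N => a.1 < a.2),
      (((if a.1 ∈ S ∧ a.2 ∈ S then 1 else 0 : ℕ)) : ℝ)) +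
        2 * w * ∑ i : Fin N, ((if i ∈ S then 1 else 0 : ℕ) : ℝ)) ?_
    ⟨ENNReal.ofReal ((∏ _a ∈ Finset.univ.filter (fun a : Fin N × Fin N => a.1 < a.2), D ^ (-a)) *
      ∏ _i : Fin N, D ^ (-(2 * w))), ?_, ?_⟩
  · have e1 : ∑ i : Fin N, ((if i ∈ S then 1 else 0 : ℕ) : ℝ) = S.card := by
      push_cast
      rw [← Finset.sum_filter, Finset.sum_const, nsmul_eq_mul, mul_one]
      congr 2
      ext; simp
    rw [e1]
    have hc : (0 : ℝ) < S.card := by exact_mod_cast Finset.card_pos.2 hS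
    have := mul_le_mul_of_nonneg_left hA hc.le
    linear_combination this - a / 2 * cnt
  · rw [Ne, ENNReal.ofReal_eq_zero, not_le]
    exact mul_pos (Finset.prod_pos fun _ _ => by positivity)
      (Finset.prod_pos fun _ _ => by positivity)
  · intro r hr0 hr1 ε hε hεr z hz
    have hin : ∀ i ∈ S, ‖z i - q₀‖ ≤ ε := by
      intro i hi
      have := hz i
      rw [auxShear_apply, if_pos (id_eq i), if_pos hi, Pi.sub_apply, if_pos hi] at this
      exact this.le
    have hout : ∀ i, i ∉ S → ‖z i - c‖ ≤ 1 := by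
      intro i hi
      have := hz i
      rw [auxShear_apply, if_pos (id_eq i), if_neg hi, Pi.sub_apply, if_neg hi] at this
      linarith
    have tri : ∀ x y u : ℂ, ‖x - u‖ ≤ ‖x - y‖ + ‖y - u‖ := fun x y u => norm_sub_le_norm_sub_add_norm_sub x y u
    have n1 := norm_nonneg (q₀ - c)
    have n2 := norm_nonneg (q₀ - q₁)
    have n3 : 0 ≤ (1 + ‖c - q₀‖) * (1 + ‖c - q₁‖) := by positivity
    refine aux_lower w a q₀ q₁ hw ha D ε hD0 hε (fun i j => if i ∈ S ∧ j ∈ S then 1 else 0)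
      (fun i => if i ∈ S then 1 else 0) z ?_ ?_
    · intro i j
      have t0 := tri (z i) q₀ (z j)
      rw [norm_sub_rev q₀ (z j)] at t0
      by_cases h1 : i ∈ S
      · have g1 := hin i h1
        by_cases h2 : j ∈ S
        · have g2 := hin j h2
          simp only [h1, h2, and_self, if_true, pow_one]
          have : 2 * ε ≤ D * ε := by
            gcongr
            linarith
          linarith
        · have g2 := hout j h2
          simp only [h1, h2, and_false, if_false, pow_zero, mul_one]
          have := tri (z j) c q₀
          rw [norm_sub_rev c q₀] at this
          linarith
      · have g1 := hout i h1
        simp only [h1, false_and, if_false, pow_zero, mul_one]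
        by_cases h2 : j ∈ S
        · have g2 := hin j h2
          have := tri (z i) c q₀
          rw [norm_sub_rev c q₀] at this
          linarith
        · have g2 := hout j h2
          have := tri (z i) c (z j)
          rw [norm_sub_rev c (z j)] at this
          linarith
    · intro i
      by_cases h1 : i ∈ S
      · have g1 := hin i h1
        simp only [h1, if_true, pow_one]
        have t1 := tri (z i) q₀ q₁
        have : ‖z i - q₀‖ * ‖z i - q₁‖ ≤ ε * D :=
          mul_le_mul g1 (by linarith) (norm_nonneg _) hε.le
        linarith
      · have g1 := hout i h1
        simp only [h1, if_false, pow_zero, mul_one]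
        have t1 := tri (z i) c q₁
        have t0 := tri (z i) c q₀
        have := mul_le_mul (show ‖z i - q₀‖ ≤ 1 + ‖c - q₀‖ by linarith)
          (show ‖z i - q₁‖ ≤ 1 + ‖c - q₁‖ by linarith) (norm_nonneg _) (by positivity)
        linarith

theorem reduced_microscopic_threshold_log_fano_curve (w : ℝ) (hw : w ∈ Set.Ioo (0 : ℝ) 1)
    (N : ℕ) (hN : 4 ≤ N) (q₀ q₁ : ℂ) (hq : q₀ ≠ q₁) (γ : ℝ) (hγ : 0 < γ) :
    (∀ p : Fin N → ℂ,
        (Finset.univ.filter fun i => p i = q₀).card ≤ N / 2 →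
        (Finset.univ.filter fun i => p i = q₁).card ≤ N / 2 →
        ∃ s ∈ 𝓝 p,
          (∫⁻ z in s,
            (∏ a ∈ Finset.univ.filter (fun a : Fin N × Fin N => a.1 < a.2),
              (ENNReal.ofReal ‖z a.1 - z a.2‖) ^
                (-(2 * γ / (((N : ℝ) - 1) / (2 - 2 * w))))) *
            ∏ i, (ENNReal.ofReal (‖z i - q₀‖ * ‖z i - q₁‖)) ^ (-(2 * w)) ∂volume) ≠ ∞) ↔
      γ < min (2 * (1 - 1 / (N : ℝ)) / (2 - 2 * w))
          (((N : ℝ) - 1) / (((N / 2 : ℕ) : ℝ) - 1)) := by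
  obtain ⟨hw0, hw1⟩ := hw
  have hN4 : (4 : ℝ) ≤ N := by exact_mod_cast hN
  have hM2 : (2 : ℝ) ≤ ((N / 2 : ℕ) : ℝ) := by
    have : 2 ≤ N / 2 := by omega
    exact_mod_cast this
  set a : ℝ := 2 * γ / (((N : ℝ) - 1) / (2 - 2 * w)) with ha
  set m : ℝ := ((N / 2 : ℕ) : ℝ) with hm
  have hV : 0 < 2 - 2 * w := by linarith
  have hN1 : 0 < (N : ℝ) - 1 := by linarith
  have hm1 : 0 < m - 1 := by linarith
  have ha' : a * ((N : ℝ) - 1) = 2 * γ * (2 - 2 * w) := by rw [ha]; field_simp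
  have ha0 : 0 < a := by positivity
  have c1 : γ < 2 * (1 - 1 / (N : ℝ)) / (2 - 2 * w) ↔ a * N < 4 := by
    have : 2 * (1 - 1 / (N : ℝ)) = 2 * ((N : ℝ) - 1) / N := by field_simp
    rw [this, lt_div_iff₀ hV, lt_div_iff₀ (by linarith)]
    constructor
    · intro h
      by_contra hc
      push Not at hc
      nlinarith
    · intro h
      nlinarith
  have c2 : γ < ((N : ℝ) - 1) / (m - 1) ↔ 2 * w + a * (m - 1) / 2 < 2 := by
    rw [lt_div_iff₀ hm1]
    have e : a * (m - 1) / 2 * ((N : ℝ) - 1) = γ * (m - 1) * (2 - 2 * w) := by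
      linear_combination (m - 1) / 2 * ha'
    constructor
    · intro h
      have : a * (m - 1) / 2 * ((N : ℝ) - 1) < (2 - 2 * w) * ((N : ℝ) - 1) := by
        rw [e, mul_comm (2 - 2 * w)]
        exact mul_lt_mul_of_pos_right h hV
      have := lt_of_mul_lt_mul_right this hN1.le
      linarith
    · intro h
      have : γ * (m - 1) * (2 - 2 * w) < ((N : ℝ) - 1) * (2 - 2 * w) := by
        rw [← e, mul_comm ((N : ℝ) - 1)]
        exact mul_lt_mul_of_pos_right (by linarith) hN1
      exact lt_of_mul_lt_mul_right this hV.le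
  rw [lt_min_iff, c1, c2]
  obtain ⟨c, hc0, hc1⟩ := aux_generic q₀ q₁
  constructor
  · intro H
    constructor
    · by_contra hcon
      push Not at hcon
      obtain ⟨s, hs, hfin⟩ := H (fun _ => c) (by simp [hc0]) (by simp [hc1])
      exact hfin (aux_nec1 w a q₀ q₁ hw0 ha0 hN hcon c s hs)
    · by_contra hcon
      push Not at hcon
      obtain ⟨S, -, hS⟩ := Finset.exists_subset_card_eq
        (s := (Finset.univ : Finset (Fin N))) (n := N / 2)
        (by rw [Finset.card_univ, Fintype.card_fin]; omega)
      have hSne : S.Nonempty := by rw [← Finset.card_pos]; omega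
      obtain ⟨s, hs, hfin⟩ := H (fun i => if i ∈ S then q₀ else c)
        (by
          rw [← hS]
          apply Finset.card_le_card
          intro i hi
          by_contra h
          simp [h, hc0] at hi)
        (by
          rw [Finset.card_eq_zero.2]
          · omega
          · apply Finset.filter_eq_empty_iff.2
            intro i _
            split_ifs
            · exact hq
            · exact hc1)
      exact hfin (aux_nec2 w a q₀ q₁ hw0 ha0 S hSne (by rw [hS]; exact hcon) c s hs)
  · rintro ⟨hA, hB⟩ p hp0 hp1
    exact aux_suff w a q₀ q₁ hw0 ha0 hq hN hA hB p hp0 hp1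
end

section
/- For every γ > 2, the infimum over all Borel probability measures μ on the unit sphere S² ⊂ ℝ³ with ∫_{S²} x dμ(x) = 0 of the quantity D(μ‖σ) − 2γ ∬_{S²×S²} log(1/|x−y|) dμ(x) dμ(y) equals −∞; that is, for every C ∈ ℝ there exists such a μ (absolutely continuous with respect to σ) with 2γ ∬ log(1/|x−y|) dμ dμ > D(μ‖σ) + C. Together with the bound for γ < 2, this shows the reduced analytic stability threshold δ^A(ℙ¹,0)^𝒢 equals exactly 2. -/
open MeasureTheory
open scoped ENNReal Classical

/-- Euclidean three-space, containing the unit two-sphere. -/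
abbrev E3 : Type := EuclideanSpace ℝ (Fin 3)

/-- The relative entropy (Kullback–Leibler divergence) `D(μ‖ν)`, equal to
`∫ log(dμ/dν) dμ` when `μ ≪ ν` and this integral is defined, and `∞` otherwise. -/
noncomputable def relEnt {α : Type*} [MeasurableSpace α] (μ ν : Measure α) : ℝ≥0∞ :=
  if μ ≪ ν ∧ Integrable (fun x => Real.log (μ.rnDeriv ν x).toReal) μ then
    ENNReal.ofReal (∫ x, Real.log (μ.rnDeriv ν x).toReal ∂μ)
  else ∞


lemma exists_isom {x y : E3} (h : ‖x‖ = ‖y‖) : ∃ R : E3 ≃ₗᵢ[ℝ] E3, R x = y :=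
  ⟨_, Submodule.reflection_sub h⟩

lemma ball_inv {σ : Measure E3} (hσinv : ∀ R : E3 ≃ₗᵢ[ℝ] E3, σ.map R = σ)
    {x y : E3} (h : ‖x‖ = ‖y‖) (r : ℝ) : σ (Metric.ball x r) = σ (Metric.ball y r) := by
  obtain ⟨R, hR⟩ := exists_isom h
  conv_rhs => rw [← hσinv R]
  rw [Measure.map_apply R.continuous.measurable Metric.isOpen_ball.measurableSet, ← hR]
  congr 1
  ext z
  simp [Metric.mem_ball]

/-- lower bound for caps -/
lemma cap_lower {σ : Measure E3} (hσ1 : IsProbabilityMeasure σ)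
    (hσs : σ (Metric.sphere (0 : E3) 1) = 1)
    (hσinv : ∀ R : E3 ≃ₗᵢ[ℝ] E3, σ.map R = σ) {N : E3} (hN : ‖N‖ = 1)
    {r : ℝ} (hr : 0 < r) (hr1 : r < 1) :
    r ^ 2 / 8 ≤ (σ (Metric.ball N (2 * r))).toReal := by
  set S : Set E3 := Metric.ball 0 (1 + r) \ Metric.ball 0 (1 - r) with hS
  have hSm : MeasurableSet S := Metric.isOpen_ball.measurableSet.diff Metric.isOpen_ball.measurableSet
  set m := σ (Metric.ball N (2 * r)) with hm
  have hae : ∀ᵐ y ∂σ, y ∈ Metric.sphere (0 : E3) 1 := by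
    rw [← prob_compl_eq_zero_iff Metric.isClosed_sphere.measurableSet] at hσs
    exact hσs
  have hK : MeasurableSet {p : E3 × E3 | dist p.1 p.2 < r} :=
    (isOpen_lt continuous_dist continuous_const).measurableSet
  set v := (volume (Metric.ball (0 : E3) 1)) with hv
  have hv0 : v ≠ 0 := (Metric.measure_ball_pos _ _ one_pos).ne'
  have hvt : v ≠ ∞ := measure_ball_lt_top.ne
  have hfin : Module.finrank ℝ E3 = 3 := by simp
  have hb : ∀ (x : E3) (s : ℝ), 0 ≤ s → volume (Metric.ball x s) = ENNReal.ofReal (s ^ 3) * v := by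
    intro x s hs
    rw [Measure.addHaar_ball _ _ hs, hfin]
  -- the double integral
  have h1 : ∫⁻ x in S, σ (Metric.ball x r) = ∫⁻ y, volume.restrict S (Metric.ball y r) ∂σ := by
    have e1 := Measure.prod_apply (μ := volume.restrict S) (ν := σ) hK
    have e2 := Measure.prod_apply_symm (μ := volume.restrict S) (ν := σ) hK
    rw [e1] at e2
    convert e2 using 3 with x x
    · congr 1; ext z; simp [dist_comm]
    · congr 1
  have h2 : ∫⁻ x in S, σ (Metric.ball x r) ≤ m * volume S := by
    rw [← setLIntegral_const]
    refine setLIntegral_mono' hSm fun x hx => ?_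
    simp only [hS, Set.mem_sdiff, Metric.mem_ball, dist_zero_right, not_lt] at hx
    have hx0 : 0 < ‖x‖ := by linarith
    have hn : ‖(‖x‖⁻¹ • x)‖ = 1 := by
      rw [norm_smul, norm_inv, norm_norm, inv_mul_cancel₀ hx0.ne']
    rw [hm, ball_inv hσinv (hN.trans hn.symm) (2 * r)]
    refine measure_mono (Metric.ball_subset_ball' ?_)
    have : dist x (‖x‖⁻¹ • x) = |‖x‖ - 1| := by
      rw [dist_eq_norm]
      have : x - ‖x‖⁻¹ • x = (1 - ‖x‖⁻¹) • x := by rw [sub_smul, one_smul]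
      have e : ‖x‖ - 1 = (1 - ‖x‖⁻¹) * ‖x‖ := by field_simp
      rw [this, norm_smul, Real.norm_eq_abs, e, abs_mul, abs_norm]
    have h3 : |‖x‖ - 1| ≤ r := abs_le.2 ⟨by linarith, by linarith⟩
    linarith
  have h3 : ∫⁻ y, volume.restrict S (Metric.ball y r) ∂σ = ENNReal.ofReal (r ^ 3) * v := by
    rw [← hb 0 r hr.le, lintegral_congr_ae (g := fun _ => volume (Metric.ball (0:E3) r))]
    · simp
    filter_upwards [hae] with y hy
    rw [Measure.restrict_apply Metric.isOpen_ball.measurableSet, Set.inter_eq_left.2,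
      hb _ _ hr.le, hb _ _ hr.le]
    intro z hz
    simp only [mem_sphere_zero_iff_norm, Metric.mem_ball, hS, Set.mem_sdiff, dist_zero_right,
      not_lt] at *
    rw [dist_eq_norm] at hz
    have a1 := norm_sub_norm_le z y
    have a2 := norm_sub_norm_le y z
    rw [norm_sub_rev] at a2
    constructor <;> linarith
  have h4 : volume S ≤ ENNReal.ofReal (8 * r) * v := by
    rw [hS, measure_sdiff (Metric.ball_subset_ball (by linarith))
      Metric.isOpen_ball.measurableSet.nullMeasurableSet measure_ball_lt_top.ne,
      hb _ _ (by linarith), hb _ _ (by linarith), ← ENNReal.sub_mul (fun _ _ => hvt),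
      ← ENNReal.ofReal_sub _ (by have : 0 < 1 - r := by linarith
                                 positivity)]
    gcongr
    nlinarith [sq_nonneg r, mul_pos hr hr, mul_pos hr (sub_pos.2 hr1)]
  have h5 : ENNReal.ofReal (r ^ 3) * v ≤ (m * ENNReal.ofReal (8 * r)) * v := by
    rw [← h3, ← h1, mul_assoc]
    exact h2.trans (by gcongr)
  have h6 := (ENNReal.mul_le_mul_iff_left hv0 hvt).1 h5
  have h7 := ENNReal.toReal_mono (ENNReal.mul_ne_top (measure_ne_top _ _) ENNReal.ofReal_ne_top) h6
  rw [ENNReal.toReal_mul, ENNReal.toReal_ofReal (by positivity),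
    ENNReal.toReal_ofReal (by positivity)] at h7
  have : r * (r ^ 2 / 8) ≤ r * m.toReal := by nlinarith
  exact le_of_mul_le_mul_left this hr

noncomputable def GG (d : ℝ) : ℝ≥0∞ :=
  if d = 0 then ∞ else ENNReal.ofReal (Real.log 2 - Real.log d)

lemma GG_meas : Measurable GG :=
  Measurable.ite (measurableSet_singleton 0) measurable_const
    (ENNReal.measurable_ofReal.comp (measurable_const.sub Real.measurable_log))

lemma GG_int : ∫⁻ u : ℝ, GG |u| ≠ ∞ := by
  have h1 : ∫⁻ u : ℝ, GG |u| = ∫⁻ u in Set.Ioc (-2 : ℝ) 2, ENNReal.ofReal (Real.log 2 - Real.log u) := by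
    rw [← lintegral_indicator measurableSet_Ioc]
    refine lintegral_congr_ae ?_
    have : ∀ᵐ u : ℝ, u ≠ 0 := by simp [ae_iff]
    filter_upwards [this] with u hu
    by_cases hm : u ∈ Set.Ioc (-2 : ℝ) 2
    · simp [Set.indicator_of_mem hm, GG, hu]
    · rw [Set.indicator_of_notMem hm]
      simp only [GG, abs_eq_zero, hu, if_false]
      refine ENNReal.ofReal_of_nonpos (sub_nonpos.2 (Real.log_le_log (by norm_num) ?_))
      rw [Set.mem_Ioc, not_and_or, not_lt, not_le] at hm
      rcases hm with h | h
      · rw [le_abs]; right; linarith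
      · rw [le_abs]; left; linarith
  rw [h1]
  have h2 : IntervalIntegrable (fun u => Real.log 2 - Real.log u) volume (-2) 2 :=
    intervalIntegrable_const.sub intervalIntegral.intervalIntegrable_log'
  exact (h2.1.lintegral_lt_top).ne

lemma GG_anti {a b : ℝ} (ha : 0 ≤ a) (hab : a ≤ b) : GG b ≤ GG a := by
  unfold GG
  by_cases h : a = 0
  · simp [h]
  · have : 0 < a := lt_of_le_of_ne ha (Ne.symm h)
    rw [if_neg h, if_neg (by linarith)]
    gcongr

noncomputable def pp (t : ℝ) : E3 := !₂[Real.sqrt (1 - t ^ 2), 0, t]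

lemma pp_meas : Measurable pp := by
  unfold pp
  fun_prop

lemma pp_norm {t : ℝ} (ht : t ∈ Set.Icc (-1 : ℝ) 1) : ‖pp t‖ = 1 := by
  have : 0 ≤ 1 - t ^ 2 := by nlinarith [ht.1, ht.2]
  rw [EuclideanSpace.norm_eq]
  simp [pp, Fin.sum_univ_three, Real.sq_sqrt this]

lemma pot_inv {σ : Measure E3} (hσinv : ∀ R : E3 ≃ₗᵢ[ℝ] E3, σ.map R = σ)
    {x y : E3} (h : ‖x‖ = ‖y‖) : ∫⁻ z, GG (dist x z) ∂σ = ∫⁻ z, GG (dist y z) ∂σ := by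
  obtain ⟨R, hR⟩ := exists_isom h
  conv_rhs => rw [← hσinv R]
  have hm : Measurable fun z => GG (dist y z) := GG_meas.comp (by fun_prop)
  rw [lintegral_map hm R.continuous.measurable, ← hR]
  simp [R.dist_map]

lemma energy_fin {σ : Measure E3} (hσ1 : IsProbabilityMeasure σ)
    (hσs : σ (Metric.sphere (0 : E3) 1) = 1)
    (hσinv : ∀ R : E3 ≃ₗᵢ[ℝ] E3, σ.map R = σ) :
    ∫⁻ p : E3 × E3, GG (dist p.1 p.2) ∂(σ.prod σ) ≠ ∞ := by
  have hae : ∀ᵐ y ∂σ, y ∈ Metric.sphere (0 : E3) 1 := by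
    rw [← prob_compl_eq_zero_iff Metric.isClosed_sphere.measurableSet] at hσs
    exact hσs
  have h0 : ‖pp 0‖ = 1 := pp_norm (by norm_num)
  set c := ∫⁻ z, GG (dist (pp 0) z) ∂σ with hc
  have e1 : ∫⁻ p : E3 × E3, GG (dist p.1 p.2) ∂(σ.prod σ) = c := by
    have hm : Measurable fun p : E3 × E3 => GG (dist p.1 p.2) := GG_meas.comp (by fun_prop)
    rw [lintegral_prod _ hm.aemeasurable,
      lintegral_congr_ae (g := fun _ => c)]
    · simp
    filter_upwards [hae] with x hx
    exact pot_inv hσinv ((mem_sphere_zero_iff_norm.1 hx).trans h0.symm)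
  rw [e1]
  have e2 : ∫⁻ t in Set.Icc (-1 : ℝ) 1, ∫⁻ z, GG (dist (pp t) z) ∂σ = c * 2 := by
    rw [setLIntegral_congr_fun (g := fun _ => c) measurableSet_Icc]
    · rw [setLIntegral_const, Real.volume_Icc]; norm_num
    intro t ht
    exact pot_inv hσinv ((pp_norm ht).trans h0.symm)
  have e3 : ∫⁻ t in Set.Icc (-1 : ℝ) 1, ∫⁻ z, GG (dist (pp t) z) ∂σ ≤ ∫⁻ u : ℝ, GG |u| := by
    rw [lintegral_lintegral_swap]
    · calc _ ≤ ∫⁻ z, (∫⁻ u : ℝ, GG |u|) ∂σ := by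
            refine lintegral_mono fun z => ?_
            calc _ ≤ ∫⁻ t in Set.Icc (-1 : ℝ) 1, GG |t - z 2| := by
                  refine lintegral_mono fun t => GG_anti (abs_nonneg _) ?_
                  rw [dist_eq_norm]
                  have := EuclideanSpace.norm_eq (pp t - z)
                  have h := PiLp.norm_apply_le (pp t - z) 2
                  simpa [pp] using h
              _ ≤ ∫⁻ t, GG |t - z 2| := setLIntegral_le_lintegral _ _
              _ = _ := lintegral_sub_right_eq_self (fun u => GG |u|) (z 2)
        _ = _ := by simp
    · refine (GG_meas.comp ?_).aemeasurable
      have := pp_meas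
      fun_prop
  intro hct
  rw [e2, hct] at e3
  simp at e3
  exact GG_int e3

lemma relEnt_restrict {σ : Measure E3} (hσ1 : IsProbabilityMeasure σ) {A : Set E3}
    (hA : MeasurableSet A) (h0 : σ A ≠ 0) :
    relEnt ((σ A)⁻¹ • σ.restrict A) σ = ENNReal.ofReal (- Real.log (σ A).toReal) := by
  have hi : (σ A)⁻¹ ≠ ∞ := ENNReal.inv_ne_top.2 h0
  have hac : (σ A)⁻¹ • σ.restrict A ≪ σ :=
    (Measure.smul_absolutelyContinuous).trans Measure.restrict_le_self.absolutelyContinuous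
  have hp : IsProbabilityMeasure ((σ A)⁻¹ • σ.restrict A) := by
    constructor
    simp [ENNReal.inv_mul_cancel h0 (measure_ne_top _ _)]
  have h1 : ∀ᵐ x ∂((σ A)⁻¹ • σ.restrict A),
      Real.log ((((σ A)⁻¹ • σ.restrict A).rnDeriv σ x).toReal) = - Real.log (σ A).toReal := by
    have e1 := hac.ae_le (Measure.rnDeriv_smul_left_of_ne_top' (σ.restrict A) σ hi)
    have e2 := hac.ae_le (Measure.rnDeriv_restrict_self σ hA)
    have e3 : ∀ᵐ x ∂((σ A)⁻¹ • σ.restrict A), x ∈ A :=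
      Measure.smul_absolutelyContinuous.ae_le (ae_restrict_mem hA)
    filter_upwards [e1, e2, e3] with x e1 e2 e3
    rw [e1, Pi.smul_apply, e2, Set.indicator_of_mem e3]
    simp [Real.log_inv]
  unfold relEnt
  have hint : Integrable (fun x => Real.log ((((σ A)⁻¹ • σ.restrict A).rnDeriv σ x).toReal))
      ((σ A)⁻¹ • σ.restrict A) := (integrable_congr h1).2 (integrable_const _)
  rw [if_pos ⟨hac, hint⟩, integral_congr_ae h1]
  simp

lemma energy_lower {μ : Measure E3} [IsProbabilityMeasure μ] {N M : E3} {ρ : ℝ} (hρ : 0 < ρ)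
    (hd : Disjoint (Metric.ball N ρ) (Metric.ball M ρ))
    (h1 : μ (Metric.ball N ρ) = 2⁻¹) (h2 : μ (Metric.ball M ρ) = 2⁻¹) :
    ENNReal.ofReal (- Real.log ρ) * 2⁻¹ ≤
      ∫⁻ p : E3 × E3, GG (dist p.1 p.2) ∂(μ.prod μ) := by
  have key : ∀ (P x y : E3), x ∈ Metric.ball P ρ → y ∈ Metric.ball P ρ →
      ENNReal.ofReal (- Real.log ρ) ≤ GG (dist x y) := by
    intro P x y hx hy
    have hxy : dist x y ≤ 2 * ρ := by
      have := dist_triangle_right x y P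
      rw [Metric.mem_ball] at hx hy
      linarith
    refine le_trans ?_ (GG_anti dist_nonneg hxy)
    rw [GG, if_neg (by positivity), Real.log_mul (by norm_num) hρ.ne']
    gcongr
    linarith
  set T1 := Metric.ball N ρ ×ˢ Metric.ball N ρ
  set T2 := Metric.ball M ρ ×ˢ Metric.ball M ρ
  have hT1 : MeasurableSet T1 :=
    Metric.isOpen_ball.measurableSet.prod Metric.isOpen_ball.measurableSet
  have hT2 : MeasurableSet T2 :=
    Metric.isOpen_ball.measurableSet.prod Metric.isOpen_ball.measurableSet
  have hdis : Disjoint T1 T2 := Set.disjoint_prod.2 (Or.inl hd)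
  calc ENNReal.ofReal (- Real.log ρ) * 2⁻¹
      = ENNReal.ofReal (- Real.log ρ) * (μ.prod μ) (T1 ∪ T2) := by
        rw [measure_union hdis hT2, Measure.prod_prod, Measure.prod_prod, h1, h2,
          ← mul_add, ENNReal.inv_two_add_inv_two, mul_one]
    _ = ∫⁻ p in T1 ∪ T2, ENNReal.ofReal (- Real.log ρ) ∂(μ.prod μ) := by
        rw [setLIntegral_const]
    _ ≤ ∫⁻ p in T1 ∪ T2, GG (dist p.1 p.2) ∂(μ.prod μ) := by
        refine setLIntegral_mono' (hT1.union hT2) fun p hp => ?_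
        rcases hp with hp | hp
        · exact key N _ _ hp.1 hp.2
        · exact key M _ _ hp.1 hp.2
    _ ≤ _ := setLIntegral_le_lintegral _ _

/-- **Failure of the logarithmic HLS inequality beyond the threshold 2.** Let `σ` be the
rotation-invariant Borel probability measure on the unit sphere `S² ⊂ ℝ³` and let `γ > 2`.
For every `C ∈ ℝ` there is a Borel probability measure `μ` on `S²`, absolutely continuous
with respect to `σ`, with vanishing barycenter and with finite entropy and finite energy,
such that `2γ ∬ log(1/|x-y|) dμ dμ > D(μ‖σ) + C`; i.e. the infimum over such `μ` of
`D(μ‖σ) - 2γ ∬ log(1/|x-y|) dμ dμ` is `-∞`. (Here `∬ log(1/|x-y|) dμ dμ` is expressed as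
`(∫⁻ (log 2 - log |x-y|) dμ dμ).toReal - log 2`.) -/
theorem log_HLS_fails_beyond_two
    (σ : Measure E3) (hσ1 : IsProbabilityMeasure σ)
    (hσs : σ (Metric.sphere (0 : E3) 1) = 1)
    (hσinv : ∀ R : E3 ≃ₗᵢ[ℝ] E3, σ.map R = σ)
    (γ : ℝ) (hγ : 2 < γ) :
    ∀ C : ℝ, ∃ μ : Measure E3, IsProbabilityMeasure μ ∧
      μ (Metric.sphere (0 : E3) 1) = 1 ∧ (∫ x, x ∂μ) = 0 ∧ μ ≪ σ ∧
      relEnt μ σ ≠ ∞ ∧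
      (∫⁻ p : E3 × E3,
          ENNReal.ofReal (Real.log 2 - Real.log (dist p.1 p.2)) ∂(μ.prod μ)) ≠ ∞ ∧
      (relEnt μ σ).toReal + C <
        2 * γ *
          ((∫⁻ p : E3 × E3,
              ENNReal.ofReal (Real.log 2 - Real.log (dist p.1 p.2)) ∂(μ.prod μ)).toReal -
            Real.log 2) := by
  intro C
  set L : ℝ := max 1 ((C + Real.log 16 + 2 * γ * Real.log 2) / (γ - 2) + 1) with hL
  have hL1 : 1 ≤ L := le_max_left _ _
  have hL2 : C + Real.log 16 + 2 * γ * Real.log 2 < (γ - 2) * L := by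
    have h : (C + Real.log 16 + 2 * γ * Real.log 2) / (γ - 2) < L :=
      lt_of_lt_of_le (lt_add_one _) (le_max_right _ _)
    rw [div_lt_iff₀ (by linarith)] at h
    linarith
  set ρ := Real.exp (-L) with hρd
  have hρ : 0 < ρ := Real.exp_pos _
  have hρ1 : ρ < 1 := by
    rw [hρd, ← Real.exp_zero]; exact Real.exp_lt_exp.2 (by linarith)
  have hlog : Real.log ρ = -L := Real.log_exp _
  have hN : ‖pp 0‖ = 1 := pp_norm (by norm_num)
  set N := pp 0
  have hcap := cap_lower hσ1 hσs hσinv hN (r := ρ / 2) (by positivity) (by linarith)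
  rw [mul_div_cancel₀ _ (two_ne_zero)] at hcap
  have hBB : σ (Metric.ball (-N) ρ) = σ (Metric.ball N ρ) := ball_inv hσinv (norm_neg _) _
  set m := σ (Metric.ball N ρ) with hm
  have hd : Disjoint (Metric.ball N ρ) (Metric.ball (-N) ρ) := by
    refine Metric.ball_disjoint_ball ?_
    rw [dist_eq_norm, sub_neg_eq_add, ← two_smul ℝ N, norm_smul, hN]
    norm_num; linarith
  set A := Metric.ball N ρ ∪ Metric.ball (-N) ρ with hA
  have hAm : MeasurableSet A :=
    Metric.isOpen_ball.measurableSet.union Metric.isOpen_ball.measurableSet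
  have hσA : σ A = 2 * m := by
    rw [hA, measure_union hd Metric.isOpen_ball.measurableSet, hBB, two_mul]
  have hmr : 0 < m.toReal := lt_of_lt_of_le (by positivity) hcap
  have hm0 : m ≠ 0 := fun h => by simp [h] at hmr
  have hmt : m ≠ ∞ := measure_ne_top _ _
  have hA0 : σ A ≠ 0 := by rw [hσA]; simp [hm0]
  have hAt : σ A ≠ ∞ := measure_ne_top _ _
  set μ : Measure E3 := (σ A)⁻¹ • σ.restrict A with hμ
  have hac : μ ≪ σ :=
    (Measure.smul_absolutelyContinuous).trans Measure.restrict_le_self.absolutelyContinuous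
  have hp : IsProbabilityMeasure μ := by
    constructor
    simp [hμ, ENNReal.inv_mul_cancel hA0 hAt]
  have hent := relEnt_restrict hσ1 hAm hA0
  rw [← hμ] at hent
  have hhalf : ∀ B : Set E3, MeasurableSet B → B ⊆ A → σ B = m → μ B = 2⁻¹ := by
    intro B hB hBA hBm
    rw [hμ, Measure.smul_apply, Measure.restrict_apply hB, Set.inter_eq_left.2 hBA, hBm, hσA,
      smul_eq_mul, ENNReal.mul_inv (by simp) (by simp), mul_assoc,
      ENNReal.inv_mul_cancel hm0 hmt, mul_one]
  have hlow := energy_lower (μ := μ) hρ hd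
    (hhalf _ Metric.isOpen_ball.measurableSet Set.subset_union_left rfl)
    (hhalf _ Metric.isOpen_ball.measurableSet Set.subset_union_right hBB)
  have hfinG : ∫⁻ p : E3 × E3, GG (dist p.1 p.2) ∂(μ.prod μ) ≠ ∞ := by
    have hfin := energy_fin hσ1 hσs hσinv
    have hle : ∫⁻ p : E3 × E3, GG (dist p.1 p.2) ∂(μ.prod μ) ≤
        (σ A)⁻¹ * ((σ A)⁻¹ * ∫⁻ p : E3 × E3, GG (dist p.1 p.2) ∂(σ.prod σ)) := by
      rw [hμ, Measure.prod_smul_left, Measure.prod_smul_right, lintegral_smul_measure,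
        lintegral_smul_measure, smul_eq_mul, smul_eq_mul, Measure.prod_restrict]
      gcongr
      exact Measure.restrict_le_self
    refine ne_top_of_le_ne_top ?_ hle
    exact ENNReal.mul_ne_top (ENNReal.inv_ne_top.2 hA0)
      (ENNReal.mul_ne_top (ENNReal.inv_ne_top.2 hA0) hfin)
  have hmG : Measurable fun p : E3 × E3 => GG (dist p.1 p.2) := GG_meas.comp (by fun_prop)
  have hEq : (∫⁻ p : E3 × E3,
          ENNReal.ofReal (Real.log 2 - Real.log (dist p.1 p.2)) ∂(μ.prod μ)) =
      ∫⁻ p : E3 × E3, GG (dist p.1 p.2) ∂(μ.prod μ) := by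
    refine lintegral_congr_ae ?_
    filter_upwards [ae_lt_top hmG hfinG] with p hpt
    by_cases h : dist p.1 p.2 = 0
    · rw [GG, if_pos h] at hpt
      exact absurd hpt (lt_irrefl _)
    · rw [GG, if_neg h]
  refine ⟨μ, hp, ?_, ?_, hac, ?_, ?_, ?_⟩
  · rw [← prob_compl_eq_zero_iff Metric.isClosed_sphere.measurableSet] at hσs ⊢
    exact hac hσs
  · have hneg : MeasurePreserving (LinearIsometryEquiv.neg ℝ : E3 ≃ₗᵢ[ℝ] E3) σ σ :=
      ⟨(LinearIsometryEquiv.neg ℝ : E3 ≃ₗᵢ[ℝ] E3).continuous.measurable, hσinv _⟩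
    have hr := hneg.restrict_preimage hAm
    have hpre : (LinearIsometryEquiv.neg ℝ : E3 ≃ₗᵢ[ℝ] E3) ⁻¹' A = A := by
      ext z
      have e1 : dist (-z) N = dist z (-N) := by rw [← dist_neg_neg, neg_neg]
      have e2 : dist (-z) (-N) = dist z N := dist_neg_neg _ _
      simp only [hA, Set.mem_preimage, Set.mem_union, Metric.mem_ball,
        LinearIsometryEquiv.coe_neg, e1, e2]
      exact or_comm
    rw [hpre] at hr
    have hi : ∫ x, x ∂(σ.restrict A) = - ∫ x, x ∂(σ.restrict A) := by
      conv_lhs => rw [← hr.map_eq]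
      rw [integral_map hr.measurable.aemeasurable (by fun_prop)]
      exact integral_neg _
    have hz : ∫ x, x ∂(σ.restrict A) = 0 := by
      have h2 : (2 : ℝ) • ∫ x, x ∂(σ.restrict A) = 0 := by
        rw [two_smul]; nth_rewrite 1 [hi]; exact neg_add_cancel _
      exact (smul_eq_zero.1 h2).resolve_left two_ne_zero
    rw [hμ, integral_smul_measure, hz, smul_zero]
  · rw [hent]; exact ENNReal.ofReal_ne_top
  · rw [hEq]; exact hfinG
  · rw [hEq, hent]
    have hlow' := ENNReal.toReal_mono hfinG hlow
    rw [ENNReal.toReal_mul, hlog, neg_neg, ENNReal.toReal_ofReal (by linarith)] at hlow'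
    simp only [ENNReal.toReal_inv, ENNReal.toReal_ofNat] at hlow'
    have hAr : (σ A).toReal = 2 * m.toReal := by rw [hσA]; simp
    have hle1 : (σ A).toReal ≤ 1 := by
      have := ENNReal.toReal_mono ENNReal.one_ne_top (prob_le_one (μ := σ) (s := A))
      simpa using this
    rw [ENNReal.toReal_ofReal (neg_nonneg.2 (Real.log_nonpos ENNReal.toReal_nonneg hle1))]
    have hlb : Real.log (ρ ^ 2 / 16) ≤ Real.log (σ A).toReal := by
      refine Real.log_le_log (by positivity) ?_
      rw [hAr]
      linarith
    rw [Real.log_div (by positivity) (by norm_num), Real.log_pow, hlog] at hlb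
    push_cast at hlb
    nlinarith
end
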